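/- arXiv:2510.09929 — 8 statements merged into one kernel-verified Lean document; each statement's English description precedes it below -/
import Mathlib

section
/- Let α be a locally Lipschitz class K function and h : ℝ^n → [0,∞) be continuous. Then h is a viscosity CBF with respect to α if and only if h provides the Barrier Guarantee with respect to α. -/
open Set Filter MeasureTheory Topology

noncomputable section

/-- `α : [0,∞) → [0,∞)` is a class `K` function: continuous, strictly increasing, `α 0 = 0`. -/
def IsClassK (α : ℝ → ℝ) : Prop :=
  ContinuousOn α (Set.Ici 0) ∧ StrictMonoOn α (Set.Ici 0) ∧ α 0 = 0

/-- `α` is a locally Lipschitz class `K` function on `[0,∞)`. -/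
def IsLocallyLipschitzClassK (α : ℝ → ℝ) : Prop :=
  IsClassK α ∧
    ∀ x ∈ Set.Ici (0 : ℝ), ∃ K : NNReal, ∃ s ∈ nhdsWithin x (Set.Ici (0 : ℝ)),
      LipschitzOnWith K α s

/-- `β` is the function `β_α`: for each `r ≥ 0`, `t ↦ β r t` solves `y' = -α y`, `y 0 = r`,
staying in `[0, r]` for all `t ≥ 0`. -/
def IsBetaFor (α : ℝ → ℝ) (β : ℝ → ℝ → ℝ) : Prop :=
  ∀ r : ℝ, 0 ≤ r →
    β r 0 = r ∧ ∀ t : ℝ, 0 ≤ t →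
      0 ≤ β r t ∧ β r t ≤ r ∧ HasDerivWithinAt (β r) (-α (β r t)) (Set.Ici 0) t

/-- `u` is an admissible control signal: measurable, valued in `U` on `[0,∞)`. -/
def IsControl {m : ℕ} (U : Set (Fin m → ℝ)) (u : ℝ → Fin m → ℝ) : Prop :=
  Measurable u ∧ ∀ t : ℝ, 0 ≤ t → u t ∈ U

/-- `ξ` is an admissible trajectory from `x` under the control signal `u`. -/
def IsTrajectory {n m : ℕ} (f : (Fin n → ℝ) → (Fin m → ℝ) → Fin n → ℝ)
    (x : Fin n → ℝ) (u : ℝ → Fin m → ℝ) (ξ : ℝ → Fin n → ℝ) : Prop :=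
  Continuous ξ ∧ ∀ t : ℝ, 0 ≤ t → ξ t = x + ∫ s in (0 : ℝ)..t, f (ξ s) (u s)

/-- `B` provides the Barrier Guarantee with respect to the anti-discount rate encoded by
`β = β_α`. -/
def BarrierGuarantee {n m : ℕ} (f : (Fin n → ℝ) → (Fin m → ℝ) → Fin n → ℝ)
    (U : Set (Fin m → ℝ)) (β : ℝ → ℝ → ℝ) (B : (Fin n → ℝ) → ℝ) : Prop :=
  ∀ θ ∈ Set.Ico (0 : ℝ) 1, ∀ x : Fin n → ℝ, 0 < B x →
    ∃ u ξ, IsControl U u ∧ IsTrajectory f x u ξ ∧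
      ∀ t : ℝ, 0 ≤ t → β (θ * B x) t ≤ B (ξ t)

/-- `h` is a viscosity CBF with respect to `α`: for every `x` with `h x > 0` and every `C¹`
test function `φ` such that `h - φ` has a local maximum at `x`, one has
`max_{u ∈ U} ∇φ(x) · f(x,u) ≥ -α (h x)`. -/
def IsViscosityCBF {n m : ℕ} (f : (Fin n → ℝ) → (Fin m → ℝ) → Fin n → ℝ)
    (U : Set (Fin m → ℝ)) (α : ℝ → ℝ) (h : (Fin n → ℝ) → ℝ) : Prop :=
  Continuous h ∧
    ∀ x : Fin n → ℝ, 0 < h x →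
      ∀ φ : (Fin n → ℝ) → ℝ, ContDiff ℝ 1 φ →
        IsLocalMax (fun y => h y - φ y) x →
        -α (h x) ≤ sSup ((fun u => fderiv ℝ φ x (f x u)) '' U)


/-- Partial trajectories on `[0,T]`. -/
def PTraj {n m : ℕ} (F : (Fin n → ℝ) × (Fin m → ℝ) → Fin n → ℝ) (U : Set (Fin m → ℝ))
    (x : Fin n → ℝ) (T : ℝ) (u : ℝ → Fin m → ℝ) (ξ : ℝ → Fin n → ℝ) : Prop :=
  Measurable u ∧ (∀ t, u t ∈ U) ∧ Continuous ξ ∧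
    ∀ t ∈ Set.Icc (0 : ℝ) T, ξ t = x + ∫ s in (0 : ℝ)..t, F (ξ s, u s)

lemma ptraj_intble {n m : ℕ} {F : (Fin n → ℝ) × (Fin m → ℝ) → Fin n → ℝ} {U : Set (Fin m → ℝ)}
    (hF : Continuous F) (hU : IsCompact U) {u : ℝ → Fin m → ℝ} {ξ : ℝ → Fin n → ℝ}
    (hu : Measurable u) (huU : ∀ t, u t ∈ U) (hξ : Continuous ξ) (a b : ℝ) :
    IntervalIntegrable (fun s => F (ξ s, u s)) volume a b := by
  have hc : IsCompact (F '' ((ξ '' uIcc a b) ×ˢ U)) :=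
    ((isCompact_uIcc.image hξ).prod hU).image hF
  obtain ⟨C, hC⟩ := hc.isBounded.exists_norm_le
  have hmeas : Measurable (fun s => F (ξ s, u s)) :=
    hF.measurable.comp (hξ.measurable.prodMk hu)
  refine (intervalIntegrable_const (c := C)).mono_fun hmeas.aestronglyMeasurable ?_
  refine (ae_restrict_iff' measurableSet_uIoc).2 (Eventually.of_forall fun s hs => ?_)
  refine (hC _ ⟨(ξ s, u s), ⟨⟨s, uIoc_subset_uIcc hs, rfl⟩, huU s⟩, rfl⟩).trans (le_abs_self C)

lemma ptraj_zero {n m : ℕ} {F : (Fin n → ℝ) × (Fin m → ℝ) → Fin n → ℝ} {U : Set (Fin m → ℝ)}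
    {x : Fin n → ℝ} {T : ℝ} {u : ℝ → Fin m → ℝ} {ξ : ℝ → Fin n → ℝ}
    (h : PTraj F U x T u ξ) (hT : 0 ≤ T) : ξ 0 = x := by
  have := h.2.2.2 0 ⟨le_rfl, hT⟩
  simpa using this

/-- Concatenation of partial trajectories. -/
lemma ptraj_concat {n m : ℕ} {F : (Fin n → ℝ) × (Fin m → ℝ) → Fin n → ℝ} {U : Set (Fin m → ℝ)}
    (hF : Continuous F) (hU : IsCompact U) {x : Fin n → ℝ} {T S : ℝ} (hT : 0 ≤ T) (hS : 0 ≤ S)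
    {u v : ℝ → Fin m → ℝ} {ξ ζ : ℝ → Fin n → ℝ}
    (h1 : PTraj F U x T u ξ) (h2 : PTraj F U (ξ T) S v ζ) :
    ∃ w χ, PTraj F U x (T + S) w χ ∧ (∀ t ≤ T, w t = u t) ∧ (∀ t ≤ T, χ t = ξ t) ∧
      ∀ s, 0 ≤ s → χ (T + s) = ζ s := by
  have hz := ptraj_zero h2 hS
  obtain ⟨hu, huU, hξ, he1⟩ := h1
  obtain ⟨hv, hvU, hζ, he2⟩ := h2
  set w : ℝ → Fin m → ℝ := fun t => if t ≤ T then u t else v (t - T) with hw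
  set χ : ℝ → Fin n → ℝ := fun t => if t ≤ T then ξ t else ζ (t - T) with hχ
  have hwm : Measurable w :=
    Measurable.ite measurableSet_Iic hu (hv.comp (measurable_id.sub_const T))
  have hwU : ∀ t, w t ∈ U := by
    intro t
    simp only [hw]
    split_ifs
    · exact huU t
    · exact hvU _
  have hχc : Continuous χ := by
    refine Continuous.if_le hξ (hζ.comp (continuous_id.sub continuous_const)) continuous_id
      continuous_const ?_
    intro t ht
    subst ht
    simp [hz]
  have hχ1 : ∀ t ≤ T, χ t = ξ t := fun t ht => by simp [hχ, ht]
  have hw1 : ∀ t ≤ T, w t = u t := fun t ht => by simp [hw, ht]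
  have hχ2 : ∀ s, 0 ≤ s → χ (T + s) = ζ s := by
    intro s hs
    rcases hs.eq_or_lt with rfl | hs
    · simp [hχ, hz]
    · simp [hχ, not_le.2 (by linarith : T < T + s)]
  refine ⟨w, χ, ⟨hwm, hwU, hχc, ?_⟩, hw1, hχ1, hχ2⟩
  have hI1 : ∀ t ∈ Icc 0 T, ∫ s in (0:ℝ)..t, F (χ s, w s) = ∫ s in (0:ℝ)..t, F (ξ s, u s) := by
    intro t ht
    refine intervalIntegral.integral_congr fun s hs => ?_
    rw [uIcc_of_le ht.1] at hs
    simp only [hχ1 s (hs.2.trans ht.2), hw1 s (hs.2.trans ht.2)]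
  intro t ht
  rcases le_total t T with htT | htT
  · rw [hχ1 t htT, hI1 t ⟨ht.1, htT⟩]
    exact he1 t ⟨ht.1, htT⟩
  · have hInt := ptraj_intble hF hU hwm hwU hχc
    rw [← intervalIntegral.integral_add_adjacent_intervals (hInt 0 T) (hInt T t),
      hI1 T ⟨hT, le_rfl⟩, ← add_assoc, ← he1 T ⟨hT, le_rfl⟩]
    have h3 : ∫ s in T..t, F (χ s, w s) = ∫ s in (0:ℝ)..(t - T), F (ζ s, v s) := by
      have h4 := intervalIntegral.integral_comp_sub_right (a := T) (b := t)
        (fun s => F (ζ s, v s)) T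
      rw [sub_self] at h4
      rw [← h4]
      refine intervalIntegral.integral_congr_ae (Eventually.of_forall fun s hs => ?_)
      rw [uIoc_of_le htT] at hs
      simp [hχ, hw, not_le.2 hs.1]
    rw [h3, ← he2 (t - T) ⟨by linarith, by linarith [ht.2]⟩, ← hχ2 _ (by linarith)]
    congr 1; ring

/-- A priori growth bound. -/
lemma ptraj_growth {n m : ℕ} {F : (Fin n → ℝ) × (Fin m → ℝ) → Fin n → ℝ} {U : Set (Fin m → ℝ)}
    {K : NNReal} (hF : LipschitzWith K F) {M : ℝ} 
    (hM : ∀ y, ∀ u ∈ U, ‖F (y, u)‖ ≤ M * (1 + ‖y‖))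
    {x : Fin n → ℝ} {T : ℝ} (hKT : K * T ≤ 1 / 2) {u : ℝ → Fin m → ℝ} {ξ : ℝ → Fin n → ℝ}
    (h : PTraj F U x T u ξ) : ∀ t ∈ Icc 0 T, ‖ξ t - x‖ ≤ 2 * M * (1 + ‖x‖) * t := by
  intro t ht
  obtain ⟨hu, huU, hξ, he⟩ := h
  obtain ⟨s, hs, hmax⟩ := (isCompact_Icc (a := (0:ℝ)) (b := t)).exists_isMaxOn
    ⟨0, le_rfl, ht.1⟩ ((hξ.sub continuous_const).norm.continuousOn (f := fun s => ‖ξ s - x‖))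
  have hmax' : ∀ r ∈ Icc 0 t, ‖ξ r - x‖ ≤ ‖ξ s - x‖ := fun r hr => hmax hr
  have hb : ‖ξ s - x‖ ≤ (M * (1 + ‖x‖) + K * ‖ξ s - x‖) * |s - 0| := by
    have h1 : ξ s - x = ∫ r in (0:ℝ)..s, F (ξ r, u r) := by
      conv_lhs => rw [he s ⟨hs.1, hs.2.trans ht.2⟩]
      simp
    conv_lhs => rw [h1]
    refine intervalIntegral.norm_integral_le_of_norm_le_const fun r hr => ?_
    rw [uIoc_of_le hs.1] at hr
    have h2 := hmax' r ⟨hr.1.le, hr.2.trans hs.2⟩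
    have h3 := hM x (u r) (huU r)
    have h4 : ‖F (ξ r, u r) - F (x, u r)‖ ≤ K * ‖ξ r - x‖ := by
      have := hF.dist_le_mul (ξ r, u r) (x, u r)
      simpa [dist_eq_norm, Prod.norm_def] using this
    have h5 : K * ‖ξ r - x‖ ≤ K * ‖ξ s - x‖ := by gcongr
    have h6 : ‖F (ξ r, u r)‖ ≤ ‖F (x, u r)‖ + ‖F (ξ r, u r) - F (x, u r)‖ := by
      have := norm_add_le (F (x, u r)) (F (ξ r, u r) - F (x, u r))
      simpa using this
    linarith
  rw [sub_zero, abs_of_nonneg hs.1] at hb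
  have hMx : 0 ≤ M * (1 + ‖x‖) := (norm_nonneg _).trans (hM x (u 0) (huU 0))
  have h7 : M * (1 + ‖x‖) * s ≤ M * (1 + ‖x‖) * t := by gcongr; exact hs.2
  have h8 : K * ‖ξ s - x‖ * s ≤ 1 / 2 * ‖ξ s - x‖ := by
    have : (K:ℝ) * s ≤ K * T := by gcongr; exact hs.2.trans ht.2
    nlinarith [norm_nonneg (ξ s - x)]
  have := hmax' t ⟨ht.1, le_rfl⟩
  nlinarith

/-- Existence of constant-control trajectories on a uniform time interval. -/
lemma ptraj_const {n m : ℕ} {F : (Fin n → ℝ) × (Fin m → ℝ) → Fin n → ℝ} {U : Set (Fin m → ℝ)}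
    {K : NNReal} (hF : LipschitzWith K F) {M : ℝ} (hM0 : 0 ≤ M)
    (hM : ∀ y, ∀ u ∈ U, ‖F (y, u)‖ ≤ M * (1 + ‖y‖))
    {T : ℝ} (hT : 0 ≤ T) (hMT : 2 * M * T ≤ 1) (x : Fin n → ℝ) {u : Fin m → ℝ} (hu : u ∈ U) :
    ∃ ξ, PTraj F U x T (fun _ => u) ξ := by
  have hlip : LipschitzWith K (fun y => F (y, u)) := by
    refine LipschitzWith.of_dist_le_mul fun y z => ?_
    have := hF.dist_le_mul (y, u) (z, u)
    simpa [Prod.dist_eq] using this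
  set a : NNReal := 1 + ‖x‖₊ with ha
  have hac : (a : ℝ) = 1 + ‖x‖ := by simp [ha]
  have hP : IsPicardLindelof (fun _ : ℝ => fun y => F (y, u)) (tmin := 0) (tmax := T)
      ⟨0, le_rfl, hT⟩ x a 0 (M.toNNReal * (2 * a)) K := by
    refine IsPicardLindelof.of_time_independent ?_ hlip.lipschitzOnWith ?_
    · intro y hy
      rw [Metric.mem_closedBall, dist_eq_norm, hac] at hy
      have h1 : ‖y‖ ≤ ‖x‖ + ‖y - x‖ := by
        have := norm_add_le x (y - x)
        simpa using this
      refine (hM y u hu).trans ?_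
      push_cast
      rw [hac, Real.coe_toNNReal _ hM0]
      change M * (1 + ‖y‖) ≤ M * (2 * (1 + ‖x‖))
      gcongr
      linarith
    · push_cast
      rw [hac, Real.coe_toNNReal _ hM0]
      change M * (2 * (1 + ‖x‖)) * max (T - 0) (0 - 0) ≤ 1 + ‖x‖ - 0
      rw [sub_zero, sub_zero, sub_zero, max_eq_left hT]
      nlinarith [norm_nonneg x]
  obtain ⟨γ, hγ⟩ := ODE.FunSpace.exists_isFixedPt_next hP (x := x) (by simp)
  refine ⟨γ.compProj, measurable_const, fun _ => hu, γ.continuous_compProj, ?_⟩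
  intro t ht
  have h1 : γ.compProj t = (ODE.FunSpace.next hP (x := x) (by simp) γ).compProj t := by
    rw [hγ]
  rw [h1, ODE.FunSpace.compProj_apply, ODE.FunSpace.next_apply, projIcc_of_mem _ ht]
  rfl

/-- Extension to an infinite horizon. -/
lemma ptraj_infinite {n m : ℕ} {F : (Fin n → ℝ) × (Fin m → ℝ) → Fin n → ℝ} {U : Set (Fin m → ℝ)}
    (hF : Continuous F) (hU : IsCompact U) {T₀ : ℝ} (hT₀ : 0 < T₀) (b : ℝ → ℝ)
    (h : (Fin n → ℝ) → ℝ)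
    (step : ∀ t₀, 0 ≤ t₀ → ∀ x, b t₀ < h x → ∃ u ξ, PTraj F U x T₀ u ξ ∧
      ∀ s ∈ Icc 0 T₀, b (t₀ + s) < h (ξ s)) (x : Fin n → ℝ) (hx : b 0 < h x) :
    ∃ u ξ, (∀ T, PTraj F U x T u ξ) ∧ ∀ t, 0 ≤ t → b t < h (ξ t) := by
  let P : ℕ → (ℝ → Fin m → ℝ) × (ℝ → Fin n → ℝ) → Prop := fun k p =>
    PTraj F U x (k * T₀) p.1 p.2 ∧ ∀ t ∈ Icc 0 (k * T₀), b t < h (p.2 t)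
  have hnext : ∀ k p, P k p → ∃ p', P (k + 1) p' ∧
      ∀ t ≤ k * T₀, p'.1 t = p.1 t ∧ p'.2 t = p.2 t := by
    rintro k ⟨u, ξ⟩ ⟨h1, h2⟩
    have hk : 0 ≤ k * T₀ := by positivity
    obtain ⟨v, ζ, h3, h4⟩ := step (k * T₀) hk (ξ (k * T₀)) (h2 _ ⟨hk, le_rfl⟩)
    obtain ⟨w, χ, h5, h6, h7, h8⟩ := ptraj_concat hF hU hk hT₀.le h1 h3
    have e : ((k + 1 : ℕ) : ℝ) * T₀ = k * T₀ + T₀ := by push_cast; ring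
    refine ⟨(w, χ), ⟨?_, ?_⟩, fun t ht => ⟨h6 t ht, h7 t ht⟩⟩
    · rw [e]; exact h5
    · intro t ht
      rw [e] at ht
      rcases le_total t (k * T₀) with h9 | h9
      · change b t < h (χ t)
        rw [h7 t h9]
        exact h2 t ⟨ht.1, h9⟩
      · have := h4 (t - k * T₀) ⟨by linarith, by linarith [ht.2]⟩
        rw [← h8 _ (by linarith)] at this
        simpa using this
  have h0 : ∃ p, P 0 p := by
    obtain ⟨u, ξ, h1, h2⟩ := step 0 le_rfl x hx
    refine ⟨(u, ξ), ⟨h1.1, h1.2.1, h1.2.2.1, fun t ht => h1.2.2.2 t ?_⟩, fun t ht => ?_⟩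
    · simp at ht
      subst ht
      exact ⟨le_rfl, hT₀.le⟩
    · simp at ht
      subst ht
      simpa using h2 0 ⟨le_rfl, hT₀.le⟩
  choose nxt hnxt1 hnxt2 using hnext
  obtain ⟨p0, hp0⟩ := h0
  let s : (k : ℕ) → {p // P k p} := fun k =>
    Nat.rec (motive := fun k => {p // P k p}) ⟨p0, hp0⟩
      (fun k p => ⟨nxt k p.1 p.2, hnxt1 k p.1 p.2⟩) k
  have hs : ∀ k : ℕ, ∀ t ≤ k * T₀, (s (k + 1)).1.1 t = (s k).1.1 t ∧
      (s (k + 1)).1.2 t = (s k).1.2 t := fun k => hnxt2 k (s k).1 (s k).2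
  have hs' : ∀ k j : ℕ, ∀ t ≤ k * T₀, (s (k + j)).1.1 t = (s k).1.1 t ∧
      (s (k + j)).1.2 t = (s k).1.2 t := by
    intro k j t ht
    induction j with
    | zero => exact ⟨rfl, rfl⟩
    | succ j ih =>
      have h1 := hs (k + j) t (ht.trans (by push_cast; nlinarith [(Nat.cast_nonneg j : (0:ℝ) ≤ j)]))
      exact ⟨h1.1.trans ih.1, h1.2.trans ih.2⟩
  have hagree : ∀ k l : ℕ, ∀ t, t ≤ k * T₀ → t ≤ l * T₀ → (s k).1.1 t = (s l).1.1 t ∧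
      (s k).1.2 t = (s l).1.2 t := by
    intro k l t hk hl
    rcases le_total k l with hkl | hkl
    · obtain ⟨j, rfl⟩ := Nat.exists_eq_add_of_le hkl
      have := hs' k j t hk
      exact ⟨this.1.symm, this.2.symm⟩
    · obtain ⟨j, rfl⟩ := Nat.exists_eq_add_of_le hkl
      exact hs' l j t hl
  let N : ℝ → ℕ := fun t => ⌈t / T₀⌉₊
  have hN : ∀ t, t ≤ N t * T₀ := fun t => by
    have := Nat.le_ceil (t / T₀)
    rwa [div_le_iff₀ hT₀] at this
  let u : ℝ → Fin m → ℝ := fun t => (s (N t)).1.1 t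
  let ξ : ℝ → Fin n → ℝ := fun t => (s (N t)).1.2 t
  have hu : ∀ k : ℕ, ∀ t ≤ k * T₀, u t = (s k).1.1 t := fun k t ht => (hagree _ _ t (hN t) ht).1
  have hξ : ∀ k : ℕ, ∀ t ≤ k * T₀, ξ t = (s k).1.2 t := fun k t ht => (hagree _ _ t (hN t) ht).2
  have hum : Measurable u := by
    have h1 : Measurable (fun p : ℝ × ℕ => (s p.2).1.1 p.1) :=
      measurable_from_prod_countable_left fun k => (s k).2.1.1
    exact h1.comp (measurable_id.prodMk (Nat.measurable_ceil.comp (measurable_id.div_const T₀)))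
  have hξc : Continuous ξ := by
    refine continuous_iff_continuousAt.2 fun t => ?_
    obtain ⟨k, hk⟩ : ∃ k : ℕ, t < k * T₀ := by
      obtain ⟨k, hk⟩ := exists_nat_gt (t / T₀)
      exact ⟨k, by rwa [div_lt_iff₀ hT₀] at hk⟩
    refine ((s k).2.1.2.2.1.continuousAt).congr ?_
    filter_upwards [Iio_mem_nhds hk] with r hr
    exact (hξ k r (le_of_lt hr)).symm
  refine ⟨u, ξ, fun T => ⟨hum, fun t => (s (N t)).2.1.2.1 t, hξc, fun t ht => ?_⟩, fun t ht => ?_⟩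
  · have h1 := (s (N t)).2.1.2.2.2 t ⟨ht.1, hN t⟩
    refine h1.trans ?_
    congr 1
    refine intervalIntegral.integral_congr fun r hr => ?_
    rw [uIcc_of_le ht.1] at hr
    simp only [hu (N t) r (hr.2.trans (hN t)), hξ (N t) r (hr.2.trans (hN t))]
  · exact (s (N t)).2.2 t ⟨ht, hN t⟩

/-- The Euclidean dot product on `Fin n → ℝ`. -/
def ipd {n : ℕ} (a b : Fin n → ℝ) : ℝ := ∑ i, a i * b i

lemma ipd_add_right {n : ℕ} (a b c : Fin n → ℝ) : ipd a (b + c) = ipd a b + ipd a c := by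
  simp [ipd, mul_add, Finset.sum_add_distrib]

lemma ipd_smul_right {n : ℕ} (a b : Fin n → ℝ) (s : ℝ) : ipd a (s • b) = s * ipd a b := by
  simp only [ipd, Finset.mul_sum, Pi.smul_apply, smul_eq_mul]
  exact Finset.sum_congr rfl fun i _ => by ring

lemma ipd_sub_sq {n : ℕ} (a b : Fin n → ℝ) :
    ipd (a - b) (a - b) = ipd a a - 2 * ipd a b + ipd b b := by
  simp only [ipd, Finset.mul_sum, ← Finset.sum_sub_distrib, ← Finset.sum_add_distrib, Pi.sub_apply]
  exact Finset.sum_congr rfl fun i _ => by ring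

lemma abs_ipd_le {n : ℕ} (a b : Fin n → ℝ) : |ipd a b| ≤ n * (‖a‖ * ‖b‖) := by
  unfold ipd
  refine (Finset.abs_sum_le_sum_abs _ _).trans ?_
  refine (Finset.sum_le_card_nsmul _ _ (‖a‖ * ‖b‖) fun i _ => ?_).trans (by simp)
  rw [abs_mul]
  exact mul_le_mul (norm_le_pi_norm a i) (norm_le_pi_norm b i) (abs_nonneg _) (norm_nonneg _)

lemma ipd_self_nonneg {n : ℕ} (a : Fin n → ℝ) : 0 ≤ ipd a a :=
  Finset.sum_nonneg fun i _ => mul_self_nonneg _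

lemma sq_norm_le_ipd {n : ℕ} (a : Fin n → ℝ) : ‖a‖ ^ 2 ≤ ipd a a := by
  have h1 : ‖a‖ ≤ Real.sqrt (ipd a a) := by
    refine (pi_norm_le_iff_of_nonneg (Real.sqrt_nonneg _)).2 fun i => ?_
    refine Real.le_sqrt_of_sq_le ?_
    rw [Real.norm_eq_abs, sq_abs, sq]
    exact Finset.single_le_sum (f := fun i => a i * a i) (fun _ _ => mul_self_nonneg _)
      (Finset.mem_univ i)
  calc ‖a‖ ^ 2 ≤ Real.sqrt (ipd a a) ^ 2 := by gcongr
    _ = _ := Real.sq_sqrt (ipd_self_nonneg a)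

lemma hasFDerivAt_quad {n : ℕ} (l : ℝ) (y z : Fin n → ℝ) :
    ∃ L : (Fin n → ℝ) →L[ℝ] ℝ, HasFDerivAt (fun w => l * ipd (w - y) (w - y)) L z ∧
      ∀ v, L v = 2 * l * ipd (z - y) v := by
  have h1 : ∀ i : Fin n, HasFDerivAt (fun w : Fin n → ℝ => w i - y i)
      (ContinuousLinearMap.proj (R := ℝ) (φ := fun _ : Fin n => ℝ) i) z := fun i =>
    ((ContinuousLinearMap.proj (R := ℝ) (φ := fun _ : Fin n => ℝ) i).hasFDerivAt).sub_const _
  have h2 := (HasFDerivAt.fun_sum (u := Finset.univ) fun i _ => (h1 i).mul (h1 i)).const_mul l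
  refine ⟨_, h2, fun v => ?_⟩
  simp [ipd, Finset.mul_sum]
  exact Finset.sum_congr rfl fun i _ => by ring

lemma contDiff_quad {n : ℕ} (l : ℝ) (y : Fin n → ℝ) :
    ContDiff ℝ 1 (fun w : Fin n → ℝ => l * ipd (w - y) (w - y)) := by
  unfold ipd
  simp only [Pi.sub_apply]
  fun_prop

/-- Decrease estimate along one aimed step. -/
lemma aim_step {n m : ℕ} {F : (Fin n → ℝ) × (Fin m → ℝ) → Fin n → ℝ} {U : Set (Fin m → ℝ)}
    {K : NNReal} (hF : LipschitzWith K F) (hU : IsCompact U)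
    {y z : Fin n → ℝ} {u : Fin m → ℝ} {ζ : ℝ → Fin n → ℝ} {δ l η A M' : ℝ} (hl : 0 ≤ l)
    (hM' : 0 ≤ M')
    (hz1 : ‖z - y‖ ≤ 1) (hz2 : l * ‖z - y‖ ^ 2 ≤ η)
    (hA : -A ≤ 2 * l * ipd (z - y) (F (z, u)))
    (hζ : PTraj F U y δ (fun _ => u) ζ) (hg : ∀ r ∈ Icc 0 δ, ‖ζ r - y‖ ≤ M' * r)
    {s : ℝ} (hs : s ∈ Icc 0 δ) :
    -(l * ipd (z - y) (z - y)) - s * (A + 2 * n * K * η + (2 * n * K * l * M' + l * n * M' ^ 2) * s)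
      ≤ -(l * ipd (z - ζ s) (z - ζ s)) := by
  set a := z - y with ha
  set e := ζ s - y - s • F (z, u) with he
  have hInt := ptraj_intble hF.continuous hU hζ.1 hζ.2.1 hζ.2.2.1 0 s
  have he1 : ‖e‖ ≤ K * (M' * s + ‖a‖) * s := by
    have h1 : e = ∫ r in (0:ℝ)..s, (F (ζ r, u) - F (z, u)) := by
      rw [intervalIntegral.integral_sub hInt intervalIntegrable_const, he,
        hζ.2.2.2 s hs]
      simp
    have h2 := intervalIntegral.norm_integral_le_of_norm_le_const (a := 0) (b := s)
      (f := fun r => F (ζ r, u) - F (z, u)) (C := K * (M' * s + ‖a‖)) fun r hr => by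
        rw [uIoc_of_le hs.1] at hr
        have h3 : ‖F (ζ r, u) - F (z, u)‖ ≤ K * ‖ζ r - z‖ := by
          have := hF.dist_le_mul (ζ r, u) (z, u)
          simpa [dist_eq_norm, Prod.norm_def] using this
        have h4 : ‖ζ r - z‖ ≤ ‖ζ r - y‖ + ‖a‖ := by
          have := norm_sub_le (ζ r - y) (z - y)
          simpa using this
        have h5 := hg r ⟨hr.1.le, hr.2.trans hs.2⟩
        have h6 : M' * r ≤ M' * s := by gcongr; exact hr.2
        refine h3.trans ?_
        gcongr
        linarith
    rw [h1]
    simpa [abs_of_nonneg hs.1] using h2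
  have hb : ζ s - y = s • F (z, u) + e := by rw [he]; abel
  have hq : z - ζ s = a - (ζ s - y) := by rw [ha]; abel
  have h7 : ipd (ζ s - y) (ζ s - y) ≤ n * (M' * s * (M' * s)) := by
    refine ((le_abs_self _).trans (abs_ipd_le _ _)).trans ?_
    have := hg s hs
    have h0 : 0 ≤ M' * s := mul_nonneg hM' hs.1
    gcongr
  have h8 : -(n * (‖a‖ * (K * (M' * s + ‖a‖) * s))) ≤ ipd a e := by
    have h9 := (neg_abs_le (ipd a e))
    have h10 := abs_ipd_le a e
    have : n * (‖a‖ * ‖e‖) ≤ n * (‖a‖ * (K * (M' * s + ‖a‖) * s)) := by gcongr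
    linarith
  rw [hq, ipd_sub_sq a, hb, ipd_add_right, ipd_smul_right, ← hb]
  have hs0 := hs.1
  have h11 : l * ipd (ζ s - y) (ζ s - y) ≤ l * (n * (M' * s * (M' * s))) := by gcongr
  have h12 : -(2 * l * (n * (‖a‖ * (K * (M' * s + ‖a‖) * s)))) ≤ 2 * l * ipd a e := by
    have := mul_le_mul_of_nonneg_left h8 (by positivity : 0 ≤ 2 * l)
    linarith
  have h13 := mul_le_mul_of_nonneg_left hA hs0
  have h14 : (2 * n * K * s) * (l * ‖a‖ ^ 2) ≤ (2 * n * K * s) * η := by gcongr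
  have h15 : (2 * n * K * l * M' * s * s) * ‖a‖ ≤ (2 * n * K * l * M' * s * s) * 1 := by
    gcongr
  nlinarith [h11, h12, h13, h14, h15]

/-- The scalar comparison curve. -/
lemma curve_step {α b : ℝ → ℝ} {L A T ρ r : ℝ} (hL : 0 ≤ L) (hρ : 0 < ρ)
    (hα : ∀ s ∈ Icc 0 A, ∀ t ∈ Icc 0 A, |α s - α t| ≤ L * |s - t|)
    (hα0 : ∀ s ∈ Icc 0 A, 0 ≤ α s ∧ α s ≤ α A)
    (hb : ∀ t, 0 ≤ t → 0 ≤ b t ∧ b t ≤ r ∧ HasDerivWithinAt b (-α (b t)) (Ici 0) t)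
    (hA : r + ρ ≤ A) {t s : ℝ} (ht : 0 ≤ t) (hs : 0 ≤ s) (hts : t + s ≤ T) :
    b (t + s) + ρ * Real.exp (-(L + 1) * (t + s)) ≤
      (b t + ρ * Real.exp (-(L + 1) * t)) - s * (α (b t + ρ * Real.exp (-(L + 1) * t))
        + ρ * Real.exp (-(L + 1) * T) - L * (α A + (L + 1) * ρ) * s) := by
  set p : ℝ → ℝ := fun t => b t + ρ * Real.exp (-(L + 1) * t) with hp
  rcases hs.eq_or_lt with rfl | hs
  · simp
  have hE1 : ∀ t, 0 ≤ t → Real.exp (-(L + 1) * t) ≤ 1 := fun t ht => by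
    rw [Real.exp_le_one_iff]; nlinarith
  have hpm : ∀ t, 0 ≤ t → p t ∈ Icc 0 A := by
    intro t ht
    have h1 := hb t ht
    have h2 := hE1 t ht
    have h3 := Real.exp_pos (-(L + 1) * t)
    simp only [hp, mem_Icc]
    constructor
    · nlinarith
    · nlinarith
  have hbm : ∀ t, 0 ≤ t → b t ∈ Icc 0 A := fun t ht =>
    ⟨(hb t ht).1, by linarith [(hb t ht).2.1]⟩
  set p' : ℝ → ℝ := fun t => -α (b t) + ρ * (Real.exp (-(L + 1) * t) * (-(L + 1))) with hp'
  have hder : ∀ t, 0 ≤ t → HasDerivWithinAt p (p' t) (Ici 0) t := by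
    intro t ht
    refine (hb t ht).2.2.add (HasDerivAt.hasDerivWithinAt ?_)
    refine HasDerivAt.const_mul ρ ?_
    have := ((hasDerivAt_id t).const_mul (-(L + 1))).exp
    simpa using this
  have hder' : ∀ t, 0 < t → HasDerivAt p (p' t) t := fun t ht =>
    (hder t ht.le).hasDerivAt (Ici_mem_nhds ht)
  have hcont : ∀ a c, 0 ≤ a → ContinuousOn p (Icc a c) := fun a c ha x hx =>
    ((hder x (ha.trans hx.1)).continuousWithinAt).mono fun y hy => ha.trans hy.1
  have mvt : ∀ a c, 0 ≤ a → a < c → ∃ σ ∈ Ioo a c, p c = p a + (c - a) * p' σ := by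
    intro a c ha hac
    obtain ⟨σ, hσ, h1⟩ := exists_hasDerivAt_eq_slope p p' hac (hcont a c ha)
      (fun x hx => hder' x (ha.trans_lt hx.1))
    refine ⟨σ, hσ, ?_⟩
    have : c - a ≠ 0 := by linarith
    rw [h1]; field_simp; ring
  have hbound : ∀ σ, 0 ≤ σ → -(α A + (L + 1) * ρ) ≤ p' σ ∧ p' σ ≤ 0 := by
    intro σ hσ
    have h1 := hα0 _ (hbm σ hσ)
    have h2 := hE1 σ hσ
    have h3 := Real.exp_pos (-(L + 1) * σ)
    have h4 : ρ * (L + 1) * Real.exp (-(L + 1) * σ) ≤ ρ * (L + 1) * 1 := by gcongr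
    have h5 : 0 ≤ ρ * (L + 1) * Real.exp (-(L + 1) * σ) := by positivity
    simp only [hp']
    constructor <;> nlinarith
  obtain ⟨σ, hσ, h1⟩ := mvt t (t + s) ht (by linarith)
  obtain ⟨τ, hτ, h2⟩ := mvt t σ ht hσ.1
  have hσ0 : 0 ≤ σ := ht.trans hσ.1.le
  have h3 := hbound τ (ht.trans hτ.1.le)
  have h4 : |p t - p σ| ≤ (α A + (L + 1) * ρ) * s := by
    rw [h2, abs_le]
    have h5 : σ - t ≤ s := by linarith [hσ.2]
    have h6 : 0 < σ - t := by linarith [hσ.1]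
    constructor <;> nlinarith
  have h5 : α (p t) - α (p σ) ≤ L * ((α A + (L + 1) * ρ) * s) :=
    ((le_abs_self _).trans (hα _ (hpm t ht) _ (hpm σ hσ0))).trans (by gcongr)
  have h6 : α (p σ) - α (b σ) ≤ L * (ρ * Real.exp (-(L + 1) * σ)) := by
    have := (le_abs_self _).trans (hα _ (hpm σ hσ0) _ (hbm σ hσ0))
    simp only [hp, add_sub_cancel_left] at this
    rwa [abs_of_pos (by positivity)] at this
  have h7 : ρ * Real.exp (-(L + 1) * T) ≤ ρ * Real.exp (-(L + 1) * σ) := by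
    have : σ ≤ T := by linarith [hσ.2]
    refine mul_le_mul_of_nonneg_left (Real.exp_le_exp.2 ?_) hρ.le
    nlinarith
  have h8 : p' σ ≤ -(α (p t) + ρ * Real.exp (-(L + 1) * T) - L * (α A + (L + 1) * ρ) * s) := by
    simp only [hp'] at *
    linarith
  change p (t + s) ≤ p t - s * (α (p t) + ρ * Real.exp (-(L + 1) * T)
    - L * (α A + (L + 1) * ρ) * s)
  rw [h1]
  have := mul_le_mul_of_nonneg_left h8 hs.le
  rw [add_sub_cancel_left]
  linarith

lemma classK_lip {α : ℝ → ℝ} (hα : IsLocallyLipschitzClassK α) (A : ℝ) :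
    ∃ L : ℝ, 0 ≤ L ∧ ∀ s ∈ Icc 0 A, ∀ t ∈ Icc 0 A, |α s - α t| ≤ L * |s - t| := by
  have h1 : LocallyLipschitzOn (Icc 0 A) α := by
    intro x hx
    obtain ⟨K, s, hs, hK⟩ := hα.2 x hx.1
    exact ⟨K, s, nhdsWithin_mono x Icc_subset_Ici_self hs, hK⟩
  obtain ⟨K, hK⟩ := h1.exists_lipschitzOnWith_of_compact isCompact_Icc
  exact ⟨K, K.2, fun s hs t ht => by simpa [Real.dist_eq] using hK.dist_le_mul s hs t ht⟩

set_option maxHeartbeats 2000000 in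
/-- One uniform horizon: from viscosity inequality to a genuine trajectory. -/
lemma horizon {n m : ℕ} {F : (Fin n → ℝ) × (Fin m → ℝ) → Fin n → ℝ} {U : Set (Fin m → ℝ)}
    {K : NNReal} (hF : LipschitzWith K F) (hU : IsCompact U) (hUne : U.Nonempty)
    {M : ℝ} (hM0 : 0 ≤ M)
    (hM : ∀ y, ∀ u ∈ U, ‖F (y, u)‖ ≤ M * (1 + ‖y‖)) {T₀ : ℝ} (hT₀ : 0 < T₀)
    (hKT : K * T₀ ≤ 1 / 2) (hMT : 2 * M * T₀ ≤ 1)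
    {α : ℝ → ℝ} (hα : IsLocallyLipschitzClassK α) {h : (Fin n → ℝ) → ℝ} (hh : Continuous h)
    (hh0 : ∀ x, 0 ≤ h x)
    (hv : ∀ x, 0 < h x → ∀ φ : (Fin n → ℝ) → ℝ, ContDiff ℝ 1 φ →
      IsLocalMax (fun y => h y - φ y) x → ∃ u ∈ U, -α (h x) ≤ fderiv ℝ φ x (F (x, u)))
    {b : ℝ → ℝ} {r : ℝ}
    (hb : ∀ t, 0 ≤ t → 0 ≤ b t ∧ b t ≤ r ∧ HasDerivWithinAt b (-α (b t)) (Ici 0) t)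
    (x : Fin n → ℝ) (hx : b 0 < h x) :
    ∃ u ξ, PTraj F U x T₀ u ξ ∧ ∀ s ∈ Icc 0 T₀, b s < h (ξ s) := by
  have hα0 : ∀ A, ∀ s ∈ Icc 0 A, 0 ≤ α s ∧ α s ≤ α A := by
    intro A s hs
    have hmono := hα.1.2.1.monotoneOn
    constructor
    · have := hmono (mem_Ici.2 le_rfl) (mem_Ici.2 hs.1) hs.1
      rwa [hα.1.2.2] at this
    · exact hmono (mem_Ici.2 hs.1) (mem_Ici.2 (hs.1.trans hs.2)) hs.2
  have hαm : ∀ s t, 0 ≤ s → s ≤ t → α s ≤ α t := fun s t hs hst =>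
    (hα0 t s ⟨hs, hst⟩).2
  set ρ := h x - b 0 with hρdef
  have hρ : 0 < ρ := by linarith
  set R := 1 + ‖x‖ with hR
  have hR0 : 0 < R := by positivity
  set Z := Metric.closedBall x (R + 1) with hZ
  have hZc : IsCompact Z := isCompact_closedBall _ _
  obtain ⟨H, hH⟩ : ∃ H, ∀ z ∈ Z, h z ≤ H := by
    obtain ⟨H, hH⟩ := hZc.bddAbove_image hh.continuousOn
    exact ⟨H, fun z hz => hH ⟨z, hz, rfl⟩⟩
  have hxZ : x ∈ Z := Metric.mem_closedBall_self (by linarith)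
  have hH0 : 0 ≤ H := (hh0 x).trans (hH x hxZ)
  set A := max (r + ρ) (H + 1) with hA
  have hA1 : r + ρ ≤ A := le_max_left _ _
  have hA2 : H + 1 ≤ A := le_max_right _ _
  obtain ⟨L, hL, hLip⟩ := classK_lip hα A
  set c₀ := ρ * Real.exp (-(L + 1) * T₀) with hc₀
  have hc₀0 : 0 < c₀ := by positivity
  set D := α A + (L + 1) * ρ with hD
  have hαA : 0 ≤ α A := (hα0 A A ⟨by linarith, le_rfl⟩).1
  have hD0 : 0 ≤ D := by positivity
  set p : ℝ → ℝ := fun t => b t + ρ * Real.exp (-(L + 1) * t) with hp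
  have hp1 : ∀ t ∈ Icc 0 T₀, b t + c₀ ≤ p t := by
    intro t ht
    simp only [hp, hc₀]
    have : Real.exp (-(L + 1) * T₀) ≤ Real.exp (-(L + 1) * t) :=
      Real.exp_le_exp.2 (by nlinarith [ht.2])
    nlinarith
  have hpstep : ∀ t s, 0 ≤ t → 0 ≤ s → t + s ≤ T₀ →
      p (t + s) ≤ p t - s * (α (p t) + c₀ - L * D * s) := fun t s ht hs hts =>
    curve_step hL hρ hLip (hα0 A) hb hA1 ht hs hts
  set c : ℝ := 2 * n * K with hc
  have hc0 : 0 ≤ c := by positivity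
  set η := min 1 (c₀ / (2 * (L + c + 1))) with hη
  have hη0 : 0 < η := lt_min one_pos (by positivity)
  have hη1 : η ≤ 1 := min_le_left _ _
  have hη2 : (L + c + 1) * η ≤ c₀ / 2 := by
    have h1 : η ≤ c₀ / (2 * (L + c + 1)) := min_le_right _ _
    rw [le_div_iff₀ (by positivity)] at h1
    linarith
  have hη3 : η ≤ c₀ / 2 := by nlinarith [mul_nonneg (add_nonneg hL hc0) hη0.le]
  obtain ⟨d, hd0, hd1, hd⟩ : ∃ d : ℝ, 0 < d ∧ d ≤ 1 ∧
      ∀ a ∈ Z, ∀ b ∈ Z, ‖a - b‖ < d → |h a - h b| < η := by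
    have huc := hZc.uniformContinuousOn_of_continuous hh.continuousOn
    obtain ⟨d, hd0, hd⟩ := Metric.uniformContinuousOn_iff.1 huc η hη0
    refine ⟨min d 1, lt_min hd0 one_pos, min_le_right _ _, fun a ha b hb hab => ?_⟩
    have := hd a ha b hb (by rw [dist_eq_norm]; exact hab.trans_le (min_le_left _ _))
    rwa [Real.dist_eq] at this
  set l := (H + 1) / d ^ 2 with hl
  have hl0 : 0 < l := by positivity
  have hld : ∀ v : ℝ, 0 ≤ v → l * v ^ 2 ≤ H → v < d := by
    intro v hv0 hv1
    by_contra hcon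
    push Not at hcon
    have h1 : l * d ^ 2 ≤ l * v ^ 2 := by gcongr
    have h2 : l * d ^ 2 = H + 1 := by rw [hl]; field_simp
    linarith
  set M' := 2 * M * (1 + (‖x‖ + R)) with hM'
  have hM'0 : 0 ≤ M' := by positivity
  set C := 2 * n * K * l * M' + l * n * M' ^ 2 with hC
  have hC0 : 0 ≤ C := by positivity
  obtain ⟨N, hN⟩ := exists_nat_gt (T₀ * ((C + L * D) * 2 / c₀ + L))
  have hNpos : (0:ℝ) < N := lt_of_le_of_lt (by positivity) hN
  set δ := T₀ / N with hδ
  have hδ0 : 0 < δ := by positivity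
  have hδ1 : δ * ((C + L * D) * 2 / c₀ + L) ≤ 1 := by
    rw [hδ, div_mul_eq_mul_div, div_le_one hNpos]
    exact hN.le
  have hδ2 : (C + L * D) * δ ≤ c₀ / 2 := by
    have h1 : δ * ((C + L * D) * 2 / c₀) ≤ 1 := by
      have h0 : 0 ≤ δ * L := by positivity
      linarith [mul_add δ ((C + L * D) * 2 / c₀) L]
    have h2 : δ * ((C + L * D) * 2 / c₀) = ((C + L * D) * δ) / (c₀ / 2) := by field_simp
    rw [h2, div_le_one (by positivity)] at h1
    exact h1
  have hδ3 : δ * L ≤ 1 := by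
    have : 0 ≤ δ * ((C + L * D) * 2 / c₀) := by positivity
    linarith [mul_add δ ((C + L * D) * 2 / c₀) L]
  have hNδ : N * δ = T₀ := by rw [hδ]; field_simp
  have hstay : ∀ T u ξ, T ≤ T₀ → PTraj F U x T u ξ → ∀ t ∈ Icc 0 T, ‖ξ t - x‖ ≤ R := by
    intro T u ξ hT hξ t ht
    have h1 := ptraj_growth hF hM ((mul_le_mul_of_nonneg_left hT K.2).trans hKT) hξ t ht
    have h2 : 2 * M * (1 + ‖x‖) * t ≤ 2 * M * (1 + ‖x‖) * T₀ := by
      gcongr; exact ht.2.trans hT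
    have h3 : (2 * M * T₀) * R ≤ 1 * R := by gcongr
    rw [hR] at h3 ⊢
    linarith
  have main : ∀ k : ℕ, k ≤ N → ∃ u ξ, PTraj F U x (k * δ) u ξ ∧ ∀ t ∈ Icc 0 (k * δ),
      ∃ z ∈ Z, p t ≤ h z - l * ipd (z - ξ t) (z - ξ t) := by
    intro k
    induction k with
    | zero =>
      intro _
      obtain ⟨u₀, hu₀⟩ := hUne
      refine ⟨fun _ => u₀, fun _ => x, ⟨measurable_const, fun _ => hu₀, continuous_const, ?_⟩, ?_⟩
      · intro t ht
        simp at ht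
        subst ht
        simp
      · intro t ht
        simp at ht
        subst ht
        refine ⟨x, hxZ, ?_⟩
        simp [hp, ipd, hρdef]
    | succ k ih =>
      intro hk
      obtain ⟨u, ξ, h1, h2⟩ := ih (by omega)
      have hkδ : 0 ≤ k * δ := by positivity
      have hkT : (k + 1) * δ ≤ T₀ := by
        rw [← hNδ]
        have : ((k + 1 : ℕ) : ℝ) ≤ N := by exact_mod_cast hk
        push_cast at this
        gcongr
      have hkT' : k * δ ≤ T₀ := by linarith
      set y := ξ (k * δ) with hy
      have hyR : ‖y - x‖ ≤ R := hstay _ _ _ hkT' h1 _ ⟨hkδ, le_rfl⟩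
      have hyZ : y ∈ Z := by
        rw [hZ, Metric.mem_closedBall, dist_eq_norm]; linarith
      obtain ⟨z₀, hz₀, hpz₀⟩ := h2 _ ⟨hkδ, le_rfl⟩
      have hquad : Continuous (fun w => h w - l * ipd (w - y) (w - y)) :=
        hh.sub (contDiff_quad l y).continuous
      obtain ⟨z, hz, hzmax⟩ := hZc.exists_isMaxOn ⟨x, hxZ⟩ hquad.continuousOn
      have hzmax' : ∀ w ∈ Z, h w - l * ipd (w - y) (w - y) ≤ h z - l * ipd (z - y) (z - y) :=
        fun w hw => hzmax hw
      set v := h z - l * ipd (z - y) (z - y) with hvdef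
      have hpv : p (k * δ) ≤ v := hpz₀.trans (hzmax' z₀ hz₀)
      have hyv : h y ≤ v := by
        have := hzmax' y hyZ
        simpa [ipd] using this
      have hq := sq_norm_le_ipd (z - y)
      have hlq : l * ‖z - y‖ ^ 2 ≤ l * ipd (z - y) (z - y) := by gcongr
      have hzd : ‖z - y‖ < d := hld _ (norm_nonneg _) (by
        have := hH z hz
        have := hh0 y
        linarith)
      have hzη : l * ipd (z - y) (z - y) ≤ η := by
        have := (abs_lt.1 (hd z hz y hyZ hzd)).2
        linarith
      have hpk : 0 < p (k * δ) := by
        have := hp1 (k * δ) ⟨hkδ, hkT'⟩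
        have := (hb (k * δ) hkδ).1
        linarith
      have hlq0 : 0 ≤ l * ipd (z - y) (z - y) := mul_nonneg hl0.le (ipd_self_nonneg _)
      have hzpos : 0 < h z := by linarith
      have hloc : IsLocalMax (fun w => h w - l * ipd (w - y) (w - y)) z := by
        refine hzmax.isLocalMax ?_
        refine mem_of_superset (Metric.ball_mem_nhds z (ε := 1 - ‖z - y‖) (by linarith)) ?_
        intro w hw
        rw [Metric.mem_ball, dist_eq_norm] at hw
        rw [hZ, Metric.mem_closedBall, dist_eq_norm]
        have e1 : w - x = (w - z) + (z - y) + (y - x) := by abel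
        have e2 := norm_add₃_le (a := w - z) (b := z - y) (c := y - x)
        rw [e1]
        linarith
      obtain ⟨u', hu', hu'2⟩ := hv z hzpos _ (contDiff_quad l y) hloc
      obtain ⟨Lf, hLf, hLf2⟩ := hasFDerivAt_quad l y z
      rw [hLf.fderiv, hLf2] at hu'2
      have hδT : δ ≤ T₀ := by linarith
      obtain ⟨ζ, hζ⟩ := ptraj_const hF hM0 hM hδ0.le
        ((mul_le_mul_of_nonneg_left hδT (by positivity)).trans hMT) y hu'
      have hg : ∀ r ∈ Icc 0 δ, ‖ζ r - y‖ ≤ M' * r := by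
        intro r hr
        have e1 := ptraj_growth hF hM ((mul_le_mul_of_nonneg_left hδT K.2).trans hKT) hζ r hr
        have e2 : ‖y‖ ≤ ‖x‖ + R := by
          have := norm_add_le x (y - x)
          simp only [add_sub_cancel] at this
          linarith
        refine e1.trans ?_
        rw [hM']
        have := hr.1
        gcongr
      obtain ⟨w, χ, h5, _, h7, h8⟩ := ptraj_concat hF.continuous hU hkδ hδ0.le h1 hζ
      have e : ((k + 1 : ℕ) : ℝ) * δ = k * δ + δ := by push_cast; ring
      refine ⟨w, χ, by rw [e]; exact h5, fun t ht => ?_⟩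
      rw [e] at ht
      rcases le_total t (k * δ) with h9 | h9
      · rw [h7 t h9]
        exact h2 t ⟨ht.1, h9⟩
      · obtain ⟨s, rfl⟩ : ∃ s, t = k * δ + s := ⟨t - k * δ, by ring⟩
        have hs : s ∈ Icc 0 δ := ⟨by linarith, by linarith [ht.2]⟩
        rw [h8 s hs.1]
        refine ⟨z, hz, ?_⟩
        have g1 := aim_step hF hU hl0.le hM'0 (by linarith) (hlq.trans hzη) hu'2 hζ hg hs
        have g2 := hpstep (k * δ) s hkδ hs.1 (by linarith [hs.2])
        have g3 : α (h z) ≤ α (v + η) := hαm _ _ hzpos.le (by linarith)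
        have hvH : v ≤ H := by linarith [hH z hz]
        have g4 : α (v + η) - α (p (k * δ)) ≤ L * (v + η - p (k * δ)) := by
          have e1 := (le_abs_self _).trans (hLip (v + η) ⟨by linarith, by linarith⟩ (p (k * δ))
            ⟨hpk.le, by linarith⟩)
          rwa [abs_of_nonneg (by linarith)] at e1
        have g5 : s * (L * (v - p (k * δ))) ≤ v - p (k * δ) := by
          have e1 : s * L ≤ 1 := (mul_le_mul_of_nonneg_right hs.2 hL).trans hδ3
          have e2 : 0 ≤ v - p (k * δ) := by linarith
          have e3 := mul_le_mul_of_nonneg_right e1 e2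
          linarith
        have g6 : (C + L * D) * s ≤ c₀ / 2 := by
          have : (C + L * D) * s ≤ (C + L * D) * δ := by gcongr; exact hs.2
          linarith
        have g7 : s * (α (h z) + c * η + C * s) ≤
            s * (α (p (k * δ)) + L * (v - p (k * δ)) + c₀ - L * D * s) := by
          refine mul_le_mul_of_nonneg_left ?_ hs.1
          linarith
        have g8 : v - s * (α (h z) + c * η + C * s) ≤ h z - l * ipd (z - ζ s) (z - ζ s) := by
          rw [hvdef]
          linarith
        linarith
  obtain ⟨u, ξ, h1, h2⟩ := main N le_rfl
  rw [hNδ] at h1 h2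
  refine ⟨u, ξ, h1, fun t ht => ?_⟩
  obtain ⟨z, hz, hpz⟩ := h2 t ht
  have hyR := hstay _ _ _ le_rfl h1 t ht
  have hyZ : ξ t ∈ Z := by
    rw [hZ, Metric.mem_closedBall, dist_eq_norm]; linarith
  have hq := sq_norm_le_ipd (z - ξ t)
  have hlq : l * ‖z - ξ t‖ ^ 2 ≤ l * ipd (z - ξ t) (z - ξ t) := by gcongr
  have hlq0 : 0 ≤ l * ipd (z - ξ t) (z - ξ t) := mul_nonneg hl0.le (ipd_self_nonneg _)
  have hpt := hp1 t ht
  have hbt := (hb t ht.1).1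
  have hzd : ‖z - ξ t‖ < d := hld _ (norm_nonneg _) (by
    have := hH z hz
    linarith)
  have := (abs_lt.1 (hd z hz _ hyZ hzd)).2
  linarith

/-- The barrier guarantee implies the viscosity inequality (for globally Lipschitz `F`). -/
lemma visc_of_barrier {n m : ℕ} {F : (Fin n → ℝ) × (Fin m → ℝ) → Fin n → ℝ} {U : Set (Fin m → ℝ)}
    {K : NNReal} (hF : LipschitzWith K F) (hU : IsCompact U)
    {M : ℝ} (hM : ∀ y, ∀ u ∈ U, ‖F (y, u)‖ ≤ M * (1 + ‖y‖))
    {α : ℝ → ℝ} (hα : IsClassK α) {β : ℝ → ℝ → ℝ} (hβ : IsBetaFor α β)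
    {h : (Fin n → ℝ) → ℝ} (x : Fin n → ℝ) (hx : 0 < h x)
    (hB : ∀ θ ∈ Set.Ico (0 : ℝ) 1, ∃ u ξ, PTraj F U x 1 u ξ ∧
      ∀ t : ℝ, 0 ≤ t → β (θ * h x) t ≤ h (ξ t))
    (φ : (Fin n → ℝ) → ℝ) (hφ : ContDiff ℝ 1 φ) (hmax : IsLocalMax (fun y => h y - φ y) x)
    (S : ℝ) (hS : ∀ u ∈ U, fderiv ℝ φ x (F (x, u)) ≤ S) : -α (h x) ≤ S := by
  set G := fderiv ℝ φ x with hG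
  have hd : HasFDerivAt φ G x := (hφ.differentiable one_ne_zero x).hasFDerivAt
  set C := |2 * M * (1 + ‖x‖)| with hC
  have hC0 : 0 ≤ C := abs_nonneg _
  refine le_of_forall_pos_le_add fun ε hε => ?_
  set κ := ε / (4 * (C + 1)) with hκ
  have hκ0 : 0 < κ := by positivity
  have hκC : κ * C ≤ ε / 4 := by
    rw [hκ, div_mul_eq_mul_div, div_le_iff₀ (by positivity)]
    nlinarith
  have hlit := (hasFDerivAt_iff_isLittleO.1 hd).def hκ0
  obtain ⟨d, hd0, hdd⟩ := Metric.eventually_nhds_iff.1 (hlit.and hmax)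
  -- choice of the time
  obtain ⟨t, ht0, ht1, htK, htd, htG, htt⟩ : ∃ t : ℝ, 0 < t ∧ t ≤ 1 ∧ K * t ≤ 1 / 2 ∧ C * t < d ∧
      ‖G‖ * (K * C) * t ≤ ε / 4 ∧ t ≤ ε / 4 := by
    have hev : ∀ᶠ t : ℝ in 𝓝[>] 0, 0 < t ∧ t ≤ 1 ∧ K * t ≤ 1 / 2 ∧ C * t < d ∧
      ‖G‖ * (K * C) * t ≤ ε / 4 ∧ t ≤ ε / 4 := by
      have key : ∀ c e : ℝ, 0 < e → ∀ᶠ t : ℝ in 𝓝[>] 0, c * t < e := by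
        intro c e he
        have : Tendsto (fun t : ℝ => c * t) (𝓝 0) (𝓝 (c * 0)) :=
          (continuous_const.mul continuous_id).tendsto 0
        rw [mul_zero] at this
        exact (this.eventually (gt_mem_nhds he)).filter_mono nhdsWithin_le_nhds
      filter_upwards [self_mem_nhdsWithin, key 1 1 one_pos, key K (1 / 2) (by norm_num),
        key C d hd0, key (‖G‖ * (K * C)) (ε / 4) (by positivity), key 1 (ε / 4) (by positivity)]
        with t h0 h1 h2 h3 h4 h5
      exact ⟨h0, by linarith, h2.le, h3, h4.le, by linarith⟩
    exact hev.exists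
  -- choice of the fraction
  obtain ⟨θ, hθ, hθ2⟩ : ∃ θ ∈ Set.Ico (0:ℝ) 1, (1 - θ) * h x ≤ t * t := by
    refine ⟨max 0 (1 - t * t / h x), ⟨le_max_left _ _, max_lt one_pos ?_⟩, ?_⟩
    · have : 0 < t * t / h x := by positivity
      linarith
    · have h1 : 1 - max 0 (1 - t * t / h x) ≤ t * t / h x := by
        linarith [le_max_right 0 (1 - t * t / h x)]
      calc _ ≤ t * t / h x * h x := by gcongr
        _ = _ := by field_simp
  obtain ⟨u, ξ, hξ, hge⟩ := hB θ hθ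
  have hξt : PTraj F U x t u ξ := ⟨hξ.1, hξ.2.1, hξ.2.2.1, fun s hs =>
    hξ.2.2.2 s ⟨hs.1, hs.2.trans ht1⟩⟩
  have hgr : ∀ s ∈ Icc 0 t, ‖ξ s - x‖ ≤ C * s := by
    intro s hs
    refine (ptraj_growth hF hM htK hξt s hs).trans ?_
    have := hs.1
    gcongr
    exact le_abs_self _
  have htt' : t ∈ Icc 0 t := ⟨ht0.le, le_rfl⟩
  have hgt := hgr t htt'
  obtain ⟨h1, h2⟩ := hdd (y := ξ t) (by rw [dist_eq_norm]; linarith)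
  have h3 : φ (ξ t) - φ x ≤ G (ξ t - x) + ε / 4 * t := by
    have e1 := (le_abs_self _).trans h1
    have e2 : κ * ‖ξ t - x‖ ≤ κ * (C * t) := by gcongr
    have e3 : κ * C * t ≤ ε / 4 * t := by gcongr
    linarith
  have h4 : G (ξ t - x) ≤ (S + ε / 4) * t := by
    have hInt := ptraj_intble hF.continuous hU hξ.1 hξ.2.1 hξ.2.2.1 0 t
    have e1 : ξ t - x = ∫ r in (0:ℝ)..t, F (ξ r, u r) := by
      conv_lhs => rw [hξt.2.2.2 t htt']
      simp
    rw [e1, ← G.intervalIntegral_comp_comm hInt]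
    have e2 : ∫ r in (0:ℝ)..t, G (F (ξ r, u r)) ≤ ∫ r in (0:ℝ)..t, (S + ε / 4) := by
      refine intervalIntegral.integral_mono_on ht0.le ?_ intervalIntegrable_const ?_
      · exact (G.integrable_comp hInt.1 |> fun a => ⟨a, G.integrable_comp hInt.2⟩)
      · intro r hr
        have g1 := hS (u r) (hξ.2.1 r)
        have g2 : ‖F (ξ r, u r) - F (x, u r)‖ ≤ K * ‖ξ r - x‖ := by
          have := hF.dist_le_mul (ξ r, u r) (x, u r)
          simpa [dist_eq_norm, Prod.norm_def] using this
        have g3 : ‖ξ r - x‖ ≤ C * t := (hgr r hr).trans (by gcongr; exact hr.2)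
        have g4 : G (F (ξ r, u r) - F (x, u r)) ≤ ‖G‖ * (K * (C * t)) :=
          ((le_abs_self _).trans (G.le_opNorm _)).trans (by
            have : K * ‖ξ r - x‖ ≤ K * (C * t) := by gcongr
            gcongr
            linarith)
        rw [map_sub] at g4
        linarith
    refine e2.trans ?_
    simp
    linarith
  -- lower bound
  have hθx : 0 ≤ θ * h x := mul_nonneg hθ.1 hx.le
  obtain ⟨hb0, hb⟩ := hβ (θ * h x) hθx
  have hmono := hα.2.1.monotoneOn
  have h5 : θ * h x - t * α (h x) ≤ β (θ * h x) t := by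
    obtain ⟨c, hc, hc2⟩ := exists_hasDerivAt_eq_slope (β (θ * h x)) (fun s => -α (β (θ * h x) s))
      ht0 (fun s hs => ((hb s hs.1).2.2.continuousWithinAt).mono fun y hy => hy.1)
      (fun s hs => (hb s hs.1.le).2.2.hasDerivAt (Ici_mem_nhds hs.1))
    rw [hb0, sub_zero, eq_div_iff ht0.ne'] at hc2
    have hbc := hb c hc.1.le
    have : α (β (θ * h x) c) ≤ α (h x) := hmono (mem_Ici.2 hbc.1) (mem_Ici.2 hx.le)
      (hbc.2.1.trans (by nlinarith [hθ.2]))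
    nlinarith
  have h6 := hge t ht0.le
  have h7 : h (ξ t) - φ (ξ t) ≤ h x - φ x := h2
  have h8 : -α (h x) * t ≤ (S + ε) * t := by nlinarith
  exact le_of_mul_le_mul_right h8 ht0

/-- A continuous nonnegative `h` is a viscosity CBF w.r.t. `α` iff it provides
the Barrier Guarantee w.r.t. `α`. -/
theorem isViscosityCBF_iff_barrierGuarantee_nonneg {n m : ℕ}
    (f : (Fin n → ℝ) → (Fin m → ℝ) → Fin n → ℝ) (U : Set (Fin m → ℝ))
    (hU : IsCompact U) (hUne : U.Nonempty)
    (hf : ∃ K : NNReal, LipschitzOnWith K (Function.uncurry f) (Set.univ ×ˢ U))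
    (α : ℝ → ℝ) (hα : IsLocallyLipschitzClassK α)
    (β : ℝ → ℝ → ℝ) (hβ : IsBetaFor α β)
    (h : (Fin n → ℝ) → ℝ) (hh : Continuous h) (hh0 : ∀ x, 0 ≤ h x) :
    IsViscosityCBF f U α h ↔ BarrierGuarantee f U β h := by
  classical
  obtain ⟨K, hK⟩ := hf
  obtain ⟨F, hF, hfF⟩ := hK.extend_pi
  have hFf : ∀ y, ∀ u ∈ U, f y u = F (y, u) := fun y u hu => hfF (x := (y, u)) ⟨mem_univ y, hu⟩
  set K' := (K : NNReal) with hK'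
  obtain ⟨M₁, hM₁⟩ : ∃ M₁, ∀ u ∈ U, ‖F (0, u)‖ ≤ M₁ := by
    have hc : IsCompact ((fun u => F (0, u)) '' U) :=
      hU.image (hF.continuous.comp (continuous_const.prodMk continuous_id))
    obtain ⟨C, hC⟩ := hc.isBounded.exists_norm_le
    exact ⟨C, fun u hu => hC _ ⟨u, hu, rfl⟩⟩
  obtain ⟨u₀, hu₀⟩ := hUne
  have hM₁0 : 0 ≤ M₁ := (norm_nonneg _).trans (hM₁ u₀ hu₀)
  set M := M₁ + K' with hMdef
  have hM0 : 0 ≤ M := add_nonneg hM₁0 K'.2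
  have hM : ∀ y, ∀ u ∈ U, ‖F (y, u)‖ ≤ M * (1 + ‖y‖) := by
    intro y u hu
    have h1 : ‖F (y, u) - F (0, u)‖ ≤ K' * ‖y‖ := by
      have := hF.dist_le_mul (y, u) (0, u)
      simpa [dist_eq_norm, Prod.norm_def] using this
    have h2 : ‖F (y, u)‖ ≤ ‖F (0, u)‖ + ‖F (y, u) - F (0, u)‖ := by
      have := norm_add_le (F (0, u)) (F (y, u) - F (0, u))
      simpa using this
    have h3 := hM₁ u hu
    have h4 : 0 ≤ M₁ * ‖y‖ := by positivity
    have h5 : (0:ℝ) ≤ K' := K'.2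
    rw [hMdef]
    nlinarith
  constructor
  · rintro ⟨_, hvis⟩ θ hθ x hx
    set T₀ : ℝ := 1 / (2 * (K' + M + 1)) with hT₀def
    have hKM : (0:ℝ) < K' + M + 1 := by have : (0:ℝ) ≤ K' := K'.2; linarith
    have hT₀ : 0 < T₀ := by positivity
    have hTe : T₀ * (2 * (K' + M + 1)) = 1 := by rw [hT₀def]; field_simp
    have hKT : (K':ℝ) * T₀ ≤ 1 / 2 := by nlinarith [mul_nonneg hM0 hT₀.le]
    have hMT : 2 * M * T₀ ≤ 1 := by nlinarith [mul_nonneg K'.2 hT₀.le]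
    have hv : ∀ x, 0 < h x → ∀ φ : (Fin n → ℝ) → ℝ, ContDiff ℝ 1 φ →
        IsLocalMax (fun y => h y - φ y) x → ∃ u ∈ U, -α (h x) ≤ fderiv ℝ φ x (F (x, u)) := by
      intro x hx φ hφ hmax
      have h1 := hvis x hx φ hφ hmax
      have h2 : (fun u => fderiv ℝ φ x (f x u)) '' U = (fun u => fderiv ℝ φ x (F (x, u))) '' U :=
        image_congr fun u hu => by rw [hFf x u hu]
      rw [h2] at h1
      have hcomp : IsCompact ((fun u => fderiv ℝ φ x (F (x, u))) '' U) :=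
        hU.image ((fderiv ℝ φ x).continuous.comp
          (hF.continuous.comp (continuous_const.prodMk continuous_id)))
      obtain ⟨u, hu, he⟩ := hcomp.sSup_mem (Nonempty.image _ ⟨u₀, hu₀⟩)
      exact ⟨u, hu, by rw [← he] at h1; exact h1⟩
    set r := θ * h x with hr
    have hr0 : 0 ≤ r := mul_nonneg hθ.1 hx.le
    obtain ⟨hb0, hb⟩ := hβ r hr0
    obtain ⟨u, ξ, hξ, hge⟩ := ptraj_infinite hF.continuous hU hT₀ (β r) h (by
      intro t₀ ht₀ y hy
      refine horizon hF hU ⟨u₀, hu₀⟩ hM0 hM hT₀ hKT hMT hα hh hh0 hv (b := fun s => β r (t₀ + s))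
        (r := r) ?_ y (by simpa using hy)
      intro t ht
      have h1 := hb (t₀ + t) (by linarith)
      refine ⟨h1.1, h1.2.1, ?_⟩
      have h2 := h1.2.2.scomp t (h := fun s => t₀ + s) (s := Ici 0) (h' := 1)
        (((hasDerivAt_id t).const_add t₀).hasDerivWithinAt)
        (fun s hs => mem_Ici.2 (add_nonneg ht₀ hs))
      rw [one_smul] at h2
      exact h2) x (by rw [hb0, hr]; nlinarith [hθ.2])
    have hh1 := hξ 0
    refine ⟨u, ξ, ⟨hh1.1, fun t _ => hh1.2.1 t⟩, ⟨hh1.2.2.1, fun t ht => ?_⟩,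
      fun t ht => (hge t ht).le⟩
    rw [(hξ t).2.2.2 t ⟨ht, le_rfl⟩]
    congr 1
    refine intervalIntegral.integral_congr fun s _ => ?_
    exact (hFf _ _ (hh1.2.1 s)).symm
  · intro hB
    refine ⟨hh, fun x hx φ hφ hmax => ?_⟩
    have hcomp : IsCompact ((fun u => fderiv ℝ φ x (F (x, u))) '' U) :=
      hU.image ((fderiv ℝ φ x).continuous.comp
        (hF.continuous.comp (continuous_const.prodMk continuous_id)))
    have h2 : (fun u => fderiv ℝ φ x (f x u)) '' U = (fun u => fderiv ℝ φ x (F (x, u))) '' U :=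
      image_congr fun u hu => by rw [hFf x u hu]
    rw [h2]
    refine visc_of_barrier hF hU hM hα.1 hβ x hx ?_ φ hφ hmax _
      (fun u hu => le_csSup hcomp.bddAbove ⟨u, hu, rfl⟩)
    intro θ hθ
    obtain ⟨u, ξ, hu, hξ, hge⟩ := hB θ hθ x hx
    refine ⟨fun t => if 0 ≤ t then u t else u₀, ξ, ⟨Measurable.ite measurableSet_Ici hu.1
      measurable_const, fun t => ?_, hξ.1, fun t ht => ?_⟩, hge⟩
    · dsimp only
      split_ifs with h0
      · exact hu.2 t h0
      · exact hu₀
    · rw [hξ.2 t ht.1]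
      congr 1
      refine intervalIntegral.integral_congr fun s hs => ?_
      rw [uIcc_of_le ht.1] at hs
      simp only [hs.1, if_true]
      exact hFf _ _ (hu.2 s hs.1)
end
end

section
/- Let α be a locally Lipschitz class K function and h : ℝ^n → ℝ be continuous (not necessarily non-negative). Then h is a viscosity CBF with respect to α if and only if h provides the Barrier Guarantee with respect to α. -/
open Set Filter MeasureTheory Topology

noncomputable section

section Helpers

variable {n m : ℕ} {f : (Fin n → ℝ) → (Fin m → ℝ) → Fin n → ℝ} {U : Set (Fin m → ℝ)}

lemma vc_intervalIntegrable (hU : IsCompact U)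
    (hc : ContinuousOn (Function.uncurry f) (Set.univ ×ˢ U))
    {u : ℝ → Fin m → ℝ} (hu : IsControl U u) {ξ : ℝ → Fin n → ℝ} (hξ : Continuous ξ)
    {a b : ℝ} (ha : 0 ≤ a) (hb : 0 ≤ b) :
    IntervalIntegrable (fun s => f (ξ s) (u s)) volume a b := by
  suffices H : ∀ a b : ℝ, 0 ≤ a → IntegrableOn (fun s => f (ξ s) (u s)) (Ioc a b) by
    exact ⟨H a b ha, H b a hb⟩
  intro a b ha
  have hmeas : AEStronglyMeasurable (fun s => f (ξ s) (u s)) (volume.restrict (Ioc a b)) := by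
    have h0 := hu.2 0 le_rfl
    have hu' : ∀ t, (if 0 ≤ t then u t else u 0) ∈ U := by
      intro t
      split_ifs with ht
      · exact hu.2 t ht
      · exact h0
    have hmu : Measurable (fun t : ℝ => (if 0 ≤ t then u t else u 0)) :=
      Measurable.ite measurableSet_Ici hu.1 measurable_const
    have hF : Continuous (fun p : (Set.univ ×ˢ U : Set ((Fin n → ℝ) × (Fin m → ℝ))) =>
        Function.uncurry f p.1) := continuousOn_iff_continuous_domRestrict.1 hc
    have hG : Measurable (fun t : ℝ => (⟨(ξ t, if 0 ≤ t then u t else u 0),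
        ⟨trivial, hu' t⟩⟩ : (Set.univ ×ˢ U : Set ((Fin n → ℝ) × (Fin m → ℝ))))) :=
      (hξ.measurable.prodMk hmu).subtype_mk
    have hm := hF.measurable.comp hG
    refine hm.aestronglyMeasurable.congr ?_
    filter_upwards [ae_restrict_mem measurableSet_Ioc] with t ht
    have : 0 ≤ t := ha.trans ht.1.le
    simp [Function.comp, this]
  have hcomp : IsCompact ((ξ '' Icc a b) ×ˢ U) := (isCompact_Icc.image hξ).prod hU
  obtain ⟨C, hC⟩ := hcomp.exists_bound_of_continuousOn
    (hc.mono (Set.prod_mono (Set.subset_univ _) le_rfl))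
  refine Integrable.of_bound hmeas C ?_
  filter_upwards [ae_restrict_mem measurableSet_Ioc] with t ht
  exact hC (ξ t, u t) ⟨⟨t, ⟨ht.1.le, ht.2⟩, rfl⟩, hu.2 t (ha.trans ht.1.le)⟩

/-- short time a priori bound -/
lemma vc_stay {K : ℝ} (hK0 : 0 ≤ K)
    (hK : ∀ x y, ∀ u ∈ U, ‖f x u - f y u‖ ≤ K * ‖x - y‖)
    {u : ℝ → Fin m → ℝ} {ξ : ℝ → Fin n → ℝ} {x : Fin n → ℝ} {T C : ℝ}
    (hu : ∀ t, 0 ≤ t → u t ∈ U)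
    (hξ : ContinuousOn ξ (Icc 0 T)) (hT : T * K ≤ 1 / 2)
    (hC : ∀ v ∈ U, ‖f x v‖ ≤ C)
    (h : ∀ t ∈ Icc 0 T, ξ t = x + ∫ s in (0 : ℝ)..t, f (ξ s) (u s)) :
    ∀ t ∈ Icc 0 T, ‖ξ t - x‖ ≤ 2 * C * t := by
  intro t ht
  have hC0 : 0 ≤ C := (norm_nonneg _).trans (hC _ (hu 0 le_rfl))
  obtain ⟨s, hs, hmax⟩ := isCompact_Icc.exists_isMaxOn (s := Icc 0 t) ⟨0, by simp [ht.1]⟩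
    (f := fun s => ‖ξ s - x‖)
    (((hξ.mono (Icc_subset_Icc_right ht.2)).sub continuousOn_const).norm)
  have hmax' : ∀ r ∈ Icc 0 t, ‖ξ r - x‖ ≤ ‖ξ s - x‖ := fun r hr => hmax hr
  have key : ‖ξ s - x‖ ≤ (C + K * ‖ξ s - x‖) * s := by
    have e := h s ⟨hs.1, hs.2.trans ht.2⟩
    have e2 : ξ s - x = ∫ r in (0 : ℝ)..s, f (ξ r) (u r) := by
      nth_rewrite 1 [e]; simp
    have := intervalIntegral.norm_integral_le_of_norm_le_const
      (f := fun r => f (ξ r) (u r)) (a := 0) (b := s) (C := C + K * ‖ξ s - x‖) (by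
        intro r hr
        rw [uIoc_of_le hs.1] at hr
        have hur := hu r hr.1.le
        calc ‖f (ξ r) (u r)‖ = ‖f x (u r) + (f (ξ r) (u r) - f x (u r))‖ := by congr 1; abel
          _ ≤ ‖f x (u r)‖ + ‖f (ξ r) (u r) - f x (u r)‖ := norm_add_le _ _
          _ ≤ C + K * ‖ξ r - x‖ := add_le_add (hC _ hur) (hK _ _ _ hur)
          _ ≤ C + K * ‖ξ s - x‖ := by
            gcongr
            exact hmax' r ⟨hr.1.le, hr.2.trans hs.2⟩)
    rw [← e2, sub_zero, abs_of_nonneg hs.1] at this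
    exact this
  have h1 := hmax' t ⟨ht.1, le_rfl⟩
  set M := ‖ξ s - x‖
  have hM : 0 ≤ M := norm_nonneg _
  have h2 : s * K ≤ 1 / 2 := le_trans (mul_le_mul_of_nonneg_right (hs.2.trans ht.2) hK0) hT
  have h3 : (s * K) * M ≤ 1 / 2 * M := mul_le_mul_of_nonneg_right h2 hM
  have h4 : C * s ≤ C * t := mul_le_mul_of_nonneg_left hs.2 hC0
  nlinarith

/-- existence of short-time solutions for constant controls -/
lemma vc_exists {K : ℝ} (hK0 : 0 ≤ K)
    (hK : ∀ x y, ∀ u ∈ U, ‖f x u - f y u‖ ≤ K * ‖x - y‖)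
    {T : ℝ} (hT0 : 0 ≤ T) (hT : T * K ≤ 1 / 2) (x : Fin n → ℝ) {v : Fin m → ℝ} (hv : v ∈ U) :
    ∃ ζ : ℝ → Fin n → ℝ, Continuous ζ ∧ ζ 0 = x ∧
      ∀ t ∈ Icc 0 T, ζ t = x + ∫ s in (0 : ℝ)..t, f (ζ s) v := by
  have hl : LipschitzWith K.toNNReal (fun y => f y v) := by
    refine LipschitzWith.of_dist_le_mul fun y z => ?_
    rw [dist_eq_norm, dist_eq_norm, Real.coe_toNNReal K hK0]
    exact hK y z v hv
  set a : ℝ := 2 * T * ‖f x v‖ with ha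
  have ha0 : 0 ≤ a := by positivity
  have hL0 : 0 ≤ ‖f x v‖ + K * a := by positivity
  have hpl : IsPicardLindelof (fun _ y => f y v) (tmin := 0) (tmax := T) ⟨0, by simp [hT0]⟩ x
      a.toNNReal 0 (‖f x v‖ + K * a).toNNReal K.toNNReal := by
    refine IsPicardLindelof.of_time_independent ?_ hl.lipschitzOnWith ?_
    · intro y hy
      rw [Real.coe_toNNReal _ ha0, Metric.mem_closedBall, dist_eq_norm] at hy
      rw [Real.coe_toNNReal _ hL0]
      calc ‖f y v‖ = ‖f x v + (f y v - f x v)‖ := by congr 1; abel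
          _ ≤ ‖f x v‖ + ‖f y v - f x v‖ := norm_add_le _ _
          _ ≤ ‖f x v‖ + K * ‖y - x‖ := by gcongr; exact hK _ _ _ hv
          _ ≤ _ := by gcongr
    · rw [Real.coe_toNNReal _ ha0, Real.coe_toNNReal _ hL0]
      simp only [sub_zero, sub_self, NNReal.coe_zero]
      rw [max_eq_left hT0]
      have : (T * K) * a ≤ 1 / 2 * a := mul_le_mul_of_nonneg_right hT ha0
      nlinarith
  obtain ⟨ζ, h0, hζ⟩ := hpl.exists_eq_forall_mem_Icc_hasDerivWithinAt₀
  have hcont : ContinuousOn ζ (Icc 0 T) := fun t ht => (hζ t ht).continuousWithinAt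
  simp only at h0
  have hce : Continuous (IccExtend hT0 ((Icc 0 T).domRestrict ζ)) :=
    (continuousOn_iff_continuous_domRestrict.1 hcont).Icc_extend'
  have heq : ∀ t ∈ Icc 0 T, IccExtend hT0 ((Icc 0 T).domRestrict ζ) t = ζ t := by
    intro t ht
    rw [IccExtend_of_mem _ _ ht]; rfl
  refine ⟨_, hce, by rw [heq 0 (by simp [hT0]), h0], fun t ht => ?_⟩
  have := intervalIntegral.integral_eq_sub_of_hasDerivAt_of_le (a := 0) (b := t) (f := ζ)
    (f' := fun s => f (ζ s) v) ht.1 (hcont.mono (Icc_subset_Icc_right ht.2)) (fun s hs =>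
      (hζ s ⟨hs.1.le, hs.2.le.trans ht.2⟩).hasDerivAt (Icc_mem_nhds hs.1 (hs.2.trans_le ht.2)))
      (ContinuousOn.intervalIntegrable_of_Icc ht.1
        (hl.continuous.comp_continuousOn (hcont.mono (Icc_subset_Icc_right ht.2))))
  rw [heq t ht]
  have h2 : ∫ s in (0 : ℝ)..t, f (IccExtend hT0 ((Icc 0 T).domRestrict ζ) s) v
      = ∫ s in (0 : ℝ)..t, f (ζ s) v := by
    refine intervalIntegral.integral_congr fun s hs => ?_
    rw [uIcc_of_le ht.1] at hs
    rw [heq s ⟨hs.1, hs.2.trans ht.2⟩]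
  rw [h2, this, h0]
  abel

/-- concatenation -/
lemma vc_concat (hU : IsCompact U)
    (hc : ContinuousOn (Function.uncurry f) (Set.univ ×ˢ U))
    {u : ℝ → Fin m → ℝ} (hu : IsControl U u) {ξ : ℝ → Fin n → ℝ} (hξ : Continuous ξ)
    {x : Fin n → ℝ} {b δ : ℝ} (hb : 0 ≤ b)
    (h : ∀ t ∈ Icc 0 b, ξ t = x + ∫ s in (0 : ℝ)..t, f (ξ s) (u s))
    {v : Fin m → ℝ} (hv : v ∈ U) {ζ : ℝ → Fin n → ℝ} (hζ : Continuous ζ) (hζ0 : ζ 0 = ξ b)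
    (h' : ∀ t ∈ Icc 0 δ, ζ t = ξ b + ∫ s in (0 : ℝ)..t, f (ζ s) v) :
    IsControl U (fun t => if t ≤ b then u t else v) ∧
    Continuous (fun t => if t ≤ b then ξ t else ζ (t - b)) ∧
    ∀ t ∈ Icc 0 (b + δ), (if t ≤ b then ξ t else ζ (t - b)) = x + ∫ s in (0 : ℝ)..t,
      f (if s ≤ b then ξ s else ζ (s - b)) (if s ≤ b then u s else v) := by
  have H1 : IsControl U (fun t => if t ≤ b then u t else v) := by
    refine ⟨Measurable.ite measurableSet_Iic hu.1 measurable_const, fun t ht => ?_⟩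
    simp only
    split_ifs
    · exact hu.2 t ht
    · exact hv
  have H2 : Continuous (fun t => if t ≤ b then ξ t else ζ (t - b)) := by
    refine Continuous.if_le hξ (hζ.comp (continuous_id.sub continuous_const)) continuous_id
      continuous_const ?_
    rintro t rfl
    simp [hζ0]
  refine ⟨H1, H2, fun t ht => ?_⟩
  have E1 : ∀ r ∈ Icc 0 b, ∫ s in (0 : ℝ)..r,
      f (if s ≤ b then ξ s else ζ (s - b)) (if s ≤ b then u s else v)
      = ∫ s in (0 : ℝ)..r, f (ξ s) (u s) := by
    intro r hr
    refine intervalIntegral.integral_congr fun s hs => ?_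
    rw [uIcc_of_le hr.1] at hs
    simp [hs.2.trans hr.2]
  by_cases htb : t ≤ b
  · rw [if_pos htb, E1 t ⟨ht.1, htb⟩]
    exact h t ⟨ht.1, htb⟩
  · push Not at htb
    rw [if_neg (not_le.2 htb)]
    rw [← intervalIntegral.integral_add_adjacent_intervals
      (vc_intervalIntegrable hU hc H1 H2 le_rfl hb) (vc_intervalIntegrable hU hc H1 H2 hb ht.1),
      E1 b ⟨hb, le_rfl⟩, ← add_assoc, ← h b ⟨hb, le_rfl⟩,
      h' (t - b) ⟨by linarith, by linarith [ht.2]⟩]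
    congr 1
    have : ∫ s in (0 : ℝ)..(t - b), f (ζ s) v = ∫ s in b..t, f (ζ (s - b)) v := by
      rw [intervalIntegral.integral_comp_sub_right (fun s => f (ζ s) v) b, sub_self]
    rw [this]
    refine intervalIntegral.integral_congr_ae ?_
    refine Filter.Eventually.of_forall fun s hs => ?_
    rw [uIoc_of_le htb.le] at hs
    simp [not_le.2 hs.1]

lemma vc_dot (a b : Fin n → ℝ) : |∑ i, a i * b i| ≤ n * (‖a‖ * ‖b‖) := by
  calc |∑ i, a i * b i| ≤ ∑ i, |a i * b i| := Finset.abs_sum_le_sum_abs _ _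
    _ ≤ ∑ _i : Fin n, ‖a‖ * ‖b‖ := by
      refine Finset.sum_le_sum fun i _ => ?_
      rw [abs_mul]
      exact mul_le_mul (norm_le_pi_norm a i) (norm_le_pi_norm b i) (abs_nonneg _) (norm_nonneg _)
    _ = n * (‖a‖ * ‖b‖) := by simp

lemma vc_norm_sq_le (a : Fin n → ℝ) : ‖a‖ ^ 2 ≤ ∑ i, a i ^ 2 := by
  have h0 : 0 ≤ ∑ i, a i ^ 2 := Finset.sum_nonneg fun i _ => sq_nonneg _
  have : ‖a‖ ≤ √(∑ i, a i ^ 2) := by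
    refine (pi_norm_le_iff_of_nonneg (Real.sqrt_nonneg _)).2 fun i => ?_
    refine Real.le_sqrt_of_sq_le ?_
    rw [Real.norm_eq_abs, sq_abs]
    exact Finset.single_le_sum (f := fun i => a i ^ 2) (fun i _ => sq_nonneg _) (Finset.mem_univ i)
  calc ‖a‖ ^ 2 ≤ (√(∑ i, a i ^ 2)) ^ 2 := by gcongr
    _ = _ := Real.sq_sqrt h0

lemma vc_fderiv (κ : ℝ) (x y w : Fin n → ℝ) :
    fderiv ℝ (fun z : Fin n → ℝ => κ * ∑ i, (z i - x i) ^ 2) y w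
      = 2 * κ * ∑ i, (y i - x i) * w i := by
  have h1 : ∀ i ∈ (Finset.univ : Finset (Fin n)), HasFDerivAt
      (fun z : Fin n → ℝ => (z i - x i) ^ 2)
      ((2 • (y i - x i) ^ (2 - 1)) • (ContinuousLinearMap.proj i : (Fin n → ℝ) →L[ℝ] ℝ)) y := by
    intro i _
    exact ((hasFDerivAt_apply (𝕜 := ℝ) i y).sub_const (x i)).pow 2
  have h2 := (HasFDerivAt.fun_sum h1).const_mul κ
  rw [h2.fderiv]
  simp only [smul_apply, sum_apply,
    ContinuousLinearMap.proj_apply, smul_eq_mul, Finset.mul_sum]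
  refine Finset.sum_congr rfl fun i _ => ?_
  simp
  ring

lemma vc_step  {K : ℝ} (hU : IsCompact U) (hUne : U.Nonempty)
    (hc : ContinuousOn (Function.uncurry f) (Set.univ ×ˢ U)) (hK0 : 0 ≤ K)
    (hK : ∀ x y, ∀ u ∈ U, ‖f x u - f y u‖ ≤ K * ‖x - y‖)
    {α : ℝ → ℝ} (hα : IsClassK α) {h : (Fin n → ℝ) → ℝ} (hV : IsViscosityCBF f U α h)
    (x₀ : Fin n → ℝ) {ρ : ℝ} {C : ℝ} (hC0 : 0 ≤ C)
    (hC : ∀ x ∈ Metric.closedBall x₀ ρ, ∀ v ∈ U, ‖f x v‖ ≤ C) {η : ℝ} (hη : 0 < η) :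
    ∃ g : (Fin n → ℝ) → ℝ, ∃ δ > 0, δ * K ≤ 1 / 2 ∧
      (∀ x ∈ Metric.closedBall x₀ ρ, h x ≤ g x ∧ g x ≤ h x + η) ∧
      ∀ x ∈ Metric.closedBall x₀ ρ, 0 < g x → ∃ v ∈ U, ∀ ζ : ℝ → Fin n → ℝ, Continuous ζ →
        ∀ s ∈ Icc 0 δ, (∀ r ∈ Icc 0 s, ζ r = x + ∫ w in (0 : ℝ)..r, f (ζ w) v) →
          g x - s * (α (g x + η) + η) ≤ g (ζ s) := by
  obtain ⟨hh, hV⟩ := hV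
  set S := Metric.closedBall x₀ (ρ + 1) with hS
  have hSc : IsCompact S := isCompact_closedBall _ _
  obtain ⟨M, hM⟩ := hSc.exists_bound_of_continuousOn hh.continuousOn
  set η₁ := η / (4 * n * K + 1) with hη₁
  have hden : 1 ≤ 4 * n * K + 1 := by
    have : 0 ≤ 4 * n * K := by positivity
    linarith
  have hη₁0 : 0 < η₁ := by positivity
  have hη₁1 : η₁ ≤ η := div_le_self hη.le hden
  have hη₁2 : 4 * n * K * η₁ ≤ η := by
    have : (4 * n * K + 1) * η₁ = η := by rw [hη₁]; field_simp
    linarith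
  obtain ⟨r₀, hr₀, hr₀'⟩ := Metric.uniformContinuousOn_iff_le.1
    (hSc.uniformContinuousOn_of_continuous hh.continuousOn) η₁ hη₁0
  set r := min r₀ (1 / 2) with hr
  have hr0 : 0 < r := by positivity
  set κ := (2 * |M| + 1) / r ^ 2 with hκ
  have hκ0 : 0 < κ := by positivity
  have hκr : κ * r ^ 2 = 2 * |M| + 1 := by rw [hκ]; field_simp
  set F : (Fin n → ℝ) → (Fin n → ℝ) → ℝ := fun x y => h y - κ * ∑ i, (y i - x i) ^ 2 with hF
  have hFc : ∀ x, Continuous (F x) := fun x => by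
    simp only [hF]; fun_prop
  set g : (Fin n → ℝ) → ℝ := fun x => sSup (F x '' S) with hg
  have hFg : ∀ x, ∀ y ∈ S, F x y ≤ g x := fun x y hy =>
    le_csSup (hSc.image (hFc x)).bddAbove (mem_image_of_mem _ hy)
  set B := 4 * κ * n * K * C + 4 * κ * n * C ^ 2 with hB
  have hB0 : 0 ≤ B := by positivity
  set δ := min (1 / (2 * (K + 1))) (η / (2 * (B + 1))) with hδ
  have hδ0 : 0 < δ := by positivity
  have hδK : δ * K ≤ 1 / 2 := by
    have h1 : δ * K ≤ 1 / (2 * (K + 1)) * K := by gcongr; exact min_le_left _ _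
    have h2 : 1 / (2 * (K + 1)) * K ≤ 1 / 2 := by
      rw [div_mul_eq_mul_div, div_le_div_iff₀ (by positivity) (by norm_num)]; linarith
    linarith
  have hδB : δ * B ≤ η / 2 := by
    have h1 : δ * B ≤ η / (2 * (B + 1)) * B := by gcongr; exact min_le_right _ _
    have h2 : η / (2 * (B + 1)) * B ≤ η / 2 := by
      rw [div_mul_eq_mul_div, div_le_div_iff₀ (by positivity) (by norm_num)]
      nlinarith
    linarith
  -- maximizers
  have hmaxi : ∀ x ∈ Metric.closedBall x₀ ρ, ∃ y ∈ S, IsMaxOn (F x) S y ∧ g x = F x y ∧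
      ‖y - x‖ ≤ 1 / 2 ∧ κ * ∑ i, (y i - x i) ^ 2 ≤ η₁ ∧ h x ≤ g x ∧ g x ≤ h x + η₁ := by
    intro x hx
    have hxS : x ∈ S := Metric.closedBall_subset_closedBall (by linarith) hx
    obtain ⟨y, hy, hmax⟩ := hSc.exists_isMaxOn ⟨x, hxS⟩ (hFc x).continuousOn
    have hgy : g x = F x y := by
      refine le_antisymm (csSup_le ⟨_, mem_image_of_mem _ hxS⟩ ?_) (hFg x y hy)
      rintro _ ⟨z, hz, rfl⟩
      exact hmax hz
    have hxg : h x ≤ g x := by simpa [hF] using hFg x x hxS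
    have hQ0 : 0 ≤ ∑ i, (y i - x i) ^ 2 := Finset.sum_nonneg fun i _ => sq_nonneg _
    have hQn : ‖y - x‖ ^ 2 ≤ ∑ i, (y i - x i) ^ 2 := vc_norm_sq_le (y - x)
    have hFy : F x y = h y - κ * ∑ i, (y i - x i) ^ 2 := rfl
    have hyr : ‖y - x‖ ≤ r := by
      by_contra hcon
      push Not at hcon
      have h1 : r ^ 2 < ‖y - x‖ ^ 2 := by gcongr
      have h2 : κ * r ^ 2 < κ * ∑ i, (y i - x i) ^ 2 := by gcongr; linarith
      have h3 := hM y hy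
      have h4 := hM x hxS
      rw [Real.norm_eq_abs] at h3 h4
      have := le_abs_self (h y)
      have := neg_abs_le (h x)
      have := le_abs_self M
      linarith
    have hosc : h y - h x ≤ η₁ := by
      have := hr₀' y hy x hxS (by rw [dist_eq_norm]; exact hyr.trans (min_le_left _ _))
      rw [Real.dist_eq] at this
      exact (le_abs_self _).trans this
    have : 0 ≤ κ * ∑ i, (y i - x i) ^ 2 := by positivity
    exact ⟨y, hy, hmax, hgy, hyr.trans (min_le_right _ _), by linarith, hxg, by linarith⟩
  refine ⟨g, δ, hδ0, hδK, ?_, ?_⟩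
  · intro x hx
    obtain ⟨y, -, -, -, -, -, h1, h2⟩ := hmaxi x hx
    exact ⟨h1, by linarith⟩
  intro x hx hgx
  obtain ⟨y, hy, hmax, hgy, hyr, hQ, -, -⟩ := hmaxi x hx
  have hFy : F x y = h y - κ * ∑ i, (y i - x i) ^ 2 := rfl
  have hQ0 : 0 ≤ κ * ∑ i, (y i - x i) ^ 2 :=
    mul_nonneg hκ0.le (Finset.sum_nonneg fun i _ => sq_nonneg _)
  have hhy : 0 < h y := by linarith
  have hSy : S ∈ 𝓝 y := by
    refine Metric.closedBall_mem_nhds_of_mem ?_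
    rw [Metric.mem_ball]
    rw [Metric.mem_closedBall] at hx
    have := dist_triangle y x x₀
    rw [dist_eq_norm y x] at this
    linarith
  -- the test function
  have hvis := hV y hhy (fun z => κ * ∑ i, (z i - x i) ^ 2) (by fun_prop) (by
    filter_upwards [hSy] with z hz
    exact hmax hz)
  have hfd := vc_fderiv κ x y
  have hcy : ContinuousOn (fun v => f y v) U :=
    hc.comp (f := fun v => (y, v)) (by fun_prop) (fun v hv => ⟨trivial, hv⟩)
  have hcomp : IsCompact ((fun u => fderiv ℝ (fun z : Fin n → ℝ =>
      κ * ∑ i, (z i - x i) ^ 2) y (f y u)) '' U) :=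
    hU.image_of_continuousOn ((ContinuousLinearMap.continuous _).comp_continuousOn hcy)
  obtain ⟨v, hv, hv'⟩ := hcomp.sSup_mem (hUne.image _)
  rw [← hv'] at hvis
  simp only at hvis
  rw [hfd] at hvis
  refine ⟨v, hv, fun ζ hζ s hs hint => ?_⟩
  have hcontrol : IsControl U (fun _ => v) := ⟨measurable_const, fun _ _ => hv⟩
  have hstay := vc_stay (T := s) (u := fun _ => v) hK0 hK (fun _ _ => hv) hζ.continuousOn
    ((mul_le_mul_of_nonneg_right hs.2 hK0).trans hδK) (hC x hx) hint
  have hw := hstay s ⟨hs.1, le_rfl⟩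
  set w := ζ s - x with hwdef
  set e := w - s • f y v with hedef
  have he : ‖e‖ ≤ K * (‖y - x‖ + 2 * C * s) * s := by
    have h1 : e = ∫ r in (0 : ℝ)..s, (f (ζ r) v - f y v) := by
      rw [intervalIntegral.integral_sub (vc_intervalIntegrable hU hc hcontrol hζ le_rfl hs.1)
        intervalIntegrable_const, hedef, hwdef]
      nth_rewrite 1 [hint s ⟨hs.1, le_rfl⟩]
      simp
    rw [h1]
    have := intervalIntegral.norm_integral_le_of_norm_le_const
      (f := fun r => f (ζ r) v - f y v) (a := 0) (b := s) (C := K * (‖y - x‖ + 2 * C * s)) (by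
        intro r hr
        rw [uIoc_of_le hs.1] at hr
        refine (hK _ _ _ hv).trans ?_
        gcongr
        have h2 := hstay r ⟨hr.1.le, hr.2⟩
        have h3 : 2 * C * r ≤ 2 * C * s := by gcongr; exact hr.2
        calc ‖ζ r - y‖ = ‖(ζ r - x) - (y - x)‖ := by congr 1; abel
          _ ≤ ‖ζ r - x‖ + ‖y - x‖ := norm_sub_le _ _
          _ ≤ _ := by linarith)
    rwa [sub_zero, abs_of_nonneg hs.1] at this
  have hgζ := hFg (ζ s) y hy
  have hexp : ∑ i, (y i - ζ s i) ^ 2 = ∑ i, (y i - x i) ^ 2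
      - 2 * (s * ∑ i, (y i - x i) * f y v i) - 2 * (∑ i, (y i - x i) * e i) + ∑ i, w i * w i := by
    simp only [Finset.mul_sum, ← Finset.sum_add_distrib, ← Finset.sum_sub_distrib]
    refine Finset.sum_congr rfl fun i _ => ?_
    simp only [hedef, hwdef, Pi.sub_apply, Pi.smul_apply, smul_eq_mul]
    ring
  have hD : |∑ i, (y i - x i) * e i| ≤ n * (‖y - x‖ * ‖e‖) := vc_dot (y - x) e
  have hW : |∑ i, w i * w i| ≤ n * (‖w‖ * ‖w‖) := vc_dot w w
  have hF2 : F (ζ s) y = h y - κ * ∑ i, (y i - ζ s i) ^ 2 := rfl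
  have hαm : α (h y) ≤ α (g x + η) := by
    refine hα.2.1.monotoneOn ?_ ?_ ?_
    · exact hhy.le
    · show 0 ≤ g x + η
      linarith
    · linarith
  set q := ‖y - x‖ with hq
  have hq0 : 0 ≤ q := norm_nonneg _
  have hqn : q ^ 2 ≤ ∑ i, (y i - x i) ^ 2 := vc_norm_sq_le (y - x)
  have hκq : κ * q ^ 2 ≤ η₁ := le_trans (by gcongr) hQ
  have hD2 : -(∑ i, (y i - x i) * e i) ≤ n * (q * (K * (q + 2 * C * s) * s)) :=
    (neg_le_abs _).trans (hD.trans (by gcongr))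
  have hW2 : (∑ i, w i * w i) ≤ n * ((2 * C * s) * (2 * C * s)) :=
    (le_abs_self _).trans (hW.trans (by
      have : 0 ≤ 2 * C * s := (norm_nonneg _).trans hw
      gcongr))
  set A := ∑ i, (y i - x i) * f y v i
  set D := ∑ i, (y i - x i) * e i
  set W := ∑ i, w i * w i
  have hs0 := hs.1
  have i1 : s * (2 * κ * A) ≥ s * (-α (g x + η)) := by gcongr; linarith
  have i2 : κ * -D ≤ κ * (n * (q * (K * (q + 2 * C * s) * s))) := by gcongr
  have i3 : κ * W ≤ κ * (n * ((2 * C * s) * (2 * C * s))) := by gcongr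
  have i4 : 2 * (κ * (n * (q * (K * (q + 2 * C * s) * s)))) + κ * (n * ((2 * C * s) * (2 * C * s)))
      ≤ s * η := by
    have j1 : 2 * (κ * (n * (q * (K * (q + 2 * C * s) * s))))
        + κ * (n * ((2 * C * s) * (2 * C * s)))
        = s * (2 * n * K * (κ * q ^ 2) + s * (4 * κ * n * K * C * q + 4 * κ * n * C ^ 2)) := by ring
    rw [j1]
    have j2 : 2 * n * K * (κ * q ^ 2) ≤ 2 * n * K * η₁ := by gcongr
    have j3 : s * (4 * κ * n * K * C * q + 4 * κ * n * C ^ 2) ≤ δ * B := by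
      have : 4 * κ * n * K * C * q ≤ 4 * κ * n * K * C * 1 := by gcongr; linarith
      exact mul_le_mul hs.2 (by linarith) (by positivity) hδ0.le
    gcongr
    linarith
  rw [hF2, hexp] at hgζ
  clear_value A D W q B δ κ η₁
  have i5 : κ * (∑ i, (y i - x i) ^ 2 - 2 * (s * A) - 2 * D + W)
      = κ * ∑ i, (y i - x i) ^ 2 - s * (2 * κ * A) + 2 * (κ * -D) + κ * W := by ring
  rw [i5] at hgζ
  have i6 : s * (α (g x + η) + η) = -(s * (-α (g x + η))) + s * η := by ring
  rw [i6]
  linarith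

/-- mean value consequences for solutions of `y' = -α y` -/
lemma vc_ode {α y : ℝ → ℝ} (hα : IsClassK α) (hy0 : ∀ t, 0 ≤ t → 0 ≤ y t)
    (hy : ∀ t, 0 ≤ t → HasDerivWithinAt y (-α (y t)) (Ici 0) t) {b s : ℝ} (hb : 0 ≤ b)
    (hs : 0 ≤ s) :
    y (b + s) ≤ y b ∧ y b - s * α (y b) ≤ y (b + s) ∧ y (b + s) ≤ y b - s * α (y (b + s)) := by
  have hα0 : ∀ r, 0 ≤ r → 0 ≤ α r := by
    intro r hr
    have := hα.2.1.monotoneOn (show (0 : ℝ) ∈ Ici 0 by simp) (show r ∈ Ici (0 : ℝ) from hr) hr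
    rwa [hα.2.2] at this
  have hmvt : ∀ p q, 0 ≤ p → p < q → ∃ c ∈ Ioo p q, y q = y p - (q - p) * α (y c) := by
    intro p q hp hpq
    obtain ⟨c, hc, hc'⟩ := exists_hasDerivAt_eq_slope y (fun t => -α (y t)) hpq
      (fun t ht => ((hy t (hp.trans ht.1)).continuousWithinAt).mono
        (fun z hz => hp.trans hz.1))
      (fun t ht => (hy t (hp.trans ht.1.le)).hasDerivAt (Ici_mem_nhds (hp.trans_lt ht.1)))
    refine ⟨c, hc, ?_⟩
    have : q - p ≠ 0 := by linarith
    field_simp at hc'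
    linarith
  have hanti : ∀ p q, 0 ≤ p → p ≤ q → y q ≤ y p := by
    intro p q hp hpq
    rcases hpq.eq_or_lt with rfl | hlt
    · exact le_rfl
    obtain ⟨c, hc, hc'⟩ := hmvt p q hp hlt
    have := mul_nonneg (sub_nonneg.2 hpq) (hα0 _ (hy0 c (hp.trans hc.1.le)))
    linarith
  refine ⟨hanti _ _ hb (by linarith), ?_⟩
  rcases hs.eq_or_lt with rfl | hs'
  · simp
  obtain ⟨c, hc, hc'⟩ := hmvt b (b + s) hb (by linarith)
  have hc0 : 0 ≤ c := hb.trans hc.1.le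
  have h1 : α (y c) ≤ α (y b) := hα.2.1.monotoneOn (hy0 c hc0) (hy0 b hb) (hanti _ _ hb hc.1.le)
  have h2 : α (y (b + s)) ≤ α (y c) :=
    hα.2.1.monotoneOn (hy0 _ (by linarith)) (hy0 c hc0) (hanti _ _ hc0 hc.2.le)
  have e : b + s - b = s := by ring
  rw [e] at hc'
  constructor <;> nlinarith

lemma vc_gap {L s η G G' yb y' P a1 a2 : ℝ} (hs : 0 ≤ s) (hL : 1 ≤ L) (hsL : s * L ≤ 1 / 2)
    (hη : 0 < η) (hP : 0 ≤ P) (hα : a1 - a2 ≤ L * (G + η - yb))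
    (hG : G - s * (a1 + η) ≤ G') (hy : y' ≤ yb - s * a2 + s * η) (h : yb + P ≤ G + 3 * η) :
    y' + P * Real.exp (-2 * L * s) ≤ G' + 3 * η := by
  have h1 : Real.exp (-2 * L * s) ≤ 1 - s * L := by
    have e1 : -2 * L * s = -(2 * (s * L)) := by ring
    rw [e1, Real.exp_neg]
    have h2 := Real.add_one_le_exp (2 * (s * L))
    have h0 : 0 ≤ s * L := by positivity
    rw [inv_le_iff_one_le_mul₀ (Real.exp_pos _)]
    have : (1 - s * L) * (2 * (s * L) + 1) ≤ (1 - s * L) * Real.exp (2 * (s * L)) :=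
      mul_le_mul_of_nonneg_left h2 (by linarith)
    nlinarith
  have h2 : P * Real.exp (-2 * L * s) ≤ P * (1 - s * L) := mul_le_mul_of_nonneg_left h1 hP
  have h3 : P * (1 - s * L) ≤ (G + 3 * η - yb) * (1 - s * L) :=
    mul_le_mul_of_nonneg_right (by linarith) (by linarith)
  have h4 : s * (a1 - a2) ≤ s * (L * (G + η - yb)) := mul_le_mul_of_nonneg_left hα hs
  have h5 : s * η ≤ s * L * η := by
    have : s ≤ s * L := by nlinarith
    exact mul_le_mul_of_nonneg_right this hη.le
  nlinarith

set_option maxHeartbeats 2000000 in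
lemma vc_extend {K : ℝ} (hU : IsCompact U) (hUne : U.Nonempty)
    (hc : ContinuousOn (Function.uncurry f) (Set.univ ×ˢ U)) (hK0 : 0 ≤ K)
    (hK : ∀ x y, ∀ u ∈ U, ‖f x u - f y u‖ ≤ K * ‖x - y‖)
    {α : ℝ → ℝ} (hα : IsLocallyLipschitzClassK α) {h : (Fin n → ℝ) → ℝ}
    (hV : IsViscosityCBF f U α h) {y : ℝ → ℝ} (hy0 : ∀ t, 0 ≤ t → 0 ≤ y t)
    (hy : ∀ t, 0 ≤ t → HasDerivWithinAt y (-α (y t)) (Ici 0) t)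
    {τ : ℝ} (hτ0 : 0 < τ) (hτ : 4 * τ * (K + 1) = 1) {x : Fin n → ℝ}
    {a : ℝ} (ha : 0 ≤ a) {u : ℝ → Fin m → ℝ} (hu : IsControl U u) {ξ : ℝ → Fin n → ℝ}
    (hξ : Continuous ξ)
    (htraj : ∀ t ∈ Icc 0 a, ξ t = x + ∫ s in (0 : ℝ)..t, f (ξ s) (u s))
    (hbar : ∀ t ∈ Icc 0 a, y t < h (ξ t)) :
    ∃ (u' : ℝ → Fin m → ℝ) (ξ' : ℝ → Fin n → ℝ), IsControl U u' ∧ Continuous ξ' ∧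
      (∀ t ∈ Icc 0 (a + τ), ξ' t = x + ∫ s in (0 : ℝ)..t, f (ξ' s) (u' s)) ∧
      (∀ t ∈ Icc 0 (a + τ), y t < h (ξ' t)) ∧ ∀ t ≤ a, u' t = u t ∧ ξ' t = ξ t := by
  set x₀ := ξ a with hx₀
  have hh := hV.1
  have hcx : ContinuousOn (fun v => f x₀ v) U :=
    hc.comp (f := fun v => (x₀, v)) (by fun_prop) (fun v hv => ⟨trivial, hv⟩)
  obtain ⟨C₀, hC₀⟩ := hU.exists_bound_of_continuousOn hcx
  have hC₀0 : 0 ≤ C₀ := by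
    obtain ⟨v, hv⟩ := hUne
    exact (norm_nonneg _).trans (hC₀ v hv)
  set ρ := C₀ + 1 with hρ
  set C := C₀ + K * ρ with hCdef
  have hC0 : 0 ≤ C := by positivity
  have hC : ∀ x ∈ Metric.closedBall x₀ ρ, ∀ v ∈ U, ‖f x v‖ ≤ C := by
    intro z hz v hv
    rw [Metric.mem_closedBall, dist_eq_norm] at hz
    calc ‖f z v‖ = ‖f x₀ v + (f z v - f x₀ v)‖ := by congr 1; abel
      _ ≤ ‖f x₀ v‖ + ‖f z v - f x₀ v‖ := norm_add_le _ _
      _ ≤ C₀ + K * ‖z - x₀‖ := add_le_add (hC₀ v hv) (hK _ _ _ hv)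
      _ ≤ _ := by rw [hCdef]; gcongr
  have hCτ : 2 * C * τ ≤ ρ := by
    have : C ≤ ρ * (K + 1) := by rw [hCdef, hρ]; nlinarith
    have h2 : 2 * C * τ ≤ 2 * (ρ * (K + 1)) * τ := by gcongr
    have h3 : 2 * (ρ * (K + 1)) * τ = ρ * (4 * τ * (K + 1)) / 2 := by ring
    rw [h3, hτ] at h2
    have : 0 ≤ ρ := by positivity
    linarith
  obtain ⟨M, hM⟩ := (isCompact_closedBall x₀ ρ).exists_bound_of_continuousOn hh.continuousOn
  set Mα := |M| + |y 0| + 3 with hMα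
  have hloc : LocallyLipschitzOn (Icc 0 Mα) α := by
    have : LocallyLipschitzOn (Ici 0) α := fun z hz => hα.2 z hz
    exact this.mono Icc_subset_Ici_self
  obtain ⟨L₀, hL₀⟩ := hloc.exists_lipschitzOnWith_of_compact isCompact_Icc
  set L : ℝ := L₀ + 1 with hL
  have hL1 : 1 ≤ L := by rw [hL]; linarith [L₀.2]
  have hL0 : 0 < L := by linarith
  have hαL : ∀ p q, 0 ≤ q → q ≤ p → p ≤ Mα → α p - α q ≤ L * (p - q) := by
    intro p q hq hqp hp
    have := hL₀.dist_le_mul p ⟨hq.trans hqp, hp⟩ q ⟨hq, hqp.trans hp⟩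
    rw [Real.dist_eq, Real.dist_eq, abs_of_nonneg (sub_nonneg.2 hqp)] at this
    have h2 := le_abs_self (α p - α q)
    rw [hL]
    nlinarith
  have hα0 : ∀ r, 0 ≤ r → 0 ≤ α r := by
    intro r hr
    have := hα.1.2.1.monotoneOn (show (0 : ℝ) ∈ Ici 0 by simp) (show r ∈ Ici (0 : ℝ) from hr) hr
    rwa [hα.1.2.2] at this
  have hyy0 : ∀ t, 0 ≤ t → y t ≤ y 0 := by
    intro t ht
    have := (vc_ode hα.1 hy0 hy le_rfl ht).1
    rwa [zero_add] at this
  set d := h x₀ - y a with hd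
  have hd0 : 0 < d := by linarith [hbar a ⟨ha, le_rfl⟩]
  set ex := Real.exp (-2 * L * τ) with hex
  have hex0 : 0 < ex := Real.exp_pos _
  set η := min 1 (d * ex / 8) with hη
  have hη0 : 0 < η := by positivity
  have hη1 : η ≤ 1 := min_le_left _ _
  have hη2 : 4 * η < d * ex := by
    have h1 : η ≤ d * ex / 8 := min_le_right _ _
    have h2 : 0 < d * ex := by positivity
    linarith
  obtain ⟨g, δ₀, hδ₀, hδ₀K, hg1, hg2⟩ :=
    vc_step hU hUne hc hK0 hK hα.1 hV x₀ hC0 hC hη0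
  -- choose the number of steps
  set A := L * α (y 0) with hA
  have hA0 : 0 ≤ A := mul_nonneg hL0.le (hα0 _ (hy0 0 le_rfl))
  set μ := min δ₀ (min (1 / (2 * L)) (η / (A + 1))) with hμ
  have hμ0 : 0 < μ := by positivity
  obtain ⟨N, hN⟩ := exists_nat_gt (τ / μ)
  have hN0 : (0 : ℝ) < N := lt_trans (by positivity) hN
  set δ := τ / N with hδ
  have hδ0 : 0 < δ := by positivity
  have hNδ : N * δ = τ := by rw [hδ]; field_simp
  have hδμ : δ ≤ μ := by
    rw [div_lt_iff₀ hμ0] at hN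
    rw [hδ, div_le_iff₀ hN0]
    linarith
  have hδ1 : δ ≤ δ₀ := hδμ.trans (min_le_left _ _)
  have hδL : δ * L ≤ 1 / 2 := by
    have : δ ≤ 1 / (2 * L) := hδμ.trans ((min_le_right _ _).trans (min_le_left _ _))
    rw [le_div_iff₀ (by positivity)] at this
    linarith
  have hδA : δ * A ≤ η := by
    have : δ ≤ η / (A + 1) := hδμ.trans ((min_le_right _ _).trans (min_le_right _ _))
    rw [le_div_iff₀ (by positivity)] at this
    linarith
  have hexle : ∀ t, t ≤ τ → d * ex - 3 * η < (d + 3 * η) * Real.exp (-2 * L * t) - 3 * η := by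
    intro t ht
    have h1 : ex ≤ Real.exp (-2 * L * t) := by
      rw [hex]; apply Real.exp_le_exp.2; nlinarith
    have h2 : (d + 3 * η) * ex ≤ (d + 3 * η) * Real.exp (-2 * L * t) := by gcongr
    have : 0 < 3 * η * ex := by positivity
    linarith
  have main : ∀ i : ℕ, i ≤ N → ∃ (u' : ℝ → Fin m → ℝ) (ξ' : ℝ → Fin n → ℝ),
      IsControl U u' ∧ Continuous ξ' ∧
      (∀ t ∈ Icc 0 (a + i * δ), ξ' t = x + ∫ s in (0 : ℝ)..t, f (ξ' s) (u' s)) ∧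
      (∀ t ∈ Icc 0 (a + i * δ), y t < h (ξ' t)) ∧ (∀ t ≤ a, u' t = u t ∧ ξ' t = ξ t) ∧
      ‖ξ' (a + i * δ) - x₀‖ ≤ 2 * C * (i * δ) ∧
      y (a + i * δ) + (d + 3 * η) * Real.exp (-2 * L * (i * δ)) ≤ g (ξ' (a + i * δ)) + 3 * η := by
    intro i
    induction i with
    | zero =>
      intro _
      refine ⟨u, ξ, hu, hξ, by simpa using htraj, by simpa using hbar, fun t _ => ⟨rfl, rfl⟩,
        by simp [hx₀], ?_⟩
      have := (hg1 x₀ (Metric.mem_closedBall_self (by positivity))).1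
      simp only [Nat.cast_zero, zero_mul, add_zero, mul_zero, Real.exp_zero, mul_one]
      rw [← hx₀]
      linarith
    | succ i ih =>
      intro hi
      obtain ⟨u', ξ', hu', hξ', ht', hb', hag, hball, hgap⟩ := ih (by omega)
      set c := (i : ℝ) * δ with hcdef
      have hc0 : 0 ≤ c := by positivity
      have hcδ : c + δ ≤ τ := by
        rw [hcdef, ← hNδ]
        have : ((i : ℝ) + 1) ≤ N := by exact_mod_cast hi
        nlinarith
      have hsucc : ((i + 1 : ℕ) : ℝ) * δ = c + δ := by push_cast; ring
      rw [hsucc]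
      set b := a + c with hbdef
      have hb0 : 0 ≤ b := by positivity
      set z := ξ' b with hz
      have hin : ∀ t, t ≤ τ → 2 * C * t ≤ ρ := fun t ht =>
        le_trans (by gcongr) hCτ
      have hzb : z ∈ Metric.closedBall x₀ ρ := by
        rw [Metric.mem_closedBall, dist_eq_norm]
        exact hball.trans (hin c (by linarith))
      have hgz : y b + η < g z := by
        have := hexle c (by linarith)
        linarith
      have hgz0 : 0 < g z := by linarith [hy0 b hb0]
      obtain ⟨v, hv, hstep⟩ := hg2 z hzb hgz0
      have hδK : δ * K ≤ 1 / 2 := le_trans (by gcongr) hδ₀K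
      obtain ⟨ζ, hζ, hζ0, hζi⟩ := vc_exists hK0 hK hδ0.le hδK z hv
      have hstay := vc_stay (u := fun _ => v) hK0 hK (fun _ _ => hv) hζ.continuousOn hδK
        (hC z hzb) hζi
      obtain ⟨k1, k2, k3⟩ := vc_concat hU hc hu' hξ' hb0 ht' hv hζ hζ0 hζi
      have hpos : ∀ s ∈ Icc 0 δ, ‖ζ s - x₀‖ ≤ 2 * C * (c + s) := by
        intro s hs
        calc ‖ζ s - x₀‖ = ‖(ζ s - z) + (z - x₀)‖ := by congr 1; abel
          _ ≤ ‖ζ s - z‖ + ‖z - x₀‖ := norm_add_le _ _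
          _ ≤ 2 * C * s + 2 * C * c := add_le_add (hstay s hs) hball
          _ = _ := by ring
      have hgapζ : ∀ s ∈ Icc 0 δ,
          y (b + s) + (d + 3 * η) * Real.exp (-2 * L * (c + s)) ≤ g (ζ s) + 3 * η := by
        intro s hs
        have o := vc_ode hα.1 hy0 hy hb0 hs.1
        have hyb := hy0 b hb0
        have hybs := hy0 (b + s) (by linarith [hs.1])
        have hMz : g z + η ≤ Mα := by
          have h1 := (hg1 z hzb).2
          have h2 := hM z hzb
          rw [Real.norm_eq_abs] at h2
          have := le_abs_self (h z)
          have := le_abs_self M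
          have := abs_nonneg (y 0)
          linarith
        have hyM : y b ≤ Mα := by
          have := hyy0 b hb0
          have := le_abs_self (y 0)
          have := abs_nonneg M
          linarith
        have e1 : Real.exp (-2 * L * (c + s))
            = Real.exp (-2 * L * c) * Real.exp (-2 * L * s) := by
          rw [← Real.exp_add]; congr 1; ring
        rw [e1, ← mul_assoc]
        refine vc_gap (a1 := α (g z + η)) (a2 := α (y b)) (G := g z) (yb := y b) hs.1 hL1
          (le_trans (by gcongr; exact hs.2) hδL) hη0 (by positivity)
          (hαL _ _ hyb (by linarith) hMz) (hstep ζ hζ s ⟨hs.1, hs.2.trans hδ1⟩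
            (fun r hr => hζi r ⟨hr.1, hr.2.trans hs.2⟩)) ?_ hgap
        have l1 := hαL _ _ hybs o.1 hyM
        have l2 : α (y b) ≤ α (y 0) := hα.1.2.1.monotoneOn hyb (hy0 0 le_rfl) (hyy0 b hb0)
        have l3 : L * (y b - y (b + s)) ≤ L * (s * α (y 0)) := by
          have : s * α (y b) ≤ s * α (y 0) := mul_le_mul_of_nonneg_left l2 hs.1
          gcongr
          linarith
        have l4 : L * (s * α (y 0)) ≤ η := by
          have : s * A ≤ δ * A := by gcongr; exact hs.2
          calc L * (s * α (y 0)) = s * A := by rw [hA]; ring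
            _ ≤ η := this.trans hδA
        have l5 : s * (α (y b) - α (y (b + s))) ≤ s * η :=
          mul_le_mul_of_nonneg_left (by linarith) hs.1
        linarith [o.2.2]
      have hbarζ : ∀ s ∈ Icc 0 δ, y (b + s) < h (ζ s) := by
        intro s hs
        have h1 := hgapζ s hs
        have h2 := hexle (c + s) (by linarith [hs.2])
        have h3 := hg1 (ζ s) (by
          rw [Metric.mem_closedBall, dist_eq_norm]
          exact (hpos s hs).trans (hin _ (by linarith [hs.2])))
        linarith [h3.2]
      have hassoc : a + (c + δ) = b + δ := by rw [hbdef]; ring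
      have hδmem : δ ∈ Icc 0 δ := ⟨hδ0.le, le_rfl⟩
      have hnle : ¬ (b + δ ≤ b) := by linarith
      rw [hassoc]
      refine ⟨_, _, k1, k2, k3, ?_, ?_, ?_, ?_⟩
      · intro t ht
        by_cases htb : t ≤ b
        · simp only [htb, if_true]
          exact hb' t ⟨ht.1, htb⟩
        · simp only [htb, if_false]
          push Not at htb
          have := hbarζ (t - b) ⟨by linarith, by linarith [ht.2]⟩
          rwa [add_sub_cancel] at this
      · intro t hta
        have : t ≤ b := by linarith
        simp only [this, if_true]
        exact hag t hta
      · simp only [hnle, if_false, add_sub_cancel_left]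
        exact hpos δ hδmem
      · simp only [hnle, if_false, add_sub_cancel_left]
        exact hgapζ δ hδmem
  obtain ⟨u', ξ', h1, h2, h3, h4, h5, -, -⟩ := main N le_rfl
  rw [hNδ] at h3 h4
  exact ⟨u', ξ', h1, h2, h3, h4, h5⟩

lemma vc_seq {A : Type*} (P : ℕ → A → Prop) (R : ℕ → A → A → Prop) (h0 : ∃ a, P 0 a)
    (hs : ∀ k a, P k a → ∃ b, P (k + 1) b ∧ R k a b) :
    ∃ s : ℕ → A, ∀ k, P k (s k) ∧ R k (s k) (s (k + 1)) := by
  classical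
  obtain ⟨a₀, ha₀⟩ := h0
  choose F hF using hs
  let S : ∀ k, {a // P k a} := fun k =>
    Nat.rec (motive := fun k => {a // P k a}) ⟨a₀, ha₀⟩
      (fun k p => ⟨F k p.1 p.2, (hF k p.1 p.2).1⟩) k
  exact ⟨fun k => (S k).1, fun k => ⟨(S k).2, (hF k (S k).1 (S k).2).2⟩⟩

lemma vc_forward {K : ℝ} (hU : IsCompact U) (hUne : U.Nonempty)
    (hc : ContinuousOn (Function.uncurry f) (Set.univ ×ˢ U)) (hK0 : 0 ≤ K)
    (hK : ∀ x y, ∀ u ∈ U, ‖f x u - f y u‖ ≤ K * ‖x - y‖)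
    {α : ℝ → ℝ} (hα : IsLocallyLipschitzClassK α) {h : (Fin n → ℝ) → ℝ}
    (hV : IsViscosityCBF f U α h) {y : ℝ → ℝ} (hy0 : ∀ t, 0 ≤ t → 0 ≤ y t)
    (hy : ∀ t, 0 ≤ t → HasDerivWithinAt y (-α (y t)) (Ici 0) t)
    {x : Fin n → ℝ} (hx : y 0 < h x) :
    ∃ u ξ, IsControl U u ∧ IsTrajectory f x u ξ ∧ ∀ t : ℝ, 0 ≤ t → y t ≤ h (ξ t) := by
  obtain ⟨v, hv⟩ := hUne
  set τ := 1 / (4 * (K + 1)) with hτdef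
  have hτ0 : 0 < τ := by positivity
  have hτ : 4 * τ * (K + 1) = 1 := by rw [hτdef]; field_simp
  obtain ⟨S, hS⟩ := vc_seq (A := (ℝ → Fin m → ℝ) × (ℝ → Fin n → ℝ))
    (fun k p => IsControl U p.1 ∧ Continuous p.2 ∧
      (∀ t ∈ Icc 0 (k * τ), p.2 t = x + ∫ s in (0 : ℝ)..t, f (p.2 s) (p.1 s)) ∧
      (∀ t ∈ Icc 0 (k * τ), y t < h (p.2 t)))
    (fun k p q => ∀ t ≤ k * τ, q.1 t = p.1 t ∧ q.2 t = p.2 t)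
    ⟨(fun _ => v, fun _ => x), ⟨measurable_const, fun _ _ => hv⟩, continuous_const, by
      intro t ht
      have : t = 0 := by simpa using ht
      simp [this], by
      intro t ht
      have : t = 0 := by simpa using ht
      simpa [this] using hx⟩
    (by
      rintro k ⟨u, ξ⟩ ⟨h1, h2, h3, h4⟩
      obtain ⟨u', ξ', g1, g2, g3, g4, g5⟩ := vc_extend hU ⟨v, hv⟩ hc hK0 hK hα hV hy0 hy hτ0 hτ
        (by positivity) h1 h2 h3 h4
      have e : ((k + 1 : ℕ) : ℝ) * τ = k * τ + τ := by push_cast; ring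
      refine ⟨(u', ξ'), ⟨g1, g2, ?_, ?_⟩, g5⟩
      · rw [e]; exact g3
      · rw [e]; exact g4)
  have hag : ∀ k l : ℕ, k ≤ l → ∀ t ≤ k * τ, (S l).1 t = (S k).1 t ∧ (S l).2 t = (S k).2 t := by
    intro k l hkl
    induction l, hkl using Nat.le_induction with
    | base => exact fun t _ => ⟨rfl, rfl⟩
    | succ l hl ih =>
      intro t ht
      have h1 := (hS l).2 t (ht.trans (by gcongr))
      have h2 := ih t ht
      exact ⟨h1.1.trans h2.1, h1.2.trans h2.2⟩
  have hceil : ∀ t : ℝ, t ≤ (⌈t / τ⌉₊ : ℝ) * τ := fun t => by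
    rw [← div_le_iff₀ hτ0]; exact Nat.le_ceil _
  set u : ℝ → Fin m → ℝ := fun t => (S ⌈t / τ⌉₊).1 t with hu
  set ξ : ℝ → Fin n → ℝ := fun t => (S ⌈t / τ⌉₊).2 t with hξ
  have hk : ∀ (k : ℕ) (t : ℝ), t ≤ k * τ → (S k).1 t = u t ∧ (S k).2 t = ξ t := by
    intro k t ht
    refine hag _ k ?_ t (hceil t)
    rw [Nat.ceil_le, div_le_iff₀ hτ0]
    exact ht
  refine ⟨u, ξ, ⟨?_, ?_⟩, ⟨?_, ?_⟩, ?_⟩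
  · refine measurable_of_tendsto_metrizable (f := fun k => (S k).1) (fun k => (hS k).1.1.1) ?_
    refine tendsto_pi_nhds.2 fun t => ?_
    refine tendsto_const_nhds.congr' ?_
    filter_upwards [eventually_ge_atTop ⌈t / τ⌉₊] with k hkt
    exact ((hk k t ((hceil t).trans (by gcongr))).1).symm
  · intro t ht
    exact (hS _).1.1.2 t ht
  · rw [continuous_iff_continuousAt]
    intro t
    obtain ⟨k, hkt⟩ := exists_nat_gt (t / τ)
    rw [div_lt_iff₀ hτ0] at hkt
    refine ((hS k).1.2.1.continuousAt (x := t)).congr ?_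
    filter_upwards [Iio_mem_nhds hkt] with s hs
    exact (hk k s (le_of_lt hs)).2
  · intro t ht
    have h1 := (hS ⌈t / τ⌉₊).1.2.2.1 t ⟨ht, hceil t⟩
    refine h1.trans ?_
    congr 1
    refine intervalIntegral.integral_congr fun s hs => ?_
    rw [uIcc_of_le ht] at hs
    have := hk ⌈t / τ⌉₊ s (hs.2.trans (hceil t))
    simp only [this.1, this.2]
  · intro t ht
    exact ((hS ⌈t / τ⌉₊).1.2.2.2 t ⟨ht, hceil t⟩).le

lemma vc_backward {K : ℝ} (hU : IsCompact U) (hUne : U.Nonempty)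
    (hc : ContinuousOn (Function.uncurry f) (Set.univ ×ˢ U)) (hK0 : 0 ≤ K)
    (hK : ∀ x y, ∀ u ∈ U, ‖f x u - f y u‖ ≤ K * ‖x - y‖)
    {α : ℝ → ℝ} (hα : IsClassK α) {β : ℝ → ℝ → ℝ} (hβ : IsBetaFor α β)
    {h : (Fin n → ℝ) → ℝ} (hB : BarrierGuarantee f U β h) {x : Fin n → ℝ} (hx : 0 < h x)
    {φ : (Fin n → ℝ) → ℝ} (hφ : ContDiff ℝ 1 φ) (hmax : IsLocalMax (fun y => h y - φ y) x) :
    -α (h x) ≤ sSup ((fun u => fderiv ℝ φ x (f x u)) '' U) := by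
  set p := fderiv ℝ φ x with hp
  set σ := sSup ((fun u => p (f x u)) '' U) with hσ
  have hcx : ContinuousOn (fun v => f x v) U :=
    hc.comp (f := fun v => (x, v)) (by fun_prop) (fun v hv => ⟨trivial, hv⟩)
  have hσ' : ∀ v ∈ U, p (f x v) ≤ σ := fun v hv =>
    le_csSup (hU.image_of_continuousOn (p.continuous.comp_continuousOn hcx)).bddAbove
      (mem_image_of_mem _ hv)
  obtain ⟨C, hC⟩ := hU.exists_bound_of_continuousOn hcx
  have hC0 : 0 ≤ C := by
    obtain ⟨v, hv⟩ := hUne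
    exact (norm_nonneg _).trans (hC v hv)
  -- it suffices to prove an approximate inequality
  refine le_of_forall_pos_le_add fun ε hε => ?_
  set ε₁ := ε / (4 * (C + 1)) with hε₁
  have hε₁0 : 0 < ε₁ := by positivity
  have hε₁C : ε₁ * (2 * C) ≤ ε / 2 := by
    rw [hε₁, div_mul_eq_mul_div, div_le_div_iff₀ (by positivity) (by norm_num)]
    nlinarith
  have hfd : HasFDerivAt φ p x := (hφ.differentiable (by simp) x).hasFDerivAt
  obtain ⟨r, hr, hball⟩ := Metric.eventually_nhds_iff.1 ((hfd.isLittleO.def hε₁0).and hmax)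
  set B := h x + ‖p‖ * (K * (2 * C)) with hB'
  have hB0 : 0 ≤ B := by positivity
  set t := min (1 / (2 * (K + 1))) (min (1 / 2) (min (r / (2 * C + 1) / 2) (ε / (2 * (B + 1)))))
    with ht
  have ht0 : 0 < t := by positivity
  have t1 : t ≤ 1 / (2 * (K + 1)) := min_le_left _ _
  have t2 : t ≤ 1 / 2 := (min_le_right _ _).trans (min_le_left _ _)
  have t3 : t ≤ r / (2 * C + 1) / 2 :=
    (min_le_right _ _).trans ((min_le_right _ _).trans (min_le_left _ _))
  have t4 : t ≤ ε / (2 * (B + 1)) :=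
    (min_le_right _ _).trans ((min_le_right _ _).trans (min_le_right _ _))
  have htK : t * K ≤ 1 / 2 := by
    rw [le_div_iff₀ (by positivity)] at t1
    nlinarith
  have htr : 2 * C * t < r := by
    rw [div_div, le_div_iff₀ (by positivity)] at t3
    nlinarith
  have htB : t * B ≤ ε / 2 := by
    rw [le_div_iff₀ (by positivity)] at t4
    nlinarith
  set θ := 1 - t ^ 2 with hθ
  have hθ0 : 0 ≤ θ := by rw [hθ]; nlinarith
  have hθ1 : θ < 1 := by rw [hθ]; nlinarith
  obtain ⟨u, ξ, hu, ⟨hξc, hξ⟩, hbar⟩ := hB θ ⟨hθ0, hθ1⟩ x hx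
  have hstay := vc_stay (T := t) hK0 hK hu.2 hξc.continuousOn htK hC (fun s hs => hξ s hs.1)
  have hw := hstay t ⟨ht0.le, le_rfl⟩
  -- lower bound
  have hr0 : 0 ≤ θ * h x := by positivity
  have lb : θ * h x - t * α (h x) ≤ h (ξ t) := by
    have hb := hβ (θ * h x) hr0
    have := (vc_ode hα (fun s hs => (hb.2 s hs).1) (fun s hs => (hb.2 s hs).2.2) le_rfl
      ht0.le).2.1
    rw [zero_add, hb.1] at this
    have hm : α (θ * h x) ≤ α (h x) :=
      hα.2.1.monotoneOn hr0 hx.le (by nlinarith)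
    have h2 : t * α (θ * h x) ≤ t * α (h x) := by gcongr
    linarith [hbar t ht0.le]
  -- upper bound
  have hd : dist (ξ t) x < r := by rw [dist_eq_norm]; linarith
  obtain ⟨hlo, hmx⟩ := hball hd
  have ub1 : φ (ξ t) - φ x ≤ p (ξ t - x) + ε₁ * (2 * C * t) := by
    have h1 := le_abs_self (φ (ξ t) - φ x - p (ξ t - x))
    rw [Real.norm_eq_abs] at hlo
    have h2 : ε₁ * ‖ξ t - x‖ ≤ ε₁ * (2 * C * t) := by gcongr
    linarith
  have ub2 : p (ξ t - x) ≤ t * (σ + ‖p‖ * (K * (2 * C * t))) := by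
    have hint := vc_intervalIntegrable hU hc hu hξc le_rfl ht0.le
    have e : ξ t - x = ∫ s in (0 : ℝ)..t, f (ξ s) (u s) := by
      rw [hξ t ht0.le]; simp
    rw [e, ← p.intervalIntegral_comp_comm hint]
    have hint2 : IntervalIntegrable (fun s => p (f (ξ s) (u s))) volume 0 t :=
      ⟨p.integrable_comp hint.1, p.integrable_comp hint.2⟩
    have := intervalIntegral.integral_mono_on ht0.le hint2
      (intervalIntegrable_const (c := σ + ‖p‖ * (K * (2 * C * t)))) (by
        intro s hs
        have hus := hu.2 s hs.1
        have e2 : p (f (ξ s) (u s)) = p (f x (u s)) + p (f (ξ s) (u s) - f x (u s)) := by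
          rw [← map_add]; congr 1; abel
        rw [e2]
        refine add_le_add (hσ' _ hus) ((le_abs_self _).trans ((p.le_opNorm _).trans ?_))
        have h1 := hK (ξ s) x _ hus
        have h2 : ‖ξ s - x‖ ≤ 2 * C * t := (hstay s hs).trans (by gcongr; exact hs.2)
        have h3 : K * ‖ξ s - x‖ ≤ K * (2 * C * t) := by gcongr
        gcongr
        exact h1.trans h3)
    rw [intervalIntegral.integral_const, sub_zero, smul_eq_mul] at this
    exact this
  simp only at hmx
  have fin : t * (-α (h x)) ≤ t * (σ + ε) := by
    have e1 : θ * h x = h x - t * (t * h x) := by rw [hθ]; ring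
    have e2 : t * (σ + ‖p‖ * (K * (2 * C * t))) + ε₁ * (2 * C * t) + t * (t * h x)
        = t * (σ + (t * B + ε₁ * (2 * C))) := by rw [hB']; ring
    have e3 : t * (σ + (t * B + ε₁ * (2 * C))) ≤ t * (σ + ε) := by gcongr; linarith
    linarith
  exact le_of_mul_le_mul_left fin ht0

end Helpers

/-- A continuous `h` (not necessarily nonnegative) is a viscosity CBF w.r.t.
`α` iff it provides the Barrier Guarantee w.r.t. `α`. -/
theorem isViscosityCBF_iff_barrierGuarantee {n m : ℕ}
    (f : (Fin n → ℝ) → (Fin m → ℝ) → Fin n → ℝ) (U : Set (Fin m → ℝ))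
    (hU : IsCompact U) (hUne : U.Nonempty)
    (hf : ∃ K : NNReal, LipschitzOnWith K (Function.uncurry f) (Set.univ ×ˢ U))
    (α : ℝ → ℝ) (hα : IsLocallyLipschitzClassK α)
    (β : ℝ → ℝ → ℝ) (hβ : IsBetaFor α β)
    (h : (Fin n → ℝ) → ℝ) (hh : Continuous h) :
    IsViscosityCBF f U α h ↔ BarrierGuarantee f U β h := by
  obtain ⟨K, hK'⟩ := hf
  have hc := hK'.continuousOn
  have hK : ∀ x y, ∀ u ∈ U, ‖f x u - f y u‖ ≤ (K : ℝ) * ‖x - y‖ := by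
    intro x y u hu
    have := hK'.dist_le_mul (x, u) ⟨trivial, hu⟩ (y, u) ⟨trivial, hu⟩
    rw [dist_eq_norm, Prod.dist_eq] at this
    simpa [dist_eq_norm, Function.uncurry] using this
  constructor
  · intro hV θ hθ x hx
    have hr : 0 ≤ θ * h x := mul_nonneg hθ.1 hx.le
    obtain ⟨hb0, hb⟩ := hβ (θ * h x) hr
    refine vc_forward hU hUne hc K.2 hK hα hV (fun t ht => (hb t ht).1)
      (fun t ht => (hb t ht).2.2) ?_
    rw [hb0]
    nlinarith [hθ.2]
  · intro hB
    exact ⟨hh, fun x hx φ hφ hmax => vc_backward hU hUne hc K.2 hK hα.1 hβ hB hx hφ hmax⟩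
end
end

section
/- Let h : ℝ^n → [0,∞) be continuous and define the avoid value function V : ℝ^n × [0,∞) → [0,∞) by V(x,T) = sup over pairs (u, ξ) of control signals u ∈ 𝕌 and admissible trajectories ξ from x under u of min_{t ∈ [0,T]} h(ξ(t)). Then V is time-invariant (i.e., V(x,T) = h(x) for all x ∈ ℝ^n and T ≥ 0) if and only if h is a viscosity CBF with respect to every locally Lipschitz class K function α. -/
open Set Filter MeasureTheory Topology

noncomputable section

/-- Short-time flow of a Lipschitz field, with a uniform time step. -/
lemma short_flow {n : ℕ} (v : (Fin n → ℝ) → (Fin n → ℝ)) (K : NNReal) (hK : 0 < K)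
    (hv : LipschitzWith K v) (s : ℝ) (hs : 0 < s) (hsK : s * (2 * K) ≤ 1) (y : Fin n → ℝ) :
    ∃ ζ : ℝ → Fin n → ℝ, Continuous ζ ∧ ζ 0 = y ∧
      ∀ t ∈ Ico 0 s, HasDerivWithinAt ζ (v (ζ t)) (Ici t) t := by
  have hK' : (0 : ℝ) < K := hK
  let a : NNReal := ‖v y‖₊ / K
  have haK : (a : ℝ) * K = ‖v y‖ := by
    simp only [a, NNReal.coe_div, coe_nnnorm]; field_simp
  have hPL : IsPicardLindelof (fun _ : ℝ => v) (⟨0, le_rfl, hs.le⟩ : Icc (0 : ℝ) s) y a 0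
      (2 * ‖v y‖₊) K := by
    refine ⟨fun t _ => hv.lipschitzOnWith, fun _ _ => continuousOn_const, ?_, ?_⟩
    · intro t _ z hz
      have h1 : ‖v z - v y‖ ≤ K * ‖z - y‖ := hv.norm_sub_le z y
      have h2 : ‖z - y‖ ≤ a := by simpa [dist_eq_norm] using hz
      have h3 : ‖v z‖ ≤ ‖v z - v y‖ + ‖v y‖ := by
        simpa using norm_add_le (v z - v y) (v y)
      have h4 : (K : ℝ) * ‖z - y‖ ≤ K * a := by gcongr
      push_cast
      nlinarith
    · simp only [sub_zero, NNReal.coe_zero]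
      rw [max_eq_left (by linarith)]
      push_cast
      rw [← haK]
      have := a.coe_nonneg
      nlinarith
  obtain ⟨β, hβ0, hβ⟩ := hPL.exists_eq_forall_mem_Icc_hasDerivWithinAt₀
  have hβc : ContinuousOn β (Icc 0 s) := fun t ht => (hβ t ht).continuousWithinAt
  have heq : ∀ t ∈ Icc 0 s, IccExtend hs.le ((Icc 0 s).domRestrict β) t = β t := by
    intro t ht
    rw [IccExtend_of_mem _ _ ht]; rfl
  refine ⟨IccExtend hs.le ((Icc 0 s).domRestrict β), ?_, ?_, ?_⟩
  · exact (continuousOn_iff_continuous_domRestrict.1 hβc).Icc_extend'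
  · rw [heq 0 ⟨le_rfl, hs.le⟩]; exact hβ0
  · intro t ht
    have ht' : t ∈ Icc 0 s := ⟨ht.1, ht.2.le⟩
    rw [heq t ht']
    have h1 := (hβ t ht').congr heq (heq t ht')
    refine h1.mono_of_mem_nhdsWithin ?_
    have : Ico t s ∈ 𝓝[≥] t := Ico_mem_nhdsGE ht.2
    exact mem_of_superset this (fun r hr => ⟨ht.1.trans hr.1, hr.2.le⟩)

/-- Sample-and-hold trajectories. -/
lemma sample_hold {n m : ℕ} (f : (Fin n → ℝ) → (Fin m → ℝ) → Fin n → ℝ)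
    (K : NNReal) (hK : 0 < K) (κ : (Fin n → ℝ) → (Fin m → ℝ))
    (hf : ∀ y, LipschitzWith K (fun z => f z (κ y)))
    (s : ℝ) (hs : 0 < s) (hsK : s * (2 * K) ≤ 1) (x : Fin n → ℝ) :
    ∃ (u : ℝ → Fin m → ℝ) (ξ : ℝ → Fin n → ℝ), Measurable u ∧ (∀ t, u t ∈ range κ) ∧
      Continuous ξ ∧ ξ 0 = x ∧
      (∀ t, 0 ≤ t → HasDerivWithinAt ξ (f (ξ t) (u t)) (Ici t) t) ∧
      ∀ k : ℕ, ∀ t ∈ Ico (k * s) ((k + 1) * s), u t = κ (ξ (k * s)) := by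
  choose Φ hΦc hΦ0 hΦd using fun y => short_flow (fun z => f z (κ y)) K hK (hf y) s hs hsK y
  let y : ℕ → Fin n → ℝ := fun k => Nat.rec x (fun _ z => Φ z s) k
  have hy0 : y 0 = x := rfl
  have hyS : ∀ k, y (k + 1) = Φ (y k) s := fun k => rfl
  let ξ : ℝ → Fin n → ℝ := fun t => Φ (y ⌊t / s⌋₊) (t - ⌊t / s⌋₊ * s)
  let u : ℝ → Fin m → ℝ := fun t => κ (y ⌊t / s⌋₊)
  have hfl : ∀ k : ℕ, ∀ t ∈ Ico (k * s) ((k + 1) * s), ⌊t / s⌋₊ = k := by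
    intro k t ht
    have h0 : 0 ≤ t := le_trans (by positivity) ht.1
    rw [Nat.floor_eq_iff (by positivity)]
    exact ⟨(le_div_iff₀ hs).2 ht.1, (div_lt_iff₀ hs).2 ht.2⟩
  have hξ : ∀ k : ℕ, ∀ t ∈ Ico (k * s) ((k + 1) * s), ξ t = Φ (y k) (t - k * s) := by
    intro k t ht
    simp only [ξ, hfl k t ht]
  have hξk : ∀ k : ℕ, ξ (k * s) = y k := by
    intro k
    rw [hξ k _ ⟨le_rfl, by nlinarith⟩, sub_self, hΦ0]
  have hξ' : ∀ k : ℕ, ∀ t ∈ Icc (k * s) ((k + 1) * s), ξ t = Φ (y k) (t - k * s) := by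
    intro k t ht
    rcases ht.2.lt_or_eq with h | h
    · exact hξ k t ⟨ht.1, h⟩
    · have h2 := hξk (k + 1)
      push_cast at h2
      rw [h, h2, hyS]
      congr 1
      ring
  have hIic : ∀ k : ℕ, ContinuousOn ξ (Iic (k * s)) := by
    intro k
    induction k with
    | zero =>
      have : ContinuousOn (Φ x) (Iic ((0 : ℕ) * s)) := (hΦc x).continuousOn
      refine this.congr ?_
      intro t ht
      have ht : t ≤ 0 := by simpa using ht
      have h0 : ⌊t / s⌋₊ = 0 := Nat.floor_of_nonpos (div_nonpos_of_nonpos_of_nonneg ht hs.le)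
      simp only [ξ, h0, hy0]
      simp
    | succ k ih =>
      have h1 : ContinuousOn ξ (Icc (k * s) ((k + 1) * s)) := by
        have : ContinuousOn (fun t => Φ (y k) (t - k * s)) (Icc (k * s) ((k + 1) * s)) :=
          ((hΦc (y k)).comp (by fun_prop)).continuousOn
        exact this.congr (hξ' k)
      have h2 := ih.union_of_isClosed h1 isClosed_Iic isClosed_Icc
      refine h2.mono ?_
      intro t ht
      push_cast at ht
      rcases le_total t (k * s) with h | h
      · exact Or.inl h
      · exact Or.inr ⟨h, ht⟩
  refine ⟨u, ξ, ?_, ?_, ?_, ?_, ?_, ?_⟩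
  · have h1 : Measurable (fun k : ℕ => κ (y k)) := measurable_from_top
    have h2 : Measurable (fun t : ℝ => ⌊t / s⌋₊) := Nat.measurable_floor.comp (by fun_prop)
    exact h1.comp h2
  · intro t; exact mem_range_self _
  · rw [continuous_iff_continuousAt]
    intro t
    obtain ⟨k, hk⟩ := exists_nat_gt (t / s)
    exact (hIic k).continuousAt (Iic_mem_nhds ((div_lt_iff₀ hs).1 hk))
  · have := hξk 0
    simpa [hy0] using this
  · intro t ht
    have hk1 : (⌊t / s⌋₊ : ℝ) * s ≤ t := (le_div_iff₀ hs).1 (Nat.floor_le (by positivity))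
    have hk2 : t < (⌊t / s⌋₊ + 1 : ℝ) * s := (div_lt_iff₀ hs).1 (Nat.lt_floor_add_one _)
    set k := ⌊t / s⌋₊ with hk
    have hd := hΦd (y k) (t - k * s) ⟨by linarith, by linarith⟩
    have h2 : HasDerivWithinAt (fun r => Φ (y k) (r - k * s)) (f (ξ t) (u t)) (Ici t) t := by
      have h3 : HasDerivWithinAt (fun r : ℝ => r - k * s) 1 (Ici t) t :=
        (hasDerivWithinAt_id t _).sub_const _
      have h4 := HasDerivWithinAt.scomp t hd h3 (fun r hr => sub_le_sub_right hr _)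
      rw [one_smul] at h4
      exact h4
    refine h2.congr_of_eventuallyEq_of_mem ?_ self_mem_Ici
    have : Ico t ((k + 1) * s) ∈ 𝓝[≥] t := Ico_mem_nhdsGE hk2
    filter_upwards [this] with r hr
    exact hξ k r ⟨hk1.trans hr.1, hr.2⟩
  · intro k t ht
    simp only [u, hfl k t ht, hξk]

lemma traj_integrable {n m : ℕ} (f : (Fin n → ℝ) → (Fin m → ℝ) → Fin n → ℝ)
    (hfc : Continuous (Function.uncurry f)) (U : Set (Fin m → ℝ)) (hU : IsCompact U)
    (u : ℝ → Fin m → ℝ) (hu : IsControl U u) (ξ : ℝ → Fin n → ℝ) (hξ : Continuous ξ)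
    (t : ℝ) (ht : 0 ≤ t) :
    IntervalIntegrable (fun s => f (ξ s) (u s)) volume 0 t := by
  have hc : IsCompact ((ξ '' Icc 0 t) ×ˢ U) := (isCompact_Icc.image hξ).prod hU
  obtain ⟨C, hC⟩ := hc.exists_bound_of_continuousOn hfc.continuousOn
  have hm : Measurable (fun s => f (ξ s) (u s)) :=
    hfc.measurable.comp (hξ.measurable.prodMk hu.1)
  rw [intervalIntegrable_iff_integrableOn_Icc_of_le ht]
  refine Measure.integrableOn_of_bounded (M := C) (by simp) hm.aestronglyMeasurable ?_
  rw [ae_restrict_iff' measurableSet_Icc]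
  refine Eventually.of_forall fun s hs => ?_
  exact hC (ξ s, u s) ⟨mem_image_of_mem _ hs, hu.2 s hs.1⟩

lemma traj_of_deriv {n m : ℕ} (f : (Fin n → ℝ) → (Fin m → ℝ) → Fin n → ℝ)
    (hfc : Continuous (Function.uncurry f)) (U : Set (Fin m → ℝ)) (hU : IsCompact U)
    (u : ℝ → Fin m → ℝ) (hu : IsControl U u) (ξ : ℝ → Fin n → ℝ) (hξ : Continuous ξ)
    (x : Fin n → ℝ) (h0 : ξ 0 = x)
    (hd : ∀ t, 0 ≤ t → HasDerivWithinAt ξ (f (ξ t) (u t)) (Ici t) t) :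
    IsTrajectory f x u ξ := by
  refine ⟨hξ, fun t ht => ?_⟩
  rw [intervalIntegral.integral_eq_sub_of_hasDeriv_right_of_le ht hξ.continuousOn
    (fun r hr => (hd r hr.1.le).mono Ioi_subset_Ici_self)
    (traj_integrable f hfc U hU u hu ξ hξ t ht), h0]
  abel

/-- Time invariance implies the viscosity inequality. -/
lemma invariant_imp {n m : ℕ}
    (f : (Fin n → ℝ) → (Fin m → ℝ) → Fin n → ℝ) (U : Set (Fin m → ℝ))
    (hU : IsCompact U) (K : NNReal) (hf : LipschitzWith K (Function.uncurry f))
    (h : (Fin n → ℝ) → ℝ) (hh : Continuous h) (hh0 : ∀ x, 0 ≤ h x)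
    (hV : ∀ x : Fin n → ℝ, ∀ T : ℝ, 0 ≤ T →
      sSup {y : ℝ | ∃ u ξ, IsControl U u ∧ IsTrajectory f x u ξ ∧
        y = sInf ((fun t => h (ξ t)) '' Set.Icc 0 T)} = h x)
    (α : ℝ → ℝ) (hα : IsLocallyLipschitzClassK α) : IsViscosityCBF f U α h := by
  refine ⟨hh, fun x hx φ hφ hmax => ?_⟩
  by_contra hcon
  push Not at hcon
  have hfc := hf.continuous
  have hδ : 0 < α (h x) := by
    have := hα.1.2.1 (mem_Ici.2 le_rfl) (mem_Ici.2 hx.le) hx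
    rwa [hα.1.2.2] at this
  set δ := α (h x) with hδdef
  have hfxc : Continuous (f x) := hfc.comp (by fun_prop : Continuous fun u => (x, u))
  have hbd : BddAbove ((fun u => fderiv ℝ φ x (f x u)) '' U) :=
    (hU.image ((fderiv ℝ φ x).continuous.comp hfxc)).bddAbove
  have hA : ∀ u ∈ U, fderiv ℝ φ x (f x u) ≤ -δ := fun u hu =>
    (le_csSup hbd (mem_image_of_mem _ hu)).trans hcon.le
  set A := fderiv ℝ φ x with hAdef
  obtain ⟨C0, hC0⟩ := hU.exists_bound_of_continuousOn hfxc.continuousOn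
  set C : ℝ := max C0 1
  have hC1 : (1 : ℝ) ≤ C := le_max_right _ _
  have hC : ∀ u ∈ U, ‖f x u‖ ≤ C := fun u hu => (hC0 u hu).trans (le_max_left _ _)
  have hL : ∀ y z u, ‖f y u - f z u‖ ≤ K * ‖y - z‖ := by
    intro y z u
    have := hf.norm_sub_le (y, u) (z, u)
    simpa [Prod.norm_def] using this
  have hK0 : (0 : ℝ) ≤ K := K.coe_nonneg
  have hdiff : HasFDerivAt φ A x := (hφ.differentiable (by norm_num) x).hasFDerivAt
  have hc : 0 < δ / (8 * C) := by positivity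
  have hlo := hdiff.isLittleO.def hc
  obtain ⟨r, hr, hball⟩ := Metric.eventually_nhds_iff.1 (hlo.and hmax)
  obtain ⟨t0, ht0, ht1, ht2, ht3⟩ : ∃ t0 : ℝ, 0 < t0 ∧ t0 * K ≤ 1 / 2 ∧ 2 * C * t0 < r ∧
      ‖A‖ * K * (2 * C) * t0 ≤ δ / 4 := by
    have e1 : ∀ᶠ t in 𝓝[>] (0 : ℝ), t * (K : ℝ) < 1 / 2 := by
      apply nhdsWithin_le_nhds
      have : ContinuousAt (fun t : ℝ => t * (K : ℝ)) 0 := by fun_prop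
      exact this.eventually_lt_const (by norm_num)
    have e2 : ∀ᶠ t in 𝓝[>] (0 : ℝ), 2 * C * t < r := by
      apply nhdsWithin_le_nhds
      have : ContinuousAt (fun t : ℝ => 2 * C * t) 0 := by fun_prop
      exact this.eventually_lt_const (by simpa using hr)
    have e3 : ∀ᶠ t in 𝓝[>] (0 : ℝ), ‖A‖ * K * (2 * C) * t < δ / 4 := by
      apply nhdsWithin_le_nhds
      have : ContinuousAt (fun t : ℝ => ‖A‖ * K * (2 * C) * t) 0 := by fun_prop
      exact this.eventually_lt_const (by simpa using hδ)
    obtain ⟨t, h1, h2, h3, h4⟩ :=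
      ((eventually_mem_nhdsWithin (a := (0 : ℝ)) (s := Ioi 0)).and
        (e1.and (e2.and e3))).exists
    exact ⟨t, h1, h2.le, h3, h4.le⟩
  have hkey : ∀ u ξ, IsControl U u → IsTrajectory f x u ξ → h (ξ t0) ≤ h x - t0 * (δ / 2) := by
    intro u ξ hu hξ
    have hξ0 : ξ 0 = x := by simpa using hξ.2 0 le_rfl
    obtain ⟨ts, hts, htmax⟩ := isCompact_Icc.exists_isMaxOn (nonempty_Icc.2 ht0.le)
      (f := fun t => ‖ξ t - x‖) ((hξ.1.sub continuous_const).norm.continuousOn)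
    have hm : ∀ t ∈ Icc 0 t0, ‖ξ t - x‖ ≤ ‖ξ ts - x‖ := fun t ht => htmax ht
    have hspeed : ‖ξ ts - x‖ ≤ (C + K * ‖ξ ts - x‖) * t0 := by
      have e : ξ ts - x = ∫ s in (0 : ℝ)..ts, f (ξ s) (u s) := by
        rw [hξ.2 ts hts.1]; abel
      have := intervalIntegral.norm_integral_le_of_norm_le_const (a := 0) (b := ts)
        (f := fun s => f (ξ s) (u s)) (C := C + K * ‖ξ ts - x‖) ?_
      · rw [← e, sub_zero, abs_of_nonneg hts.1] at this
        refine this.trans ?_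
        have := hts.2
        gcongr
      · intro s hs
        rw [uIoc_of_le hts.1] at hs
        have h1 := hm s ⟨hs.1.le, hs.2.trans hts.2⟩
        have h2 := hL (ξ s) x (u s)
        have h3 := hC (u s) (hu.2 s hs.1.le)
        have h4 : ‖f (ξ s) (u s)‖ ≤ ‖f (ξ s) (u s) - f x (u s)‖ + ‖f x (u s)‖ := by
          simpa using norm_add_le (f (ξ s) (u s) - f x (u s)) (f x (u s))
        have h5 : (K : ℝ) * ‖ξ s - x‖ ≤ K * ‖ξ ts - x‖ := by gcongr
        linarith
    have hρ : ‖ξ ts - x‖ ≤ 2 * C * t0 := by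
      have := norm_nonneg (ξ ts - x)
      nlinarith
    have hρ' : ∀ t ∈ Icc 0 t0, ‖ξ t - x‖ ≤ 2 * C * t0 := fun t ht => (hm t ht).trans hρ
    have hint := traj_integrable f hfc U hU u hu ξ hξ.1 t0 ht0.le
    have hAi : A (ξ t0 - x) = ∫ s in (0 : ℝ)..t0, A (f (ξ s) (u s)) := by
      rw [A.intervalIntegral_comp_comm hint, hξ.2 t0 ht0.le]
      simp
    have hAle : A (ξ t0 - x) ≤ t0 * (-δ + δ / 4) := by
      rw [hAi]
      have h1 : (∫ s in (0 : ℝ)..t0, A (f (ξ s) (u s))) ≤ ∫ s in (0 : ℝ)..t0, (-δ + δ / 4) := by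
        refine intervalIntegral.integral_mono_on ht0.le ?_ (by simp) ?_
        · exact ⟨A.integrable_comp hint.1, A.integrable_comp hint.2⟩
        · intro s hs
          have h1 := hρ' s hs
          have h2 := hL (ξ s) x (u s)
          have h3 := hA (u s) (hu.2 s hs.1)
          have h4 := A.le_opNorm (f (ξ s) (u s) - f x (u s))
          have h5 := (le_abs_self _).trans h4
          rw [map_sub] at h5
          have h6 : ‖A‖ * ‖f (ξ s) (u s) - f x (u s)‖ ≤ ‖A‖ * (K * (2 * C * t0)) := by
            gcongr
            exact h2.trans (by gcongr)
          nlinarith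
      rwa [intervalIntegral.integral_const, sub_zero, smul_eq_mul] at h1
    have hin := hρ' t0 ⟨ht0.le, le_rfl⟩
    obtain ⟨hb1, hb2⟩ := hball (y := ξ t0) (by rw [dist_eq_norm]; linarith)
    have hb3 : φ (ξ t0) - φ x - A (ξ t0 - x) ≤ δ / (8 * C) * (2 * C * t0) :=
      (le_abs_self _).trans (hb1.trans (by gcongr))
    have hb4 : δ / (8 * C) * (2 * C * t0) = t0 * (δ / 4) := by field_simp; ring
    simp only at hb2
    nlinarith
  have hVx := hV x t0 ht0.le
  have hne : {y : ℝ | ∃ u ξ, IsControl U u ∧ IsTrajectory f x u ξ ∧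
        y = sInf ((fun t => h (ξ t)) '' Set.Icc 0 t0)}.Nonempty := by
    by_contra hne
    rw [not_nonempty_iff_eq_empty] at hne
    rw [hne, Real.sSup_empty] at hVx
    linarith
  have : h x ≤ h x - t0 * (δ / 2) := by
    nth_rw 1 [← hVx]
    refine csSup_le hne ?_
    rintro y ⟨u, ξ, hu, hξ, rfl⟩
    refine (csInf_le ⟨0, ?_⟩ (mem_image_of_mem _ (right_mem_Icc.2 ht0.le))).trans (hkey u ξ hu hξ)
    rintro _ ⟨t, _, rfl⟩
    exact hh0 _
  have : 0 < t0 * (δ / 2) := by positivity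
  linarith

lemma dot_le {n : ℕ} (v w : Fin n → ℝ) : |v ⬝ᵥ w| ≤ n * (‖v‖ * ‖w‖) := by
  unfold dotProduct
  refine (Finset.abs_sum_le_sum_abs _ _).trans ?_
  have : ∀ i ∈ Finset.univ, |v i * w i| ≤ ‖v‖ * ‖w‖ := by
    intro i _
    rw [abs_mul]
    exact mul_le_mul (norm_le_pi_norm v i) (norm_le_pi_norm w i) (abs_nonneg _) (norm_nonneg _)
  refine (Finset.sum_le_card_nsmul _ _ _ this).trans ?_
  simp

lemma sq_le_dot {n : ℕ} (v : Fin n → ℝ) : ‖v‖ ^ 2 ≤ v ⬝ᵥ v := by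
  have h0 : 0 ≤ v ⬝ᵥ v := Finset.sum_nonneg fun i _ => mul_self_nonneg _
  have : ‖v‖ ≤ Real.sqrt (v ⬝ᵥ v) := by
    rw [pi_norm_le_iff_of_nonneg (Real.sqrt_nonneg _)]
    intro i
    refine Real.abs_le_sqrt ?_
    rw [sq]
    exact Finset.single_le_sum (f := fun i => v i * v i) (fun i _ => mul_self_nonneg _)
      (Finset.mem_univ i)
  exact (Real.le_sqrt (norm_nonneg _) h0).1 this

lemma dot_step {n : ℕ} (z y d v : Fin n → ℝ) (s L M ε ω : ℝ) (hs : 0 < s) (hL : 0 ≤ L)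
    (hM : 0 ≤ M) (hε : 0 < ε) (h1 : 0 ≤ (z - y) ⬝ᵥ v)
    (h2 : ‖d - s • v‖ ≤ s * (L * (M * s + ‖z - y‖))) (h3 : ‖d‖ ≤ M * s) (h4 : ‖z - y‖ ≤ 1)
    (h5 : ‖z - y‖ ^ 2 ≤ 2 * ε * ω) :
    (z - (y + d)) ⬝ᵥ (z - (y + d)) / (2 * ε) ≤ (z - y) ⬝ᵥ (z - y) / (2 * ε) +
      s * (2 * n * L * ω + (n * L * M + n * M ^ 2 / 2) / ε * s) := by
  have e1 : (z - (y + d)) ⬝ᵥ (z - (y + d)) =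
      (z - y) ⬝ᵥ (z - y) - 2 * ((z - y) ⬝ᵥ d) + d ⬝ᵥ d := by
    have : z - (y + d) = (z - y) - d := by abel
    rw [this]
    generalize z - y = w
    rw [sub_dotProduct, dotProduct_sub, dotProduct_sub, dotProduct_comm d w]
    ring
  have e2 : (z - y) ⬝ᵥ d = s * ((z - y) ⬝ᵥ v) + (z - y) ⬝ᵥ (d - s • v) := by
    rw [dotProduct_sub, dotProduct_smul, smul_eq_mul]; ring
  have hn : (0 : ℝ) ≤ n := Nat.cast_nonneg n
  have e3 : -(n * (‖z - y‖ * (s * (L * (M * s + ‖z - y‖))))) ≤ (z - y) ⬝ᵥ (d - s • v) := by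
    have a1 := (abs_le.1 (dot_le (z - y) (d - s • v))).1
    have a2 : n * (‖z - y‖ * ‖d - s • v‖) ≤
        n * (‖z - y‖ * (s * (L * (M * s + ‖z - y‖)))) := by gcongr
    linarith
  have e4 : d ⬝ᵥ d ≤ n * (M * s) ^ 2 := by
    have a1 := (abs_le.1 (dot_le d d)).2
    have a2 : (n : ℝ) * (‖d‖ * ‖d‖) ≤ n * ((M * s) * (M * s)) := by gcongr
    nlinarith
  have e5 : n * (‖z - y‖ * (s * (L * (M * s + ‖z - y‖)))) ≤
      n * s * L * (M * s + 2 * ε * ω) := by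
    have a1 : ‖z - y‖ * (M * s + ‖z - y‖) ≤ M * s + 2 * ε * ω := by
      have : ‖z - y‖ * (M * s) ≤ 1 * (M * s) := by gcongr
      nlinarith
    calc _ = n * s * L * (‖z - y‖ * (M * s + ‖z - y‖)) := by ring
      _ ≤ _ := by gcongr
  have e6 : 0 ≤ s * ((z - y) ⬝ᵥ v) := mul_nonneg hs.le h1
  have e7 : (z - (y + d)) ⬝ᵥ (z - (y + d)) ≤ (z - y) ⬝ᵥ (z - y) +
      (2 * (n * s * L * (M * s + 2 * ε * ω)) + n * (M * s) ^ 2) := by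
    rw [e1, e2]; linarith
  calc _ ≤ ((z - y) ⬝ᵥ (z - y) +
      (2 * (n * s * L * (M * s + 2 * ε * ω)) + n * (M * s) ^ 2)) / (2 * ε) := by gcongr
    _ = _ := by field_simp; ring

lemma quad_contDiff {n : ℕ} (y : Fin n → ℝ) (ε : ℝ) :
    ContDiff ℝ 1 (fun w : Fin n → ℝ => (w - y) ⬝ᵥ (w - y) / (2 * ε)) := by
  simp only [dotProduct, Pi.sub_apply]
  fun_prop

lemma quad_fderiv {n : ℕ} (y z v : Fin n → ℝ) (ε : ℝ) :
    fderiv ℝ (fun w : Fin n → ℝ => (w - y) ⬝ᵥ (w - y) / (2 * ε)) z v =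
      ((z - y) ⬝ᵥ v) / ε := by
  have h1 : ∀ i ∈ (Finset.univ : Finset (Fin n)),
      HasFDerivAt (fun w : Fin n → ℝ => (w i - y i) * (w i - y i))
      ((z i - y i) • (ContinuousLinearMap.proj (R := ℝ) (φ := fun _ : Fin n => ℝ) i) +
        (z i - y i) • (ContinuousLinearMap.proj (R := ℝ) (φ := fun _ : Fin n => ℝ) i)) z := by
    intro i _
    have h0 : HasFDerivAt (fun w : Fin n → ℝ => w i - y i)
      (ContinuousLinearMap.proj (R := ℝ) (φ := fun _ : Fin n => ℝ) i) z :=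
      (hasFDerivAt_apply i z).sub_const _
    exact h0.mul h0
  have h2 := (HasFDerivAt.fun_sum h1).mul_const (2 * ε)⁻¹
  have h3 : (fun w : Fin n → ℝ => (w - y) ⬝ᵥ (w - y) / (2 * ε)) =
      fun w => (∑ i, (w i - y i) * (w i - y i)) * (2 * ε)⁻¹ := by
    funext w
    simp only [dotProduct, Pi.sub_apply, div_eq_mul_inv]
  rw [h3, h2.fderiv]
  simp only [_root_.smul_apply, _root_.sum_apply,
    _root_.add_apply, ContinuousLinearMap.proj_apply, smul_eq_mul, dotProduct,
    Pi.sub_apply, ← two_mul]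
  rw [← Finset.mul_sum, mul_inv]
  ring

lemma key_lemma {n m : ℕ}
    (f : (Fin n → ℝ) → (Fin m → ℝ) → Fin n → ℝ) (U : Set (Fin m → ℝ))
    (hU : IsCompact U) (hUne : U.Nonempty) (K : NNReal) (hK : 0 < K)
    (hf : LipschitzWith K (Function.uncurry f))
    (h : (Fin n → ℝ) → ℝ) (hh : Continuous h) (hh0 : ∀ x, 0 ≤ h x)
    (H : ∀ z, 0 < h z → ∀ φ : (Fin n → ℝ) → ℝ, ContDiff ℝ 1 φ →
      IsLocalMax (fun y => h y - φ y) z → ∃ u ∈ U, 0 ≤ fderiv ℝ φ z (f z u))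
    (x : Fin n → ℝ) (T : ℝ) (hT : 0 ≤ T) (η : ℝ) (hη : 0 < η) (hηx : η < h x) :
    ∃ u ξ, IsControl U u ∧ IsTrajectory f x u ξ ∧ ∀ t ∈ Icc 0 T, h x - η ≤ h (ξ t) := by
  have hfc := hf.continuous
  have hL : ∀ y z u, ‖f y u - f z u‖ ≤ K * ‖y - z‖ := by
    intro y z u
    have := hf.norm_sub_le (y, u) (z, u)
    simpa [Prod.norm_def] using this
  have hK0 : (0 : ℝ) < K := hK
  have hf0c : Continuous (f 0) := hfc.comp (by fun_prop : Continuous fun u => ((0 : Fin n → ℝ), u))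
  obtain ⟨C0, hC0⟩ := hU.exists_bound_of_continuousOn hf0c.continuousOn
  obtain ⟨C, hC, hCK, hCC⟩ : ∃ C : ℝ, 0 ≤ C ∧ K ≤ C ∧ C0 ≤ C :=
    ⟨max K C0, hK0.le.trans (le_max_left _ _), le_max_left _ _, le_max_right _ _⟩
  have hgrow : ∀ y, ∀ u ∈ U, ‖f y u‖ ≤ C * ‖y‖ + C := by
    intro y u hu
    have h1 := hL y 0 u
    rw [sub_zero] at h1
    have h2 := hC0 u hu
    have h4 : ‖f y u‖ ≤ ‖f y u - f 0 u‖ + ‖f 0 u‖ := by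
      simpa using norm_add_le (f y u - f 0 u) (f 0 u)
    have h5 : (K : ℝ) * ‖y‖ ≤ C * ‖y‖ := by gcongr
    linarith
  set R := gronwallBound ‖x‖ C C T with hR
  have hmono := gronwallBound_mono (norm_nonneg x) hC hC
  have hR0 : 0 ≤ R := by
    have := hmono hT
    rw [gronwallBound_x0] at this
    exact (norm_nonneg x).trans this
  have hxR : ‖x‖ ≤ R := by
    have := hmono hT
    rwa [gronwallBound_x0] at this
  set M := C * R + C with hMdef
  have hM : 0 ≤ M := by positivity
  have hB : IsCompact (Metric.closedBall (0 : Fin n → ℝ) (R + 1)) := isCompact_closedBall _ _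
  obtain ⟨Mh, hMh⟩ := hB.exists_bound_of_continuousOn hh.continuousOn
  have hn : (0 : ℝ) ≤ n := Nat.cast_nonneg n
  -- the modulus
  obtain ⟨ω, hω, hω1, hω2⟩ : ∃ ω : ℝ, 0 < ω ∧ T * (2 * n * K * ω) ≤ η / 4 ∧ 2 * ω ≤ η / 4 := by
    have e1 : ∀ᶠ t in 𝓝[>] (0 : ℝ), T * (2 * n * K * t) < η / 4 := by
      apply nhdsWithin_le_nhds
      have : ContinuousAt (fun t : ℝ => T * (2 * n * K * t)) 0 := by fun_prop
      exact this.eventually_lt_const (by simpa using hη)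
    have e2 : ∀ᶠ t in 𝓝[>] (0 : ℝ), 2 * t < η / 4 := by
      apply nhdsWithin_le_nhds
      have : ContinuousAt (fun t : ℝ => 2 * t) 0 := by fun_prop
      exact this.eventually_lt_const (by simpa using hη)
    obtain ⟨t, h1, h2, h3⟩ :=
      ((eventually_mem_nhdsWithin (a := (0 : ℝ)) (s := Ioi 0)).and (e1.and e2)).exists
    exact ⟨t, h1, h2.le, h3.le⟩
  obtain ⟨δ, hδ, hδ1, hδh⟩ : ∃ δ : ℝ, 0 < δ ∧ δ < 1 ∧
      ∀ y ∈ Metric.closedBall (0 : Fin n → ℝ) (R + 1),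
      ∀ z ∈ Metric.closedBall (0 : Fin n → ℝ) (R + 1), ‖z - y‖ ≤ δ → |h z - h y| ≤ ω := by
    have huc := hB.uniformContinuousOn_of_continuous hh.continuousOn
    rw [Metric.uniformContinuousOn_iff] at huc
    obtain ⟨d, hd, hd'⟩ := huc ω hω
    refine ⟨min (d / 2) (1 / 2), by positivity, ?_, ?_⟩
    · exact (min_le_right _ _).trans_lt (by norm_num)
    · intro y hy z hz hzy
      have := hd' z hz y hy (by
        rw [dist_eq_norm]
        exact (hzy.trans (min_le_left _ _)).trans_lt (by linarith))
      rw [Real.dist_eq] at this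
      exact this.le
  obtain ⟨ε, hε, hε1⟩ : ∃ ε : ℝ, 0 < ε ∧ 2 * ε * Mh < δ ^ 2 := by
    have e1 : ∀ᶠ t in 𝓝[>] (0 : ℝ), 2 * t * Mh < δ ^ 2 := by
      apply nhdsWithin_le_nhds
      have : ContinuousAt (fun t : ℝ => 2 * t * Mh) 0 := by fun_prop
      exact this.eventually_lt_const (by simpa using pow_pos hδ 2)
    obtain ⟨t, h1, h2⟩ :=
      ((eventually_mem_nhdsWithin (a := (0 : ℝ)) (s := Ioi 0)).and e1).exists
    exact ⟨t, h1, h2⟩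
  set c := (n * K * M + n * M ^ 2 / 2) / ε with hcdef
  have hc : 0 ≤ c := by positivity
  obtain ⟨s, hs, hs1, hs2, hs3⟩ : ∃ s : ℝ, 0 < s ∧ s * (2 * K) ≤ 1 ∧ M * s ≤ δ ∧
      T * (c * s) ≤ η / 4 := by
    have e1 : ∀ᶠ t in 𝓝[>] (0 : ℝ), t * (2 * (K : ℝ)) < 1 := by
      apply nhdsWithin_le_nhds
      have : ContinuousAt (fun t : ℝ => t * (2 * (K : ℝ))) 0 := by fun_prop
      exact this.eventually_lt_const (by norm_num)
    have e2 : ∀ᶠ t in 𝓝[>] (0 : ℝ), M * t < δ := by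
      apply nhdsWithin_le_nhds
      have : ContinuousAt (fun t : ℝ => M * t) 0 := by fun_prop
      exact this.eventually_lt_const (by simpa using hδ)
    have e3 : ∀ᶠ t in 𝓝[>] (0 : ℝ), T * (c * t) < η / 4 := by
      apply nhdsWithin_le_nhds
      have : ContinuousAt (fun t : ℝ => T * (c * t)) 0 := by fun_prop
      exact this.eventually_lt_const (by simpa using hη)
    obtain ⟨t, h1, h2, h3, h4⟩ :=
      ((eventually_mem_nhdsWithin (a := (0 : ℝ)) (s := Ioi 0)).and
        (e1.and (e2.and e3))).exists
    exact ⟨t, h1, h2.le, h3.le, h4.le⟩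
  -- the maximizers
  have hZex : ∀ y : Fin n → ℝ, ∃ z ∈ Metric.closedBall (0 : Fin n → ℝ) (R + 1),
      ∀ w ∈ Metric.closedBall (0 : Fin n → ℝ) (R + 1),
        h w - (w - y) ⬝ᵥ (w - y) / (2 * ε) ≤ h z - (z - y) ⬝ᵥ (z - y) / (2 * ε) := by
    intro y
    obtain ⟨z, hz, hmax⟩ := hB.exists_isMaxOn (Metric.nonempty_closedBall.2 (by linarith))
      (f := fun w => h w - (w - y) ⬝ᵥ (w - y) / (2 * ε))
      (hh.sub (quad_contDiff y ε).continuous).continuousOn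
    exact ⟨z, hz, fun w hw => hmax hw⟩
  choose Z hZB hZmax using hZex
  have hRB : ∀ y : Fin n → ℝ, ‖y‖ ≤ R → y ∈ Metric.closedBall (0 : Fin n → ℝ) (R + 1) := by
    intro y hy; rw [mem_closedBall_zero_iff]; linarith
  have hZq : ∀ y : Fin n → ℝ, ‖y‖ ≤ R →
      h y + (Z y - y) ⬝ᵥ (Z y - y) / (2 * ε) ≤ h (Z y) := by
    intro y hy
    have := hZmax y y (hRB y hy)
    simp only [sub_self, zero_dotProduct, zero_div, sub_zero] at this
    linarith
  have hZsq : ∀ y : Fin n → ℝ, ‖y‖ ≤ R → ‖Z y - y‖ ^ 2 ≤ 2 * ε * (h (Z y) - h y) := by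
    intro y hy
    have h1 := hZq y hy
    have h2 := sq_le_dot (Z y - y)
    have h3 : (Z y - y) ⬝ᵥ (Z y - y) / (2 * ε) ≤ h (Z y) - h y := by linarith
    rw [div_le_iff₀ (by positivity)] at h3
    linarith
  have hZδ : ∀ y : Fin n → ℝ, ‖y‖ ≤ R → ‖Z y - y‖ < δ := by
    intro y hy
    have h1 := hZsq y hy
    have h2 := hMh (Z y) (hZB y)
    have h3 := hh0 y
    have h4 : h (Z y) - h y ≤ Mh := by
      have := (le_abs_self _).trans h2
      linarith
    have h5 : 2 * ε * (h (Z y) - h y) ≤ 2 * ε * Mh := by gcongr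
    exact lt_of_pow_lt_pow_left₀ 2 hδ.le (by linarith)
  have hZh : ∀ y : Fin n → ℝ, ‖y‖ ≤ R → h (Z y) - h y ≤ ω := by
    intro y hy
    exact (le_abs_self _).trans (hδh y (hRB y hy) (Z y) (hZB y) (hZδ y hy).le)
  have hκex : ∀ y : Fin n → ℝ, ∃ u ∈ U, ‖y‖ ≤ R → 0 < h (Z y) →
      0 ≤ (Z y - y) ⬝ᵥ f (Z y) u := by
    intro y
    by_cases hy : ‖y‖ ≤ R ∧ 0 < h (Z y)
    · obtain ⟨hy, hpos⟩ := hy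
      have hlm : IsLocalMax (fun w => h w - (w - y) ⬝ᵥ (w - y) / (2 * ε)) (Z y) := by
        have hnear : ‖Z y‖ < R + 1 := by
          have h1 := hZδ y hy
          have h2 : ‖Z y‖ ≤ ‖Z y - y‖ + ‖y‖ := by simpa using norm_add_le (Z y - y) y
          linarith
        have : Metric.closedBall (0 : Fin n → ℝ) (R + 1) ∈ 𝓝 (Z y) :=
          mem_of_superset (Metric.isOpen_ball.mem_nhds (mem_ball_zero_iff.2 hnear))
            Metric.ball_subset_closedBall
        filter_upwards [this] with w hw using hZmax y w hw
      obtain ⟨u, hu, hu0⟩ := H (Z y) hpos _ (quad_contDiff y ε) hlm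
      refine ⟨u, hu, fun _ _ => ?_⟩
      rw [quad_fderiv] at hu0
      have := mul_nonneg hu0 hε.le
      rwa [div_mul_cancel₀ _ hε.ne'] at this
    · obtain ⟨u, hu⟩ := hUne
      exact ⟨u, hu, fun h1 h2 => absurd ⟨h1, h2⟩ hy⟩
  choose κ hκU hκ using hκex
  obtain ⟨u, ξ, hum, hur, hξc, hξ0, hξd, huk⟩ := sample_hold f K hK κ
    (fun y => LipschitzWith.of_dist_le_mul fun a b => by
      rw [dist_eq_norm, dist_eq_norm]; exact hL a b _) s hs hs1 x
  have hcontrol : IsControl U u := by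
    refine ⟨hum, fun t _ => ?_⟩
    obtain ⟨y, hy⟩ := hur t
    rw [← hy]; exact hκU y
  refine ⟨u, ξ, hcontrol, traj_of_deriv f hfc U hU u hcontrol ξ hξc x hξ0 hξd, ?_⟩
  have hξR : ∀ t ∈ Icc 0 T, ‖ξ t‖ ≤ R := by
    intro t ht
    have := norm_le_gronwallBound_of_norm_deriv_right_le (f := ξ) (δ := ‖x‖) (K := C) (ε := C)
      (a := 0) (b := T) hξc.continuousOn (fun r hr => hξd r hr.1) (by rw [hξ0])
      (fun r hr => hgrow _ _ (hcontrol.2 r hr.1)) t ht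
    rw [sub_zero] at this
    exact this.trans (hmono ht.2)
  have hspeed : ∀ a b, 0 ≤ a → a ≤ b → b ≤ T → ‖ξ b - ξ a‖ ≤ M * (b - a) := by
    intro a b ha hab hb
    refine norm_image_sub_le_of_norm_deriv_right_le_segment (f := ξ) (a := a) (b := b) (C := M)
      hξc.continuousOn (fun r hr => hξd r (ha.trans hr.1)) ?_ b ⟨hab, le_rfl⟩
    intro r hr
    have h1 := hgrow (ξ r) (u r) (hcontrol.2 r (ha.trans hr.1))
    have h2 := hξR r ⟨ha.trans hr.1, hr.2.le.trans hb⟩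
    have h3 : C * ‖ξ r‖ ≤ C * R := by gcongr
    linarith
  set lam := 2 * n * K * ω + c * s with hlam
  have hlam0 : 0 ≤ lam := by positivity
  have hTlam : T * lam ≤ η / 2 := by
    rw [hlam, mul_add]; linarith
  have hloop : ∀ k : ℕ, k * s ≤ T → h x - k * s * lam ≤
      h (Z (ξ (k * s))) - (Z (ξ (k * s)) - ξ (k * s)) ⬝ᵥ (Z (ξ (k * s)) - ξ (k * s)) / (2 * ε) := by
    intro k
    induction k with
    | zero =>
      intro _
      have := hZq x hxR
      simp only [Nat.cast_zero, zero_mul, sub_zero, hξ0]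
      linarith
    | succ k ih =>
      intro hk
      push_cast at hk ⊢
      have hks0 : 0 ≤ (k : ℝ) * s := by positivity
      have hks : (k : ℝ) * s ≤ T := by linarith
      have ih' := ih hks
      set y := ξ (k * s) with hy
      set y' := ξ ((k + 1) * s) with hy'
      have hyR : ‖y‖ ≤ R := hξR _ ⟨hks0, hks⟩
      have hq0 : 0 ≤ (Z y - y) ⬝ᵥ (Z y - y) / (2 * ε) :=
        div_nonneg ((sq_nonneg _).trans (sq_le_dot _)) (by positivity)
      have hpos : 0 < h (Z y) := by
        have : k * s * lam ≤ T * lam := by gcongr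
        linarith
      have hdot := hκ y hyR hpos
      have hd1 : ‖y' - y‖ ≤ M * s := by
        have := hspeed (k * s) ((k + 1) * s) hks0 (by linarith) (by linarith)
        have e : ((k : ℝ) + 1) * s - k * s = s := by ring
        rwa [e] at this
      have hd2 : ‖(y' - y) - s • f (Z y) (κ y)‖ ≤ s * (K * (M * s + ‖Z y - y‖)) := by
        have hder : ∀ r ∈ Ico (k * s) ((k + 1) * s),
            HasDerivWithinAt (fun t => ξ t - (t - k * s) • f (Z y) (κ y))
              (f (ξ r) (u r) - f (Z y) (κ y)) (Ici r) r := by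
          intro r hr
          have h1 := hξd r (hks0.trans hr.1)
          have h2 : HasDerivWithinAt (fun t : ℝ => (t - k * s) • f (Z y) (κ y))
              ((1 : ℝ) • f (Z y) (κ y)) (Ici r) r :=
            ((hasDerivWithinAt_id r _).sub_const _).smul_const _
          rw [one_smul] at h2
          exact h1.sub h2
        have := norm_image_sub_le_of_norm_deriv_right_le_segment
          (f := fun t => ξ t - (t - k * s) • f (Z y) (κ y)) (a := k * s) (b := (k + 1) * s)
          (C := K * (M * s + ‖Z y - y‖)) (by fun_prop) hder ?_ ((k + 1) * s)
          ⟨by linarith, le_rfl⟩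
        · have e : ((k : ℝ) + 1) * s - k * s = s := by ring
          simp only [e, sub_self, zero_smul, sub_zero] at this
          rw [mul_comm s]
          have e2 : (y' - y) - s • f (Z y) (κ y) = y' - s • f (Z y) (κ y) - y := by abel
          rw [e2]
          exact this
        · intro r hr
          rw [huk k r hr]
          refine (hL _ _ _).trans ?_
          gcongr
          have h1 : ‖ξ r - Z y‖ ≤ ‖ξ r - y‖ + ‖y - Z y‖ := norm_sub_le_norm_sub_add_norm_sub _ _ _
          have h2 := hspeed (k * s) r hks0 hr.1 (hr.2.le.trans hk)
          rw [norm_sub_rev y] at h1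
          have h3 : M * (r - k * s) ≤ M * s := by
            gcongr
            linarith [hr.2]
          linarith
      have hstep := dot_step (Z y) y (y' - y) (f (Z y) (κ y)) s K M ε ω hs hK0.le hM hε hdot hd2 hd1
        ((hZδ y hyR).le.trans hδ1.le) ((hZsq y hyR).trans (by
          have := hZh y hyR
          gcongr))
      rw [add_sub_cancel] at hstep
      have hmx := hZmax y' (Z y) (hZB y)
      rw [← hcdef, ← hlam] at hstep
      linarith
  intro t ht
  have hk1 : (⌊t / s⌋₊ : ℝ) * s ≤ t := (le_div_iff₀ hs).1 (Nat.floor_le (div_nonneg ht.1 hs.le))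
  have hk2 : t < (⌊t / s⌋₊ + 1 : ℝ) * s := (div_lt_iff₀ hs).1 (Nat.lt_floor_add_one _)
  set k := ⌊t / s⌋₊
  have hks0 : 0 ≤ (k : ℝ) * s := by positivity
  have hks : (k : ℝ) * s ≤ T := hk1.trans ht.2
  have h1 := hloop k hks
  have h2 := hspeed (k * s) t hks0 hk1 ht.2
  have h3 : ‖ξ t - ξ (k * s)‖ ≤ δ := by
    refine h2.trans (le_trans ?_ hs2)
    gcongr
    linarith
  have hyR := hξR _ ⟨hks0, hks⟩
  have h4 := (abs_le.1 (hδh _ (hRB _ hyR) _ (hRB _ (hξR t ht)) h3)).1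
  have h5 := hZh _ hyR
  have h6 : k * s * lam ≤ T * lam := by gcongr
  have h7 : 0 ≤ (Z (ξ (k * s)) - ξ (k * s)) ⬝ᵥ (Z (ξ (k * s)) - ξ (k * s)) / (2 * ε) :=
    div_nonneg ((sq_nonneg _).trans (sq_le_dot _)) (by positivity)
  linarith

lemma imp_invariant {n m : ℕ}
    (f : (Fin n → ℝ) → (Fin m → ℝ) → Fin n → ℝ) (U : Set (Fin m → ℝ))
    (hU : IsCompact U) (hUne : U.Nonempty) (K : NNReal)
    (hf : LipschitzWith K (Function.uncurry f))
    (h : (Fin n → ℝ) → ℝ) (hh : Continuous h) (hh0 : ∀ x, 0 ≤ h x)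
    (hV : ∀ α : ℝ → ℝ, IsLocallyLipschitzClassK α → IsViscosityCBF f U α h)
    (x : Fin n → ℝ) (T : ℝ) (hT : 0 ≤ T) :
      sSup {y : ℝ | ∃ u ξ, IsControl U u ∧ IsTrajectory f x u ξ ∧
        y = sInf ((fun t => h (ξ t)) '' Set.Icc 0 T)} = h x := by
  have H : ∀ z, 0 < h z → ∀ φ : (Fin n → ℝ) → ℝ, ContDiff ℝ 1 φ →
      IsLocalMax (fun y => h y - φ y) z → ∃ u ∈ U, 0 ≤ fderiv ℝ φ z (f z u) := by
    intro z hz φ hφ hmax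
    have hfzc : Continuous (f z) :=
      hf.continuous.comp (by fun_prop : Continuous fun u => (z, u))
    have hcont : Continuous (fun u => fderiv ℝ φ z (f z u)) :=
      (fderiv ℝ φ z).continuous.comp hfzc
    have hsup : 0 ≤ sSup ((fun u => fderiv ℝ φ z (f z u)) '' U) := by
      refine le_of_forall_pos_le_add fun e he => ?_
      have hlin : IsLocallyLipschitzClassK (fun r => (e / h z) * r) := by
        have hp : 0 < e / h z := by positivity
        refine ⟨⟨by fun_prop, ?_, by simp⟩, ?_⟩
        · intro a _ b _ hab
          exact mul_lt_mul_of_pos_left hab hp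
        · intro r _
          refine ⟨(e / h z).toNNReal, univ, univ_mem, ?_⟩
          refine LipschitzOnWith.of_dist_le_mul fun a _ b _ => ?_
          rw [Real.dist_eq, Real.dist_eq, ← mul_sub, abs_mul, abs_of_pos hp,
            Real.coe_toNNReal _ hp.le]
      have := (hV _ hlin).2 z hz φ hφ hmax
      simp only [div_mul_cancel₀ _ hz.ne'] at this
      linarith
    obtain ⟨u, hu, hu'⟩ := (hU.image hcont).sSup_mem (hUne.image _)
    exact ⟨u, hu, by simpa only [hu'] using hsup⟩
  have hle : ∀ y ∈ {y : ℝ | ∃ u ξ, IsControl U u ∧ IsTrajectory f x u ξ ∧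
        y = sInf ((fun t => h (ξ t)) '' Set.Icc 0 T)}, y ≤ h x := by
    rintro y ⟨u, ξ, hu, hξ, rfl⟩
    have hξ0 : ξ 0 = x := by simpa using hξ.2 0 le_rfl
    have : sInf ((fun t => h (ξ t)) '' Set.Icc 0 T) ≤ (fun t => h (ξ t)) 0 := by
      refine csInf_le ⟨0, ?_⟩ (mem_image_of_mem _ (left_mem_Icc.2 hT))
      rintro _ ⟨t, _, rfl⟩
      exact hh0 _
    simpa [hξ0] using this
  refine le_antisymm (Real.sSup_le hle (hh0 x)) ?_
  refine le_of_forall_pos_le_add fun η hη => ?_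
  rw [← sub_le_iff_le_add]
  rcases le_or_gt (h x) η with hηx | hηx
  · refine le_trans (by linarith) (Real.sSup_nonneg ?_)
    rintro y ⟨u, ξ, hu, hξ, rfl⟩
    refine Real.sInf_nonneg ?_
    rintro _ ⟨t, _, rfl⟩
    exact hh0 _
  · obtain ⟨u, ξ, hu, hξ, hb⟩ := key_lemma f U hU hUne (K + 1) (by positivity)
      (hf.weaken (by simp)) h hh hh0 H x T hT η hη hηx
    refine le_trans ?_ (le_csSup ⟨h x, hle⟩ ⟨u, ξ, hu, hξ, rfl⟩)
    refine le_csInf ((nonempty_Icc.2 hT).image _) ?_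
    rintro _ ⟨t, ht, rfl⟩
    exact hb t ht

/-- The avoid value function
`V (x,T) = sup_{(u,ξ)} min_{t ∈ [0,T]} h (ξ t)` is time-invariant (`V (x,T) = h x` for all
`x` and `T ≥ 0`) iff `h` is a viscosity CBF with respect to every locally Lipschitz class
`K` function `α`. -/
theorem avoid_value_time_invariant_iff {n m : ℕ}
    (f : (Fin n → ℝ) → (Fin m → ℝ) → Fin n → ℝ) (U : Set (Fin m → ℝ))
    (hU : IsCompact U) (hUne : U.Nonempty)
    (hf : ∃ K : NNReal, LipschitzOnWith K (Function.uncurry f) (Set.univ ×ˢ U))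
    (h : (Fin n → ℝ) → ℝ) (hh : Continuous h) (hh0 : ∀ x, 0 ≤ h x) :
    (∀ x : Fin n → ℝ, ∀ T : ℝ, 0 ≤ T →
      sSup {y : ℝ | ∃ u ξ, IsControl U u ∧ IsTrajectory f x u ξ ∧
        y = sInf ((fun t => h (ξ t)) '' Set.Icc 0 T)} = h x) ↔
      ∀ α : ℝ → ℝ, IsLocallyLipschitzClassK α → IsViscosityCBF f U α h := by
  obtain ⟨K, hfK⟩ := hf
  obtain ⟨g, hg, hfg⟩ := hfK.extend_pi
  have hEq : ∀ y, ∀ u ∈ U, f y u = g (y, u) := fun y u hu =>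
    hfg (show (y, u) ∈ univ ×ˢ U from ⟨mem_univ y, hu⟩)
  have hg' : LipschitzWith K (Function.uncurry fun y u => g (y, u)) := hg
  have hT : ∀ x u ξ, IsControl U u →
      (IsTrajectory f x u ξ ↔ IsTrajectory (fun y u => g (y, u)) x u ξ) := by
    intro x u ξ hu
    refine and_congr Iff.rfl (forall₂_congr fun t ht => ?_)
    have : (∫ s in (0 : ℝ)..t, f (ξ s) (u s)) = ∫ s in (0 : ℝ)..t, g (ξ s, u s) := by
      refine intervalIntegral.integral_congr fun s hs => ?_
      rw [uIcc_of_le ht] at hs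
      exact hEq _ _ (hu.2 s hs.1)
    rw [this]
  have hS : ∀ x T, {y : ℝ | ∃ u ξ, IsControl U u ∧ IsTrajectory f x u ξ ∧
        y = sInf ((fun t => h (ξ t)) '' Set.Icc 0 T)} =
      {y : ℝ | ∃ u ξ, IsControl U u ∧ IsTrajectory (fun y u => g (y, u)) x u ξ ∧
        y = sInf ((fun t => h (ξ t)) '' Set.Icc 0 T)} := by
    intro x T
    ext y
    refine exists₂_congr fun u ξ => and_congr_right fun hu => and_congr_left fun _ => hT x u ξ hu
  have hCB : ∀ α, IsViscosityCBF f U α h ↔ IsViscosityCBF (fun y u => g (y, u)) U α h := by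
    intro α
    have : ∀ (φ : (Fin n → ℝ) → ℝ) (x : Fin n → ℝ), (fun u => fderiv ℝ φ x (f x u)) '' U =
        (fun u => fderiv ℝ φ x (g (x, u))) '' U := fun φ x =>
      image_congr fun u hu => by rw [hEq x u hu]
    simp only [IsViscosityCBF, this]
  simp only [hS, hCB]
  constructor
  · intro hV α hα
    exact invariant_imp _ U hU K hg' h hh hh0 hV α hα
  · intro hV x T hT0
    exact imp_invariant _ U hU hUne K hg' h hh hh0 hV x T hT0
end
end

section
/- Let h₁, h₂ : ℝ^n → ℝ be viscosity CBFs with respect to a class K function α. Then the function x ↦ max{h₁(x), h₂(x)} is also a viscosity CBF with respect to α. -/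
open Set Filter MeasureTheory Topology

noncomputable section

/-- The pointwise maximum of two viscosity CBFs w.r.t. `α` is a viscosity
CBF w.r.t. `α`. -/
theorem isViscosityCBF_max {n m : ℕ}
    (f : (Fin n → ℝ) → (Fin m → ℝ) → Fin n → ℝ) (U : Set (Fin m → ℝ))
    (hU : IsCompact U)
    (hf : ∃ K : NNReal, LipschitzOnWith K (Function.uncurry f) (Set.univ ×ˢ U))
    (α : ℝ → ℝ) (hα : IsClassK α)
    (h₁ h₂ : (Fin n → ℝ) → ℝ)
    (hh₁ : IsViscosityCBF f U α h₁) (hh₂ : IsViscosityCBF f U α h₂) :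
    IsViscosityCBF f U α (fun x => max (h₁ x) (h₂ x)) := by
  refine ⟨hh₁.1.max hh₂.1, ?_⟩
  intro x hx φ hφ hmax
  rcases le_total (h₂ x) (h₁ x) with hle | hle
  · have e : max (h₁ x) (h₂ x) = h₁ x := max_eq_left hle
    simp only [e] at hx ⊢
    refine hh₁.2 x hx φ hφ ?_
    filter_upwards [hmax] with y hy
    simp only [e] at hy
    linarith [le_max_left (h₁ y) (h₂ y)]
  · have e : max (h₁ x) (h₂ x) = h₂ x := max_eq_right hle
    simp only [e] at hx ⊢
    refine hh₂.2 x hx φ hφ ?_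
    filter_upwards [hmax] with y hy
    simp only [e] at hy
    linarith [le_max_right (h₁ y) (h₂ y)]
end
end

section
/- Let h₁, h₂, … : ℝ^n → ℝ be a sequence of viscosity CBFs with respect to a class K function α, and suppose hᵢ → h locally uniformly, where h : ℝ^n → [0,∞). Then h is also a viscosity CBF with respect to α. -/
open Set Filter MeasureTheory Topology

noncomputable section

/-- A locally uniform limit `h ≥ 0` of a sequence of viscosity CBFs w.r.t.
`α` is a viscosity CBF w.r.t. `α`. -/
theorem isViscosityCBF_of_tendstoLocallyUniformly {n m : ℕ}
    (f : (Fin n → ℝ) → (Fin m → ℝ) → Fin n → ℝ) (U : Set (Fin m → ℝ))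
    (hU : IsCompact U)
    (hf : ∃ K : NNReal, LipschitzOnWith K (Function.uncurry f) (Set.univ ×ˢ U))
    (α : ℝ → ℝ) (hα : IsClassK α)
    (hseq : ℕ → (Fin n → ℝ) → ℝ)
    (hCBF : ∀ i : ℕ, IsViscosityCBF f U α (hseq i))
    (h : (Fin n → ℝ) → ℝ) (hh0 : ∀ x, 0 ≤ h x)
    (hlim : TendstoLocallyUniformly hseq h Filter.atTop) :
    IsViscosityCBF f U α h := by
  obtain ⟨K, hK⟩ := hf
  have hcont : Continuous h := hlim.continuous (Frequently.of_forall fun i => (hCBF i).1)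
  refine ⟨hcont, ?_⟩
  intro x hx φ hφ hmax
  rcases U.eq_empty_or_nonempty with rfl | hne
  · have h1 : α 0 < α (h x) := hα.2.1 (by simp) (by simpa using hx.le) hx
    rw [hα.2.2] at h1
    simp only [image_empty, Real.sSup_empty]
    linarith
  let q : (Fin n → ℝ) → ℝ := fun y => ∑ j, (y j - x j) ^ 2
  have hq : ContDiff ℝ 1 q := by
    refine ContDiff.sum fun j _ => ?_
    exact ((contDiff_apply ℝ ℝ j).sub contDiff_const).pow 2
  have hq0 : q x = 0 := by simp [q]
  have hqnn : ∀ y, 0 ≤ q y := fun y => Finset.sum_nonneg fun j _ => sq_nonneg _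
  have hqd : fderiv ℝ q x = 0 := by
    apply IsLocalMin.fderiv_eq_zero
    exact Eventually.of_forall fun y => by rw [hq0]; exact hqnn y
  have hqdist : ∀ y, dist y x ≤ √(q y) := by
    intro y
    rw [dist_pi_le_iff (Real.sqrt_nonneg _)]
    intro j
    apply Real.le_sqrt_of_sq_le
    rw [Real.dist_eq, sq_abs]
    exact Finset.single_le_sum (f := fun j => (y j - x j) ^ 2)
      (fun j _ => sq_nonneg _) (Finset.mem_univ j)
  let ψ : (Fin n → ℝ) → ℝ := fun y => φ y + q y
  have hψ : ContDiff ℝ 1 ψ := hφ.add hq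
  have hψd : fderiv ℝ ψ x = fderiv ℝ φ x := by
    have := fderiv_fun_add (hφ.differentiable one_ne_zero x) (hq.differentiable one_ne_zero x)
    rw [hqd, add_zero] at this
    exact this
  obtain ⟨r, hr, hball⟩ := Metric.nhds_basis_closedBall.eventually_iff.1 hmax
  have hcomp : IsCompact (Metric.closedBall x r) := isCompact_closedBall x r
  have hex : ∀ i, ∃ y ∈ Metric.closedBall x r,
      IsMaxOn (fun y => hseq i y - ψ y) (Metric.closedBall x r) y := fun i =>
    hcomp.exists_isMaxOn ⟨x, Metric.mem_closedBall_self hr.le⟩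
      (((hCBF i).1.sub hψ.continuous).continuousOn)
  choose z hzB hzmax using hex
  have hunif : TendstoUniformlyOn hseq h atTop (Metric.closedBall x r) :=
    (tendstoLocallyUniformlyOn_iff_tendstoUniformlyOn_of_compact hcomp).1
      hlim.tendstoLocallyUniformlyOn
  rw [Metric.tendstoUniformlyOn_iff] at hunif
  have hqz : Tendsto (fun i => q (z i)) atTop (𝓝 0) := by
    rw [Metric.tendsto_atTop']
    intro ε hε
    obtain ⟨N, hN⟩ := eventually_atTop.1 (hunif (ε / 2) (half_pos hε))
    refine ⟨N, fun i hi => ?_⟩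
    have h1 := hN i hi.le (z i) (hzB i)
    have h2 := hN i hi.le x (Metric.mem_closedBall_self hr.le)
    have h3 := hzmax i (Metric.mem_closedBall_self hr.le)
    have h4 := hball (hzB i)
    simp only [mem_setOf_eq, ψ, hq0] at h3
    rw [Real.dist_eq, abs_lt] at h1 h2
    rw [Real.dist_eq, sub_zero, abs_of_nonneg (hqnn _)]
    linarith [h1.1, h2.2]
  have hz : Tendsto z atTop (𝓝 x) := by
    rw [tendsto_iff_dist_tendsto_zero]
    refine squeeze_zero (fun _ => dist_nonneg) (fun i => hqdist (z i)) ?_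
    simpa using hqz.sqrt
  have hhz : Tendsto (fun i => hseq i (z i)) atTop (𝓝 (h x)) :=
    hlim.tendsto_comp hcont.continuousAt hz
  have hαz : Tendsto (fun i => α (hseq i (z i))) atTop (𝓝 (α (h x))) :=
    ((hα.1.continuousAt (Ici_mem_nhds hx)).tendsto).comp hhz
  have hG : Continuous (fun y => sSup ((fun u => fderiv ℝ ψ y (f y u)) '' U)) := by
    haveI : CompactSpace U := isCompact_iff_compactSpace.1 hU
    have hfc : Continuous (fun p : (Fin n → ℝ) × U => f p.1 p.2) := by
      exact hK.continuousOn.comp_continuous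
        (f := fun p : (Fin n → ℝ) × U => (p.1, (p.2 : Fin m → ℝ)))
        (by fun_prop) (fun p => ⟨mem_univ _, p.2.2⟩)
    have hc : Continuous (fun p : (Fin n → ℝ) × U => fderiv ℝ ψ p.1 (f p.1 p.2)) :=
      ((hψ.continuous_fderiv one_ne_zero).comp continuous_fst).clm_apply hfc
    have := IsCompact.continuous_sSup (K := (univ : Set U))
      (f := fun (y : Fin n → ℝ) (u : U) => fderiv ℝ ψ y (f y u)) isCompact_univ hc
    refine this.congr fun y => ?_
    have e : (fun u : U => fderiv ℝ ψ y (f y u)) '' univ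
        = (fun u => fderiv ℝ ψ y (f y u)) '' U := by
      ext t
      simp
    rw [e]
  have hfin : ∀ᶠ i in atTop, -α (hseq i (z i)) ≤
      sSup ((fun u => fderiv ℝ ψ (z i) (f (z i) u)) '' U) := by
    filter_upwards [hhz.eventually (lt_mem_nhds hx), hz.eventually (Metric.ball_mem_nhds x hr)]
      with i hi1 hi2
    refine (hCBF i).2 (z i) hi1 ψ hψ ?_
    exact (hzmax i).isLocalMax
      (mem_of_superset (Metric.isOpen_ball.mem_nhds hi2) Metric.ball_subset_closedBall)
  have := le_of_tendsto_of_tendsto hαz.neg ((hG.tendsto x).comp hz) hfin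
  simpa only [hψd] using this
end
end

section
/- Consider the scalar system with dynamics f(x,u) = x + ((x + x³)/(1 + |x|))·u and admissible control set U = [−1, +1]. The function h : ℝ → ℝ given by h(x) = 1 − |x| is a viscosity CBF for this system with respect to the class K function α(r) = r. -/
open Set Filter MeasureTheory Topology

noncomputable section

/-- `h : ℝ → ℝ` is a viscosity CBF for the scalar system `ẋ = f(x,u)`, `u ∈ U`, with respect
to the class `K` function `α`. -/
def IsViscosityCBF1 (f : ℝ → ℝ → ℝ) (U : Set ℝ) (α : ℝ → ℝ) (h : ℝ → ℝ) : Prop :=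
  Continuous h ∧
    ∀ x : ℝ, 0 < h x →
      ∀ φ : ℝ → ℝ, ContDiff ℝ 1 φ →
        IsLocalMax (fun y => h y - φ y) x →
        -α (h x) ≤ sSup ((fun u => fderiv ℝ φ x (f x u)) '' U)

/-- For the scalar system `ẋ = x + ((x + x³)/(1 + |x|)) u`, `u ∈ [-1,1]`,
the function `h x = 1 - |x|` is a viscosity CBF with respect to `α r = r`. -/
theorem example_viscosity_cbf :
    IsViscosityCBF1 (fun x u => x + ((x + x ^ 3) / (1 + |x|)) * u)
      (Set.Icc (-1 : ℝ) 1) (fun r => r) (fun x => 1 - |x|) := by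
  refine ⟨by fun_prop, ?_⟩
  intro x hx φ hφ hmax
  have hx1 : |x| < 1 := by
    have : 0 < 1 - |x| := hx
    linarith
  have hd : HasDerivAt φ (deriv φ x) x :=
    (hφ.differentiable (by norm_num)).differentiableAt.hasDerivAt
  have hbdd : BddAbove ((fun u : ℝ => fderiv ℝ φ x (x + ((x + x ^ 3) / (1 + |x|)) * u)) ''
      (Set.Icc (-1 : ℝ) 1)) := by
    refine (isCompact_Icc.image ?_).bddAbove
    fun_prop
  refine le_trans ?_ (le_csSup hbdd ⟨-1, by norm_num, rfl⟩)
  have hf : ∀ v : ℝ, fderiv ℝ φ x v = v * deriv φ x := by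
    intro v
    rw [hd.hasFDerivAt.fderiv]
    simp
  simp only [hf]
  rcases lt_trichotomy x 0 with h0 | h0 | h0
  · have h1 : HasDerivAt (fun y : ℝ => 1 - |y| - φ y) (-(-1) - deriv φ x) x :=
      ((hasDerivAt_abs_neg h0).const_sub 1).sub hd
    have h2 := hmax.hasDerivAt_eq_zero h1
    have h3 : deriv φ x = 1 := by linarith
    rw [abs_of_neg h0] at *
    have h4 : (x + x ^ 3) / (1 + -x) ≤ 2 * x + 1 := by
      rw [div_le_iff₀ (by linarith)]
      nlinarith [mul_pos (neg_pos.2 h0) (by linarith : 0 < 1 + x), sq_nonneg x]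
    rw [h3]
    linarith
  · subst h0
    simp
  · have h1 : HasDerivAt (fun y : ℝ => 1 - |y| - φ y) (-1 - deriv φ x) x :=
      ((hasDerivAt_abs_pos h0).const_sub 1).sub hd
    have h2 := hmax.hasDerivAt_eq_zero h1
    have h3 : deriv φ x = -1 := by linarith
    rw [abs_of_pos h0] at *
    have h4 : 2 * x - 1 ≤ (x + x ^ 3) / (1 + x) := by
      rw [le_div_iff₀ (by linarith)]
      nlinarith [mul_pos h0 (by linarith : 0 < 1 - x), sq_nonneg x]
    rw [h3]
    linarith
end
end

section
/- Let α be a locally Lipschitz class K function. For every r > 0 and t > 0, the function β_α is differentiable in each variable at (r,t), with ∂β_α/∂t (r,t) = −α(β_α(r,t)) and ∂β_α/∂r (r,t) = α(β_α(r,t)) / α(r). -/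
open Set Filter MeasureTheory Topology

noncomputable section

lemma classK_pos {α : ℝ → ℝ} (hα : IsLocallyLipschitzClassK α) {x : ℝ} (hx : 0 < x) :
    0 < α x := by
  have h := hα.1.2.1 (show (0:ℝ) ∈ Set.Ici 0 by simp) (show x ∈ Set.Ici 0 from hx.le) hx
  rwa [hα.1.2.2] at h

lemma classK_contAt {α : ℝ → ℝ} (hα : IsLocallyLipschitzClassK α) {x : ℝ} (hx : 0 < x) :
    ContinuousAt α x :=
  hα.1.1.continuousAt (Ici_mem_nhds hx)

lemma classK_linear_bound {α : ℝ → ℝ} (hα : IsLocallyLipschitzClassK α) {r : ℝ} (hr : 0 < r) :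
    ∃ C : ℝ, ∀ y, 0 ≤ y → y ≤ r → α y ≤ C * y := by
  obtain ⟨K, s, hs, hK⟩ := hα.2 0 (by simp)
  rw [Metric.mem_nhdsWithin_iff] at hs
  obtain ⟨δ, hδ, hsub⟩ := hs
  have hr' := classK_pos hα hr
  refine ⟨max K (α r / δ), fun y hy hyr => ?_⟩
  rcases lt_or_ge y δ with h | h
  · have h0 : (0:ℝ) ∈ s := hsub ⟨by simpa using hδ, by simp⟩
    have hys : y ∈ s := hsub ⟨by simpa [abs_of_nonneg hy] using h, hy⟩
    have := hK.dist_le_mul y hys 0 h0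
    rw [Real.dist_eq, Real.dist_eq, hα.1.2.2, sub_zero, sub_zero, abs_of_nonneg hy] at this
    calc α y ≤ |α y| := le_abs_self _
      _ ≤ K * y := this
      _ ≤ _ := mul_le_mul_of_nonneg_right (le_max_left _ _) hy
  · calc α y ≤ α r := hα.1.2.1.monotoneOn (show y ∈ Set.Ici 0 from hy)
            (show r ∈ Set.Ici 0 from hr.le) hyr
      _ = α r / δ * δ := by field_simp
      _ ≤ α r / δ * y := mul_le_mul_of_nonneg_left h (by positivity)
      _ ≤ _ := mul_le_mul_of_nonneg_right (le_max_right _ _) hy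

lemma beta_pos {α : ℝ → ℝ} (hα : IsLocallyLipschitzClassK α)
    {β : ℝ → ℝ → ℝ} (hβ : IsBetaFor α β) {r : ℝ} (hr : 0 < r) {t : ℝ} (ht : 0 ≤ t) :
    0 < β r t := by
  obtain ⟨C, hC⟩ := classK_linear_bound hα hr
  obtain ⟨h0, hb⟩ := hβ r hr.le
  have hd : ∀ s, 0 ≤ s → HasDerivWithinAt (fun s => β r s * Real.exp (C * s))
      (-α (β r s) * Real.exp (C * s) + β r s * (Real.exp (C * s) * (C * 1))) (Set.Ici 0) s :=
    fun s hs => (hb s hs).2.2.mul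
      (((hasDerivAt_id s).const_mul C).exp.hasDerivWithinAt)
  have hm : MonotoneOn (fun s => β r s * Real.exp (C * s)) (Set.Ici 0) := by
    apply monotoneOn_of_deriv_nonneg (convex_Ici 0)
    · exact fun s hs => (hd s hs).continuousWithinAt
    · intro s hs
      rw [interior_Ici] at hs
      exact ((hd s (le_of_lt hs)).hasDerivAt (Ici_mem_nhds hs)).differentiableAt.differentiableWithinAt
    · intro s hs
      rw [interior_Ici] at hs
      rw [((hd s (le_of_lt hs)).hasDerivAt (Ici_mem_nhds hs)).deriv]
      have h1 := hC (β r s) (hb s (le_of_lt hs)).1 (hb s (le_of_lt hs)).2.1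
      have h2 := Real.exp_pos (C * s)
      nlinarith [mul_nonneg (sub_nonneg.2 h1) h2.le]
  have := hm (show (0:ℝ) ∈ Set.Ici 0 by simp) (show t ∈ Set.Ici 0 from ht) ht
  simp only [h0, mul_zero, Real.exp_zero, mul_one] at this
  exact pos_of_mul_pos_left (hr.trans_le this) (Real.exp_pos _).le

/-- The primitive of `1/α` on `(0,∞)`. -/
def primF (α : ℝ → ℝ) (x : ℝ) : ℝ := ∫ u in (1:ℝ)..x, (α u)⁻¹

lemma primF_deriv {α : ℝ → ℝ} (hα : IsLocallyLipschitzClassK α) {x : ℝ} (hx : 0 < x) :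
    HasStrictDerivAt (primF α) (α x)⁻¹ x := by
  have hc : ContinuousOn (fun u => (α u)⁻¹) (Set.Ioi 0) := fun u hu =>
    ((classK_contAt hα hu).inv₀ (classK_pos hα hu).ne').continuousWithinAt
  refine intervalIntegral.integral_hasStrictDerivAt_right ?_ ?_ ?_
  · refine ContinuousOn.intervalIntegrable (hc.mono ?_)
    intro u hu
    exact lt_of_lt_of_le (lt_min one_pos hx) hu.1
  · exact hc.stronglyMeasurableAtFilter isOpen_Ioi x hx
  · exact hc.continuousAt (Ioi_mem_nhds hx)

lemma primF_inj {α : ℝ → ℝ} (hα : IsLocallyLipschitzClassK α) :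
    Set.InjOn (primF α) (Set.Ioi 0) := by
  apply StrictMonoOn.injOn
  apply strictMonoOn_of_deriv_pos (convex_Ioi 0)
  · exact fun x hx => (primF_deriv hα hx).hasDerivAt.continuousAt.continuousWithinAt
  · intro x hx
    rw [interior_Ioi] at hx
    rw [(primF_deriv hα hx).hasDerivAt.deriv]
    exact inv_pos.2 (classK_pos hα hx)

lemma primF_beta {α : ℝ → ℝ} (hα : IsLocallyLipschitzClassK α)
    {β : ℝ → ℝ → ℝ} (hβ : IsBetaFor α β) {r : ℝ} (hr : 0 < r) {t : ℝ} (ht : 0 ≤ t) :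
    primF α (β r t) = primF α r - t := by
  obtain ⟨h0, hb⟩ := hβ r hr.le
  have hd : ∀ s, 0 ≤ s → HasDerivWithinAt (fun s => primF α (β r s) + s) 0 (Set.Ici 0) s := by
    intro s hs
    have hp := beta_pos hα hβ hr hs
    have h := ((primF_deriv hα hp).hasDerivAt.comp_hasDerivWithinAt s (hb s hs).2.2).add
      (hasDerivWithinAt_id s (Set.Ici 0))
    have hne := (classK_pos hα hp).ne'
    rw [mul_neg, inv_mul_cancel₀ hne, neg_add_cancel] at h
    exact h
  have := constant_of_has_deriv_right_zero (f := fun s => primF α (β r s) + s) (a := 0) (b := t)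
    (fun s hs => ((hd s hs.1).continuousWithinAt).mono Set.Icc_subset_Ici_self)
    (fun s hs => (hd s hs.1).mono (Set.Ici_subset_Ici.2 hs.1)) t ⟨ht, le_rfl⟩
  simp only [h0, add_zero] at this
  linarith

/-- For `r, t > 0`, `β_α` is differentiable in each variable at `(r,t)`,
with `∂β_α/∂t (r,t) = -α (β_α r t)` and `∂β_α/∂r (r,t) = α (β_α r t) / α r`. -/
theorem beta_partial_derivatives
    (α : ℝ → ℝ) (hα : IsLocallyLipschitzClassK α)
    (β : ℝ → ℝ → ℝ) (hβ : IsBetaFor α β) :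
    ∀ r : ℝ, 0 < r → ∀ t : ℝ, 0 < t →
      HasDerivWithinAt (fun s => β r s) (-α (β r t)) (Set.Ici 0) t ∧
      HasDerivWithinAt (fun ρ => β ρ t) (α (β r t) / α r) (Set.Ici 0) r := by
  intro r hr t ht
  refine ⟨((hβ r hr.le).2 t ht.le).2.2, ?_⟩
  have hp := beta_pos hα hβ hr ht.le
  have hs := primF_deriv hα hp
  have hne : (α (β r t))⁻¹ ≠ 0 := inv_ne_zero (classK_pos hα hp).ne'
  set G := hs.localInverse (primF α) _ _ hne with hG
  have hGd : HasStrictDerivAt G (α (β r t))⁻¹⁻¹ (primF α (β r t)) := hs.to_localInverse hne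
  have hGr : ∀ᶠ y in 𝓝 (primF α (β r t)), primF α (G y) = y :=
    (hs.hasStrictFDerivAt_equiv hne).eventually_right_inverse
  have hGb : G (primF α (β r t)) = β r t :=
    (hs.hasStrictFDerivAt_equiv hne).localInverse_apply_image
  have hinner : HasDerivAt (fun ρ => primF α ρ - t) (α r)⁻¹ r :=
    (primF_deriv hα hr).hasDerivAt.sub_const t
  have heq := primF_beta hα hβ hr ht.le
  rw [heq] at hGd hGr hGb
  have hcomp : HasDerivAt (fun ρ => G (primF α ρ - t)) (α (β r t) / α r) r := by
    have := HasDerivAt.comp r hGd.hasDerivAt hinner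
    rw [inv_inv] at this
    exact this
  have hpos : ∀ᶠ ρ in 𝓝 r, 0 < G (primF α ρ - t) := by
    apply hcomp.continuousAt.eventually (p := fun z => 0 < z)
    exact lt_mem_nhds (by simpa only [hGb] using hp)
  refine (hcomp.congr_of_eventuallyEq ?_).hasDerivWithinAt
  filter_upwards [hpos, hinner.continuousAt.eventually hGr, lt_mem_nhds hr] with ρ h1 h2 h3
  refine primF_inj hα (beta_pos hα hβ h3 ht.le) h1 ?_
  rw [h2, primF_beta hα hβ h3 ht.le]
end
end

section
/- Let α be a locally Lipschitz class K function. For every (r,t) ∈ A_α with r > 0 and t > 0, the function κ_α is differentiable in each variable at (r,t), with ∂κ_α/∂t (r,t) = α(κ_α(r,t)) and ∂κ_α/∂r (r,t) = α(κ_α(r,t)) / α(r). -/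
open Set Filter MeasureTheory Topology

noncomputable section

lemma aux_G (α : ℝ → ℝ) (hc : ContinuousOn α (Set.Ici 0)) (hpos : ∀ x, 0 < x → 0 < α x)
    (r : ℝ) (hr : 0 < r) (x : ℝ) (hx : 0 < x) :
    HasStrictDerivAt (fun y => ∫ u in r..y, (α u)⁻¹) (α x)⁻¹ x := by
  have hci : ContinuousOn (fun u => (α u)⁻¹) (Set.Ioi 0) :=
    (hc.mono Set.Ioi_subset_Ici_self).inv₀ (fun u hu => (hpos u hu).ne')
  apply intervalIntegral.integral_hasStrictDerivAt_right
  · apply ContinuousOn.intervalIntegrable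
    apply hci.mono
    intro u hu
    exact lt_of_lt_of_le (lt_min hr hx) hu.1
  · exact hci.stronglyMeasurableAtFilter isOpen_Ioi x hx
  · exact hci.continuousAt (isOpen_Ioi.mem_nhds hx)

/-- Let `κ_α (r, ·)` be the maximal solution of `y' = α y`, `y 0 = r` on
`[0, b_α r)`. For `(r,t) ∈ A_α` with `r, t > 0`, `κ_α` is differentiable in each variable
at `(r,t)`, with `∂κ_α/∂t (r,t) = α (κ_α r t)` and `∂κ_α/∂r (r,t) = α (κ_α r t) / α r`. -/
theorem kappa_partial_derivatives
    (α : ℝ → ℝ) (hα : IsLocallyLipschitzClassK α)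
    (b : ℝ → ENNReal) (κ : ℝ → ℝ → ℝ)
    (hκ : ∀ r : ℝ, 0 ≤ r → 0 < b r ∧ κ r 0 = r ∧
      ∀ t : ℝ, 0 ≤ t → ENNReal.ofReal t < b r →
        0 ≤ κ r t ∧ HasDerivWithinAt (κ r) (α (κ r t)) (Set.Ici 0) t)
    (hmax : ∀ r : ℝ, 0 ≤ r → b r ≠ ⊤ →
      Filter.Tendsto (κ r) (nhdsWithin (b r).toReal (Set.Iio (b r).toReal)) Filter.atTop) :
    ∀ r : ℝ, 0 < r → ∀ t : ℝ, 0 < t → ENNReal.ofReal t < b r →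
      HasDerivWithinAt (κ r) (α (κ r t)) (Set.Ici 0) t ∧
      HasDerivWithinAt (fun ρ => κ ρ t) (α (κ r t) / α r)
        {ρ : ℝ | 0 ≤ ρ ∧ ENNReal.ofReal t < b ρ} r := by
  obtain ⟨⟨hc, hm, h0⟩, -⟩ := hα
  have hpos : ∀ x, 0 < x → 0 < α x := fun x hx => by
    have := hm (Set.mem_Ici.2 le_rfl) (Set.mem_Ici.2 hx.le) hx
    rwa [h0] at this
  have hnn : ∀ x, 0 ≤ x → 0 ≤ α x := fun x hx => by
    rcases hx.eq_or_lt with h | h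
    · rw [← h, h0]
    · exact (hpos x h).le
  intro r hr t ht htb
  refine ⟨((hκ r hr.le).2.2 t ht.le htb).2, ?_⟩
  set G : ℝ → ℝ := fun y => ∫ u in r..y, (α u)⁻¹ with hG
  have hGd : ∀ x, 0 < x → HasStrictDerivAt G (α x)⁻¹ x := fun x hx =>
    aux_G α hc hpos r hr x hx
  have hGm : StrictMonoOn G (Set.Ioi 0) := by
    apply strictMonoOn_of_deriv_pos (convex_Ioi 0)
    · intro x hx
      exact (hGd x hx).hasDerivAt.continuousAt.continuousWithinAt
    · intro x hx
      rw [interior_Ioi] at hx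
      rw [(hGd x hx).hasDerivAt.deriv]
      exact inv_pos.2 (hpos x hx)
  -- the implicit formula
  have key : ∀ ρ, 0 < ρ → ENNReal.ofReal t < b ρ → 0 < κ ρ t ∧ G (κ ρ t) = t + G ρ := by
    intro ρ hρ hb
    obtain ⟨-, hi, hs⟩ := hκ ρ hρ.le
    have hs' : ∀ s ∈ Set.Icc 0 t, 0 ≤ κ ρ s ∧
        HasDerivWithinAt (κ ρ) (α (κ ρ s)) (Set.Ici 0) s := fun s h =>
      hs s h.1 (lt_of_le_of_lt (ENNReal.ofReal_le_ofReal h.2) hb)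
    have hcont : ContinuousOn (κ ρ) (Set.Icc 0 t) := fun s h =>
      ((hs' s h).2.continuousWithinAt).mono Set.Icc_subset_Ici_self
    have hmono : MonotoneOn (κ ρ) (Set.Icc 0 t) := by
      apply monotoneOn_of_deriv_nonneg (convex_Icc 0 t) hcont
      · intro s h
        rw [interior_Icc] at h
        exact ((hs' s ⟨h.1.le, h.2.le⟩).2.hasDerivAt
          (Ici_mem_nhds h.1)).differentiableAt.differentiableWithinAt
      · intro s h
        rw [interior_Icc] at h
        have h2 := hs' s ⟨h.1.le, h.2.le⟩
        rw [(h2.2.hasDerivAt (Ici_mem_nhds h.1)).deriv]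
        exact hnn _ h2.1
    have hp : ∀ s ∈ Set.Icc 0 t, 0 < κ ρ s := by
      intro s h
      have := hmono ⟨le_rfl, ht.le⟩ h h.1
      rw [hi] at this
      linarith
    have hd : ∀ s ∈ Set.Icc 0 t,
        HasDerivWithinAt (fun s => G (κ ρ s) - s) 0 (Set.Ici 0) s := by
      intro s h
      have h1 := ((hGd _ (hp s h)).hasDerivAt.comp_hasDerivWithinAt s (hs' s h).2).sub
        (hasDerivWithinAt_id s _)
      rw [inv_mul_cancel₀ (hpos _ (hp s h)).ne', sub_self] at h1
      exact h1
    have hconst := constant_of_has_deriv_right_zero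
      (f := fun s => G (κ ρ s) - s) (a := 0) (b := t)
      (fun s h => ((hd s h).continuousWithinAt).mono Set.Icc_subset_Ici_self)
      (fun s h => (hd s ⟨h.1, h.2.le⟩).mono (Set.Ici_subset_Ici.2 h.1)) t ⟨ht.le, le_rfl⟩
    simp only [hi, sub_zero] at hconst
    exact ⟨hp t ⟨ht.le, le_rfl⟩, by linarith⟩
  obtain ⟨hp, he⟩ := key r hr htb
  have hne : (α (κ r t))⁻¹ ≠ 0 := (inv_pos.2 (hpos _ hp)).ne'
  have hGp := hGd _ hp
  set g := hGp.localInverse G _ _ hne with hg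
  have hgd : HasStrictDerivAt g ((α (κ r t))⁻¹)⁻¹ (G (κ r t)) := hGp.to_localInverse hne
  have hgp : g (G (κ r t)) = κ r t := by
    exact (hGp.hasStrictFDerivAt_equiv hne).localInverse_apply_image
  have hgr : ∀ᶠ y in 𝓝 (G (κ r t)), G (g y) = y :=
    (hGp.hasStrictFDerivAt_equiv hne).eventually_right_inverse
  have hgpos : ∀ᶠ y in 𝓝 (G (κ r t)), 0 < g y := by
    have := hgd.hasDerivAt.continuousAt
    exact this.eventually (lt_mem_nhds (by rw [hgp]; exact hp))
  have hlin : HasDerivAt (fun ρ => t + G ρ) (α r)⁻¹ r := (hGd r hr).hasDerivAt.const_add t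
  rw [he] at hgd hgr hgpos
  have hcomp : HasDerivAt (fun ρ => g (t + G ρ)) (α (κ r t) / α r) r := by
    have := hgd.hasDerivAt.comp r hlin
    rw [inv_inv, ← div_eq_mul_inv] at this
    exact this
  refine hcomp.hasDerivWithinAt.congr_of_eventuallyEq ?_ ?_
  · have e1 := (hlin.continuousAt.eventually (hgr.and hgpos)).and (lt_mem_nhds hr)
    filter_upwards [e1.filter_mono nhdsWithin_le_nhds, self_mem_nhdsWithin] with ρ h1 h2
    obtain ⟨hq, hqe⟩ := key ρ h1.2 h2.2
    exact hGm.injOn hq h1.1.2 (by rw [hqe, h1.1.1])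
  · show κ r t = g (t + G r)
    rw [← he, hgp]
end
end
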